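/- arXiv:1209.1916 — 3 statements merged into one kernel-verified Lean document; each statement's English description precedes it below -/
import Mathlib

section
/- There exists a constant d such that for every ordered multi-pushdown automaton M = (n,Q,Σ,Γ,Δ,q₀,γ₀,F) in normal form and every M-automaton A', there exists an M-automaton A with |A| ≤ (|M| · |A'|)^{2^{d·n}} such that L_M(A) = Pre*_{T(M)}(L_M(A')). In particular, the set of all predecessors of a recognizable set of configurations of an ordered multi-pushdown automaton is recognizable. -/
/-!
The proof is an induction on the number of stacks that peels off the *last* stack, and it is
semantic: the automata are defined through reachability, so no saturation procedure is run.

**Normalisation.** Removing `⊥` from the stacks, a configuration over `k` stacks is an element of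
`Stacks Γ k`, a nested pair whose outermost component is the last stack. An ordered transition is an
instruction `Ins Γ k`: relative to the last stack it either acts on the first `k - 1` stacks and
only pushes on the last one (`low`), or requires the first `k - 1` stacks to be empty, and then pops
a letter of the last stack (`pop`) or tests it for emptiness (`zero`). This step is `exists_ins`
and `stepAny_iff`; it only needs well-formedness and orderedness.

**Recognizability.** `Rec Γ N k P C` says, by recursion on `k`, that `C` is a finite union, over the
states `b` of a finite automaton with at most `N` states, of sets
`{(p, (x, w)) | (p, b, x) ∈ C', w accepted from b}` with `C'` again recognizable over `k - 1`
stacks and control states `P × B`.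

**Induction step** (`pre_succ`, `Rec.pre`). For a target `C` given by `C'` and an automaton with
states `B`, the automaton with states `P ⊕ B` and transitions `satδ` satisfies: from `p : P` it
accepts `w` iff `(p, (∅, w)) ∈ Pre* C` (`sat_new`). Here `p` steps to `p'` on `a` if the machine
can erase `a` from the top of the last stack, whatever is below, going from `p` to `p'` with the
other stacks empty at both ends, and `p` steps to `b'` if, independently of what is below `a`, the
machine can replace `a` by some word which, after the contents of the other stacks, takes the
target's automaton to `b'`. Correctness rests on `reach_split`: a run on `v ++ w` either never uses
`w`, or at some point has exactly `w` left with the other stacks empty. A run from an arbitrary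
configuration begins with `low` instructions only, until the first `k - 1` stacks are empty
(`reach_low`). The word pushed meanwhile is read backwards by the automaton, and this is a run of
the system `prodSys` over `k - 1` stacks with control states `P × (P ⊕ B)`, to which the induction
hypothesis applies. With `m` bounding `|P|` and `|B|`, the new parameters are at most `m ^ 3`, so
`k` stacks cost `m ^ 3 ^ k`.

**Transfer.** `Rec.of_aut` and `Rec.to_aut` translate between `Rec` and finite automata reading
`w₁⊥w₂⊥⋯wₙ⊥`, at polynomial cost for each stack, and `exp_bound` collects the exponents.
-/

/-- A run of a labeled transition relation (labels in `A ∪ {ε}`) reading a word. -/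
inductive EvalRel {Q A : Type} (Δ : Q → Option A → Q → Prop) : Q → List A → Q → Prop
  | refl (q : Q) : EvalRel Δ q [] q
  | step {q : Q} {a : Option A} {q' : Q} {w : List A} {q'' : Q} :
      Δ q a q' → EvalRel Δ q' w q'' → EvalRel Δ q (a.toList ++ w) q''

/-- The set of all predecessors (`Pre*`) of `S` under the step relation `r`. -/
def preStar {C : Type} (r : C → C → Prop) (S : Set C) : Set C :=
  {c | ∃ c' ∈ S, Relation.ReflTransGen r c c'}

/-- `Pre⁺ = Pre ∘ Pre*`. -/
def prePlus {C : Type} (r : C → C → Prop) (S : Set C) : Set C :=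
  {c | ∃ c₁, r c c₁ ∧ c₁ ∈ preStar r S}

/-- A multi-pushdown automaton with `n` stacks, states `Q`, input alphabet `A`, and
stack alphabet `Γ` (with distinguished bottom symbol `bot`).  A transition
`Δ q γ a q' α` pops `γ i ∈ Γ ∪ {ε}` from stack `i` and pushes the word `α i` on stack `i`,
for each `i`, reading the input letter `a ∈ A ∪ {ε}`. -/
structure MPA (n : ℕ) (Q A Γ : Type) where
  bot : Γ
  Δ : Q → (Fin n → Option Γ) → Option A → Q → (Fin n → List Γ) → Prop
  q0 : Q
  γ0 : Γ
  F : Set Q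

namespace MPA

variable {n : ℕ} {Q A Γ : Type}

/-- A stack content: a word in `(Γ∖{⊥})* ⬝ {⊥}`. -/
def IsStack (bot : Γ) (w : List Γ) : Prop := ∃ v, w = v ++ [bot] ∧ bot ∉ v

/-- Well-formedness of an MPA: `γ₀ ≠ ⊥`, and each transition pushes at most two symbols on
each stack, never pushes `⊥` on a stack unless it popped `⊥` from it, and when popping `⊥`
from a stack it pushes back `α' ⬝ ⊥` with `α' ∈ (Γ∖{⊥}) ∪ {ε}`. -/
def WF (M : MPA n Q A Γ) : Prop :=
  M.γ0 ≠ M.bot ∧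
  ∀ q γ a q' α, M.Δ q γ a q' α → ∀ i : Fin n,
    (α i).length ≤ 2 ∧
    (γ i ≠ some M.bot → M.bot ∉ α i) ∧
    (γ i = some M.bot → ∃ β, α i = β ++ [M.bot] ∧ M.bot ∉ β ∧ β.length ≤ 1)

/-- An MPA is *ordered* if every transition pops from the first non-empty stack: there is `i`
such that stacks before `i` pop `⊥`, stack `i` pops an element of `Γ ∪ {ε}`, and stacks
after `i` pop nothing. -/
def Ordered (M : MPA n Q A Γ) : Prop :=
  ∀ q γ a q' α, M.Δ q γ a q' α → ∃ i : Fin n,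
    (∀ j, j < i → γ j = some M.bot) ∧ (∀ j, i < j → γ j = none)

/-- One transition of the transition system `T(M)`: for each stack `i`, the popped prefix
`γ i` of the stack content is replaced by the pushed word `α i`. -/
def Step (M : MPA n Q A Γ) (c : Q × (Fin n → List Γ)) (a : Option A)
    (c' : Q × (Fin n → List Γ)) : Prop :=
  ∃ (γ : Fin n → Option Γ) (α w : Fin n → List Γ), M.Δ c.1 γ a c'.1 α ∧
    ∀ i : Fin n, c.2 i = (γ i).toList ++ w i ∧ c'.2 i = α i ++ w i ∧ IsStack M.bot (c.2 i)

/-- A finite run of `T(M)` from `c` to `c'` labelled by the word `τ`. -/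
inductive Reaches (M : MPA n Q A Γ) :
    Q × (Fin n → List Γ) → List A → Q × (Fin n → List Γ) → Prop
  | refl (c : Q × (Fin n → List Γ)) : Reaches M c [] c
  | step {c : Q × (Fin n → List Γ)} {a : Option A} {c' : Q × (Fin n → List Γ)}
      {τ : List A} {c'' : Q × (Fin n → List Γ)} :
      M.Step c a c' → Reaches M c' τ c'' → Reaches M c (a.toList ++ τ) c''

/-- The unlabeled step relation of `T(M)`. -/
def StepAny (M : MPA n Q A Γ) (c c' : Q × (Fin n → List Γ)) : Prop := ∃ a, M.Step c a c'

/-- An ordered MPA (with at least one stack) is in *normal form* if every transition either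
(i) pops a symbol from the first stack, pushing at most two symbols on the first stack and at
most one non-`⊥` symbol on each of the other stacks, or (ii) pops a non-`⊥` symbol from some
stack `i ≥ 2` whose preceding stacks are empty, pushing a single non-`⊥` symbol on the first
stack (and restoring `⊥` on stacks `2,…,i−1`). -/
def NormalForm (M : MPA (n+1) Q A Γ) : Prop :=
  ∀ q γ a q' α, M.Δ q γ a q' α →
    ((∃ g : Γ, γ 0 = some g) ∧ (∀ j, j ≠ 0 → γ j = none) ∧
      (∀ j, j ≠ 0 → (α j).length ≤ 1 ∧ M.bot ∉ α j)) ∨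
    (∃ i : Fin (n+1), 0 < i ∧
      (∀ j, j < i → γ j = some M.bot) ∧ (∀ j, i < j → γ j = none) ∧
      (∃ g : Γ, γ i = some g ∧ g ≠ M.bot) ∧
      (∃ g' : Γ, g' ≠ M.bot ∧ α 0 = [g', M.bot]) ∧
      (∀ j, 0 < j → j < i → α j = [M.bot]) ∧ (∀ j, i ≤ j → α j = []))

/-- The initial stack contents: `γ₀⊥` on the first stack and `⊥` on the others. -/
def init (M : MPA (n+1) Q A Γ) : Fin (n+1) → List Γ :=
  fun i => if i = 0 then [M.γ0, M.bot] else [M.bot]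

/-- The language of an MPA: words labelling runs of `T(M)` from `(q₀,γ₀⊥,⊥,…,⊥)` to a final
configuration `(q,⊥,…,⊥)` with `q ∈ F`. -/
def Lang (M : MPA (n+1) Q A Γ) : Set (List A) :=
  {τ | ∃ q ∈ M.F, M.Reaches (M.q0, M.init) τ (q, fun _ => [M.bot])}

/-- The size `|M| = n + |Q| + |Σ| + |Γ| + |Δ|` of an MPA. -/
noncomputable def size (M : MPA n Q A Γ) : ℕ :=
  n + Nat.card Q + Nat.card A + Nat.card Γ +
    Nat.card {t : Q × (Fin n → Option Γ) × Option A × Q × (Fin n → List Γ) //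
      M.Δ t.1 t.2.1 t.2.2.1 t.2.2.2.1 t.2.2.2.2}

end MPA

/-- An `M`-automaton: a finite automaton over the stack alphabet `Γ` whose set of initial
states is the set `Q` of states of the MPA (plus possibly extra states `S`). -/
structure MAut (Γ Q S : Type) where
  Δ : (Q ⊕ S) → Option Γ → (Q ⊕ S) → Prop
  F : Set (Q ⊕ S)

/-- The configuration `(q, w₁, …, wₙ)` of `M` is accepted by the `M`-automaton `T`:
all stacks are proper stack contents and the word `w₁w₂⋯wₙ` is accepted by `T` started
from the initial state `q`. -/
def MAut.AcceptConf {n : ℕ} {Q A Γ S : Type} (M : MPA n Q A Γ) (T : MAut Γ Q S)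
    (c : Q × (Fin n → List Γ)) : Prop :=
  (∀ i, MPA.IsStack M.bot (c.2 i)) ∧
  ∃ f ∈ T.F, EvalRel T.Δ (Sum.inl c.1) (List.ofFn c.2).flatten f

/-- The size of an `M`-automaton: numbers of states, alphabet symbols and transitions. -/
noncomputable def MAut.size {Γ Q S : Type} (T : MAut Γ Q S) : ℕ :=
  Nat.card (Q ⊕ S) + Nat.card Γ +
    Nat.card {t : (Q ⊕ S) × Option Γ × (Q ⊕ S) // T.Δ t.1 t.2.1 t.2.2}

namespace OMPAPre

/-! ### Stack systems and recognizable sets -/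

/-- `Path δ u b b'`: the automaton with transitions `δ` (without `ε`) can read `u` from `b` to
`b'`. -/
def Path {B Γ : Type} (δ : B → Γ → B → Prop) : List Γ → B → B → Prop
  | [], b, b' => b = b'
  | a :: u, b, b' => ∃ c, δ b a c ∧ Path δ u c b'

theorem path_append {B Γ : Type} (δ : B → Γ → B → Prop) (u v : List Γ) (b b' : B) :
    Path δ (u ++ v) b b' ↔ ∃ c, Path δ u b c ∧ Path δ v c b' := by
  induction u generalizing b with
  | nil => simp [Path]
  | cons a u ih =>
    simp only [List.cons_append, Path, ih]
    constructor
    · rintro ⟨c, h, d, h1, h2⟩; exact ⟨d, ⟨c, h, h1⟩, h2⟩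
    · rintro ⟨d, ⟨c, h, h1⟩, h2⟩; exact ⟨c, h, d, h1, h2⟩

/-- Contents of `k` stacks over `Γ`, bottom symbols omitted. The last stack is the outermost
component, which is the one removed in inductions on `k`. -/
def Stacks (Γ : Type) : ℕ → Type
  | 0 => Unit
  | k + 1 => Stacks Γ k × List Γ

/-- All stacks are empty. -/
def Stacks.empty (Γ : Type) : (k : ℕ) → Stacks Γ k
  | 0 => ()
  | k + 1 => (Stacks.empty Γ k, [])

/-- Instructions of an ordered machine with `k` stacks. For `k + 1` stacks, `low ι α` executes `ι`
on the first `k` stacks and pushes `α` on the last; `pop a y α` and `zero y α` require the first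
`k` stacks to be empty, set them to `y`, and replace the top letter `a` of the last stack, or
respectively the empty last stack, by `α`. -/
inductive Ins (Γ : Type) : ℕ → Type
  | nop : Ins Γ 0
  | low {k : ℕ} (ι : Ins Γ k) (α : List Γ) : Ins Γ (k + 1)
  | pop {k : ℕ} (a : Γ) (y : Stacks Γ k) (α : List Γ) : Ins Γ (k + 1)
  | zero {k : ℕ} (y : Stacks Γ k) (α : List Γ) : Ins Γ (k + 1)

/-- The relation on stack contents denoted by an instruction. -/
def Ins.den {Γ : Type} : {k : ℕ} → Ins Γ k → Stacks Γ k → Stacks Γ k → Prop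
  | 0, .nop, _, _ => True
  | _ + 1, .low ι α, x, y => ι.den x.1 y.1 ∧ y.2 = α ++ x.2
  | _ + 1, .pop a z α, x, y =>
      x.1 = Stacks.empty Γ _ ∧ y.1 = z ∧ ∃ r, x.2 = a :: r ∧ y.2 = α ++ r
  | _ + 1, .zero z α, x, y =>
      x.1 = Stacks.empty Γ _ ∧ y.1 = z ∧ x.2 = [] ∧ y.2 = α

/-- An ordered system with control states `P`: a set of rules `(p, ι, p')`. -/
abbrev Sys (Γ : Type) (k : ℕ) (P : Type) := P → Ins Γ k → P → Prop

/-- One step between configurations of a system. -/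
def Sys.Step {Γ P : Type} {k : ℕ} (R : Sys Γ k P) (c c' : P × Stacks Γ k) : Prop :=
  ∃ ι, R c.1 ι c'.1 ∧ ι.den c.2 c'.2

/-- Reachability between configurations of a system. -/
abbrev Sys.Reach {Γ P : Type} {k : ℕ} (R : Sys Γ k P) := Relation.ReflTransGen R.Step

/-- The set `Pre*` of configurations from which `C` can be reached. -/
def Sys.Pre {Γ P : Type} {k : ℕ} (R : Sys Γ k P) (C : P → Stacks Γ k → Prop)
    (p : P) (x : Stacks Γ k) : Prop :=
  ∃ p' y, R.Reach (p, x) (p', y) ∧ C p' y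

/-- `Rec Γ N k P C`: the set `C` of configurations is recognized stack by stack, using for each
stack a finite automaton with at most `N` states. The state `b` at which the last stack starts
to be read is guessed at the beginning and becomes part of the control state over the other
stacks. -/
def Rec (Γ : Type) (N : ℕ) : (k : ℕ) → (P : Type) → (P → Stacks Γ k → Prop) → Prop
  | 0, _, _ => True
  | k + 1, P, C => ∃ (B : Type) (_ : Finite B) (δ : B → Γ → B → Prop) (F : B → Prop)
      (C' : P × B → Stacks Γ k → Prop), Nat.card B ≤ N ∧ Rec Γ N k (P × B) C' ∧
      ∀ p x w, C p (x, w) ↔ ∃ b, C' (p, b) x ∧ ∃ f, Path δ w b f ∧ F f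

theorem Rec.mono {Γ : Type} {N N' : ℕ} (h : N ≤ N') (k : ℕ) (P : Type)
    (C : P → Stacks Γ k → Prop) (hC : Rec Γ N k P C) : Rec Γ N' k P C := by
  induction k generalizing P with
  | zero => trivial
  | succ k ih =>
    obtain ⟨B, hB, δ, F, C', hc, hr, hh⟩ := hC
    exact ⟨B, hB, δ, F, C', hc.trans h, ih _ _ hr, hh⟩

/-- Reindexing of the control states, together with the addition of the empty stacks for the
control states in `Z`, costs one more automaton state: it accepts the empty stack only. -/
theorem Rec.extend {Γ : Type} {N : ℕ} (k : ℕ) (P P' : Type) (C : P → Stacks Γ k → Prop)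
    (hC : Rec Γ N k P C) (f : P' → Option P) (Z : P' → Prop) :
    Rec Γ (N + 1) k P' (fun p' x =>
      (∃ p, f p' = some p ∧ C p x) ∨ (Z p' ∧ x = Stacks.empty Γ k)) := by
  induction k generalizing P P' with
  | zero => trivial
  | succ k ih =>
    obtain ⟨B, hB, δ, F, C', hc, hr, hh⟩ := hC
    let δ' : Option B → Γ → Option B → Prop := fun o a o' =>
      ∃ b b', o = some b ∧ o' = some b' ∧ δ b a b'
    let F' : Option B → Prop := fun o => ∀ b, o = some b → F b
    have hsome : ∀ (w : List Γ) (b : B) (o : Option B),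
        Path δ' w (some b) o ↔ ∃ b', o = some b' ∧ Path δ w b b' := by
      intro w
      induction w with
      | nil => intro b o; simp [Path, eq_comm]
      | cons a w ihw =>
        intro b o
        constructor
        · rintro ⟨c, ⟨b1, b2, h1, rfl, h3⟩, h4⟩
          obtain ⟨b', rfl, h5⟩ := (ihw _ _).1 h4
          cases h1
          exact ⟨b', rfl, _, h3, h5⟩
        · rintro ⟨b', rfl, c, h1, h2⟩
          exact ⟨some c, ⟨_, _, rfl, rfl, h1⟩, (ihw _ _).2 ⟨_, rfl, h2⟩⟩
    have hnone : ∀ (w : List Γ) (o : Option B), Path δ' w none o ↔ w = [] ∧ o = none := by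
      intro w o
      cases w with
      | nil => simp [Path, eq_comm]
      | cons a w => simp [Path, δ']
    refine ⟨Option B, inferInstance, δ', F', _, ?_,
      ih (P × B) (P' × Option B) C' hr
        (fun pb => (f pb.1).bind fun p => pb.2.map fun b => (p, b))
        (fun pb => Z pb.1 ∧ pb.2 = none), ?_⟩
    · rw [Finite.card_option]; omega
    · intro p' x w
      constructor
      · rintro (⟨p, hp, h⟩ | ⟨hZ, h⟩)
        · obtain ⟨b, h1, e, h2, h3⟩ := (hh _ _ _).1 h
          refine ⟨some b, Or.inl ⟨(p, b), by simp [hp], h1⟩, some e, (hsome _ _ _).2 ⟨e, rfl, h2⟩, ?_⟩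
          rintro _ ⟨⟩; exact h3
        · cases h
          exact ⟨none, Or.inr ⟨⟨hZ, rfl⟩, rfl⟩, none, (hnone _ _).2 ⟨rfl, rfl⟩, by simp [F']⟩
      · rintro ⟨o, h, e, h2, h3⟩
        rcases h with ⟨⟨p, b⟩, hp, h⟩ | ⟨⟨hZ, ho⟩, hx⟩
        · left
          cases hf : f p' with
          | none => simp [hf] at hp
          | some p1 =>
            cases o with
            | none => simp [hf] at hp
            | some b1 =>
              simp only [hf, Option.bind_some, Option.map_some, Option.some.injEq,
                Prod.mk.injEq] at hp
              obtain ⟨rfl, rfl⟩ := hp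
              obtain ⟨b', rfl, h5⟩ := (hsome _ _ _).1 h2
              exact ⟨p1, rfl, (hh _ _ _).2 ⟨b1, h, b', h5, h3 _ rfl⟩⟩
        · right
          dsimp only at ho hx
          subst ho hx
          obtain ⟨rfl, -⟩ := (hnone _ _).1 h2
          exact ⟨hZ, rfl⟩

/-! ### Elimination of the last stack -/

section Elim

variable {Γ P : Type} {k : ℕ} (R : Sys Γ (k + 1) P)

/-- `LowRun R c u c'`: a run of `low` instructions on the first `k` stacks, which pushes in total
the word `u` on the last stack. -/
inductive LowRun : P × Stacks Γ k → List Γ → P × Stacks Γ k → Prop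
  | refl (c) : LowRun c [] c
  | step {p x p₁ x₁ ι α u c} : R p (.low ι α) p₁ → ι.den x x₁ → LowRun (p₁, x₁) u c →
      LowRun (p, x) (u ++ α) c

variable {R}

theorem LowRun.reach {c c' : P × Stacks Γ k} {u : List Γ} (h : LowRun R c u c') (w : List Γ) :
    R.Reach (c.1, (c.2, w)) (c'.1, (c'.2, u ++ w)) := by
  induction h generalizing w with
  | refl c => exact .refl
  | @step p x p₁ x₁ ι α u c h1 h2 _ ih =>
    have := ih (α ++ w)
    rw [← List.append_assoc] at this
    exact .head (b := (p₁, (x₁, α ++ w))) ⟨.low ι α, h1, h2, rfl⟩ this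

/-- A run starting with `v ++ w` on the last stack either keeps `w` untouched, in which case it
can be executed with any other word in place of `w`, or passes through a configuration where
the last stack is `w` and the others are empty, the part before being again independent of `w`. -/
theorem reach_split {c c' : P × Stacks Γ (k + 1)} (h : R.Reach c c') (v w : List Γ)
    (hc : c.2.2 = v ++ w) :
    (∃ u, c'.2.2 = u ++ w ∧
      ∀ w', R.Reach (c.1, (c.2.1, v ++ w')) (c'.1, (c'.2.1, u ++ w'))) ∨
    ∃ p, (∀ w', R.Reach (c.1, (c.2.1, v ++ w')) (p, (Stacks.empty Γ k, w'))) ∧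
      R.Reach (p, (Stacks.empty Γ k, w)) c' := by
  induction h using Relation.ReflTransGen.head_induction_on generalizing v with
  | refl => exact Or.inl ⟨v, hc, fun _ => .refl⟩
  | @head c c₁ hs ht ih =>
    obtain ⟨p, x, t⟩ := c
    obtain ⟨p₁, x₁, t₁⟩ := c₁
    dsimp only at hc
    subst hc
    -- Once the step is known to be independent of the suffix `w`, the rest follows from `ih`.
    have key : ∀ v₁, t₁ = v₁ ++ w →
        (∀ w', R.Step (p, (x, v ++ w')) (p₁, (x₁, v₁ ++ w'))) →
        (∃ u, c'.2.2 = u ++ w ∧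
          ∀ w', R.Reach (p, (x, v ++ w')) (c'.1, (c'.2.1, u ++ w'))) ∨
        ∃ p', (∀ w', R.Reach (p, (x, v ++ w')) (p', (Stacks.empty Γ k, w'))) ∧
          R.Reach (p', (Stacks.empty Γ k, w)) c' := by
      intro v₁ h1 h2
      rcases ih v₁ h1 with ⟨u, h3, h4⟩ | ⟨p', h3, h4⟩
      · exact Or.inl ⟨u, h3, fun w' => .head (h2 w') (h4 w')⟩
      · exact Or.inr ⟨p', fun w' => .head (h2 w') (h3 w'), h4⟩
    obtain ⟨ι, hR, hd⟩ := hs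
    cases ι with
    | low ι α =>
      refine key (α ++ v) (by simpa using hd.2) fun w' => ⟨_, hR, hd.1, by simp⟩
    | pop a z α =>
      obtain ⟨hx, hz, r, hr, ht₁⟩ := hd
      dsimp only at hx hz hr ht₁
      subst hx
      cases v with
      | nil => exact Or.inr ⟨p, fun _ => .refl, .head ⟨_, hR, rfl, hz, r, hr, ht₁⟩ ht⟩
      | cons b v =>
        simp only [List.cons_append, List.cons.injEq] at hr
        obtain ⟨rfl, rfl⟩ := hr
        exact key (α ++ v) (by simpa using ht₁) fun w' =>
          ⟨_, hR, rfl, hz, v ++ w', rfl, by simp⟩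
    | zero z α =>
      obtain ⟨hx, hz, hr, ht₁⟩ := hd
      dsimp only at hx hz hr ht₁
      subst hx
      have hv : v = [] := (List.append_eq_nil_iff.1 hr).1
      subst hv
      exact Or.inr ⟨p, fun _ => .refl, .head ⟨_, hR, rfl, hz, hr, ht₁⟩ ht⟩

/-- Every run starts with a `low` run, which either is the whole run or ends with the first `k`
stacks empty. -/
theorem reach_low {c c' : P × Stacks Γ (k + 1)} (h : R.Reach c c') :
    ∃ p y u, LowRun R (c.1, c.2.1) u (p, y) ∧ R.Reach (p, (y, u ++ c.2.2)) c' ∧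
      (y = Stacks.empty Γ k ∨ (p, (y, u ++ c.2.2)) = c') := by
  induction h using Relation.ReflTransGen.head_induction_on with
  | refl => exact ⟨_, _, [], .refl _, .refl, Or.inr rfl⟩
  | @head c c₁ hs ht ih =>
    obtain ⟨p, x, t⟩ := c
    obtain ⟨p₁, x₁, t₁⟩ := c₁
    have hs' := hs
    obtain ⟨ι, hR, hd⟩ := hs
    cases ι with
    | low ι α =>
      obtain ⟨hd, ht₁⟩ := hd
      dsimp only at hR hd ht₁ ih
      subst ht₁
      obtain ⟨p', y, u, h1, h2, h3⟩ := ih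
      refine ⟨p', y, u ++ α, .step hR hd h1, ?_⟩
      simpa using ⟨h2, h3⟩
    | pop a z α => exact ⟨p, x, [], .refl _, .head hs' ht, Or.inl hd.1⟩
    | zero z α => exact ⟨p, x, [], .refl _, .head hs' ht, Or.inl hd.1⟩

variable (R)

/-- The system on the first `k` stacks given by the `low` rules of `R`. The additional component of
the control state follows `δ` backwards along the words pushed on the last stack, because what is
pushed last is read first. -/
def prodSys {B : Type} (δ : B → Γ → B → Prop) : Sys Γ k (P × B) := fun s ι s' =>
  ∃ α, R s.1 (.low ι α) s'.1 ∧ Path δ α s'.2 s.2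

variable {R}

theorem prod_reach {B : Type} (δ : B → Γ → B → Prop) (c c' : (P × B) × Stacks Γ k) :
    (prodSys R δ).Reach c c' ↔
      ∃ u, LowRun R (c.1.1, c.2) u (c'.1.1, c'.2) ∧ Path δ u c'.1.2 c.1.2 := by
  constructor
  · intro h
    induction h using Relation.ReflTransGen.head_induction_on with
    | refl => exact ⟨[], .refl _, rfl⟩
    | @head c c₁ hs ht ih =>
      obtain ⟨ι, ⟨α, hR, hp⟩, hd⟩ := hs
      obtain ⟨u, h1, h2⟩ := ih
      exact ⟨u ++ α, .step hR hd h1, (path_append _ _ _ _ _).2 ⟨_, h2, hp⟩⟩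
  · obtain ⟨⟨p, b⟩, x⟩ := c
    obtain ⟨⟨p', b'⟩, x'⟩ := c'
    rintro ⟨u, h, hp⟩
    dsimp only at h hp
    generalize hc : (p, x) = c at h
    generalize hc' : (p', x') = c' at h
    induction h generalizing p x b with
    | refl c =>
      subst hc
      cases hc'
      cases hp
      exact .refl
    | @step p0 x0 p₁ x₁ ι α u c hR hd _ ih =>
      cases hc
      obtain ⟨e, h1, h2⟩ := (path_append _ _ _ _ _).1 hp
      exact .head (b := ((p₁, e), x₁)) ⟨ι, ⟨α, hR, h2⟩, hd⟩ (ih (p := p₁) (b := e) (x := x₁) h1 rfl hc')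

variable (R) {B : Type} (δ : B → Γ → B → Prop) (F : B → Prop)
  (C' : P × B → Stacks Γ k → Prop) (C : P → Stacks Γ (k + 1) → Prop)

/-- The automaton for the last stack of `Pre* C`: state `inl p` accepts `w` when
`(p, (∅, w)) ∈ Pre* C`, and state `inr b` behaves as `b`. -/
inductive satδ : P ⊕ B → Γ → P ⊕ B → Prop
  | old {b a b'} : δ b a b' → satδ (.inr b) a (.inr b')
  | pop {p a p'} : (∀ w, R.Reach (p, (Stacks.empty Γ k, a :: w)) (p', (Stacks.empty Γ k, w))) →
      satδ (.inl p) a (.inl p')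
  | fin {p a p' y u b b'} :
      (∀ w, R.Reach (p, (Stacks.empty Γ k, a :: w)) (p', (y, u ++ w))) → C' (p', b) y →
      Path δ u b b' → satδ (.inl p) a (.inr b')

/-- Final states of the automaton for the last stack: for `inl p`, the empty contents have to
belong to `Pre* C`. -/
def satF : P ⊕ B → Prop
  | .inl p => R.Pre C p (Stacks.empty Γ k, [])
  | .inr b => F b

theorem sat_old (w : List Γ) (b : B) (o : P ⊕ B) :
    Path (satδ R δ C') w (.inr b) o ↔ ∃ b', o = .inr b' ∧ Path δ w b b' := by
  induction w generalizing b with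
  | nil => simp [Path, eq_comm]
  | cons a w ih =>
    constructor
    · rintro ⟨c, h, h4⟩
      cases h with
      | old h =>
        obtain ⟨b', rfl, h5⟩ := (ih _).1 h4
        exact ⟨b', rfl, _, h, h5⟩
    · rintro ⟨b', rfl, c, h1, h2⟩
      exact ⟨_, .old h1, (ih _).2 ⟨_, rfl, h2⟩⟩

variable {R δ F C' C}
variable (hC : ∀ p x w, C p (x, w) ↔ ∃ b, C' (p, b) x ∧ ∃ f, Path δ w b f ∧ F f)
include hC

/-- From the state `p`, the automaton accepts exactly the words `w` such that `(p, (∅, w))` belongs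
to `Pre* C`. -/
theorem sat_new (w : List Γ) (p : P) :
    (∃ f, Path (satδ R δ C') w (.inl p) f ∧ satF R F C f) ↔
      R.Pre C p (Stacks.empty Γ k, w) := by
  induction w generalizing p with
  | nil => simp [Path, satF]
  | cons a w ih =>
    constructor
    · rintro ⟨f, ⟨c, h, h4⟩, hf⟩
      cases h with
      | @pop _ _ p' h =>
        obtain ⟨p1, y1, h1, h2⟩ := (ih p').1 ⟨f, h4, hf⟩
        exact ⟨p1, y1, (h w).trans h1, h2⟩
      | @fin _ _ p' y u b b' h hb hu =>
        obtain ⟨f', rfl, h5⟩ := (sat_old _ _ _ _ _ _).1 h4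
        exact ⟨p', (y, u ++ w), h w, (hC _ _ _).2
          ⟨b, hb, f', (path_append _ _ _ _ _).2 ⟨_, hu, h5⟩, hf⟩⟩
    · rintro ⟨p1, ⟨y1, t⟩, h1, h2⟩
      rcases reach_split h1 [a] w rfl with ⟨u, h3, h4⟩ | ⟨p2, h3, h4⟩
      · dsimp only at h3
        subst h3
        obtain ⟨b, hb, f, h5, hf⟩ := (hC _ _ _).1 h2
        obtain ⟨e, h6, h7⟩ := (path_append _ _ _ _ _).1 h5
        exact ⟨.inr f, ⟨.inr e, .fin h4 hb h6, (sat_old _ _ _ _ _ _).2 ⟨f, rfl, h7⟩⟩, hf⟩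
      · obtain ⟨f, h5, hf⟩ := (ih p2).2 ⟨_, _, h4, h2⟩
        exact ⟨f, ⟨_, .pop h3, h5⟩, hf⟩

/-- `Pre* C` over `k + 1` stacks is described by `Pre*` of the product system over `k` stacks and by
the automaton `satδ` for the last stack. The target of the product system is reached either with
`C'` satisfied, or with empty stacks at a state `p` from which the automaton reads on. -/
theorem pre_succ (p : P) (x : Stacks Γ k) (w : List Γ) :
    R.Pre C p (x, w) ↔ ∃ b, (prodSys R (satδ R δ C')).Pre
      (fun s y => (∃ s', (match s with
          | (_, .inl _) => none
          | (p, .inr b) => some (p, b) : Option (P × B)) = some s' ∧ C' s' y) ∨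
        (s.2 = .inl s.1 ∧ y = Stacks.empty Γ k)) (p, b) x ∧
      ∃ f, Path (satδ R δ C') w b f ∧ satF R F C f := by
  constructor
  · rintro ⟨p', ⟨y', t⟩, h, hc⟩
    obtain ⟨p1, y, u, h1, h2, h3⟩ := reach_low h
    dsimp only at h1 h2 h3
    rcases h3 with rfl | h3
    · obtain ⟨f, h4, hf⟩ := (sat_new hC _ _).2 ⟨_, _, h2, hc⟩
      obtain ⟨e, h5, h6⟩ := (path_append _ _ _ _ _).1 h4
      exact ⟨e, ⟨(p1, .inl p1), _, (prod_reach _ _ _).2 ⟨u, h1, h5⟩, Or.inr ⟨rfl, rfl⟩⟩,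
        f, h6, hf⟩
    · cases h3
      obtain ⟨b, hb, f, h4, hf⟩ := (hC _ _ _).1 hc
      obtain ⟨e, h5, h6⟩ := (path_append _ _ _ _ _).1 h4
      exact ⟨.inr e, ⟨(p', .inr b), _, (prod_reach _ _ _).2
        ⟨u, h1, (sat_old _ _ _ _ _ _).2 ⟨_, rfl, h5⟩⟩, Or.inl ⟨_, rfl, hb⟩⟩,
        .inr f, (sat_old _ _ _ _ _ _).2 ⟨_, rfl, h6⟩, hf⟩
  · rintro ⟨b, ⟨⟨p1, b1⟩, y, h1, h2⟩, f, h3, hf⟩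
    obtain ⟨u, h4, h5⟩ := (prod_reach _ _ _).1 h1
    dsimp only at h4 h5
    have h6 := (path_append _ _ _ _ _).2 ⟨_, h5, h3⟩
    have h7 := h4.reach w
    dsimp only at h7
    rcases h2 with ⟨s', hs, hc⟩ | ⟨hb, hy⟩
    · cases b1 with
      | inl _ => cases hs
      | inr b1 =>
        cases hs
        obtain ⟨f', rfl, h8⟩ := (sat_old _ _ _ _ _ _).1 h6
        exact ⟨_, _, h7, (hC _ _ _).2 ⟨b1, hc, f', h8, hf⟩⟩
    · dsimp only at hb hy
      subst hb hy
      obtain ⟨p2, y2, h8, h9⟩ := (sat_new hC _ _).1 ⟨f, h6, hf⟩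
      exact ⟨p2, y2, h7.trans h8, h9⟩

end Elim

/-- `Pre*` preserves recognizability; each stack raises the size parameter to its third power. -/
theorem Rec.pre {Γ : Type} (k m : ℕ) (hm : 2 ≤ m) (P : Type) [Finite P] (hP : Nat.card P ≤ m)
    (R : Sys Γ k P) (C : P → Stacks Γ k → Prop) (hC : Rec Γ m k P C) :
    Rec Γ (m ^ 3 ^ k) k P (R.Pre C) := by
  induction k generalizing m P with
  | zero => trivial
  | succ k ih =>
    obtain ⟨B, hB, δ, F, C', hc, hr, hh⟩ := hC
    have e : m ^ 3 ^ (k + 1) = (m ^ 3) ^ 3 ^ k := by rw [← pow_mul, pow_succ']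
    have hm1 : m ≤ m ^ 3 := Nat.le_self_pow (by norm_num) m
    have h2m : 2 * m ≤ m ^ 2 := by nlinarith
    have hcard : Nat.card (P ⊕ B) ≤ 2 * m := by rw [Nat.card_sum]; omega
    refine ⟨P ⊕ B, inferInstance, satδ R δ C', satF R F C, _, ?_, ?_, pre_succ hh⟩
    · rw [e]
      refine hcard.trans (h2m.trans ?_)
      exact (Nat.pow_le_pow_right (by omega) (by norm_num)).trans
        (Nat.le_self_pow (by positivity) _)
    · rw [e]
      refine ih (m ^ 3) (by omega) _ ?_ _ _ (Rec.mono ?_ _ _ _ (Rec.extend k _ _ C' hr _ _))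
      · rw [Nat.card_prod]
        calc Nat.card P * Nat.card (P ⊕ B) ≤ m * m ^ 2 :=
              Nat.mul_le_mul hP (hcard.trans h2m)
          _ = m ^ 3 := by ring
      · nlinarith [Nat.pow_le_pow_right (show 0 < m by omega) (show 2 ≤ 3 by norm_num)]

/-! ### Stack contents with and without the bottom symbol -/

section Decode

variable {Γ : Type} {bot : Γ}

/-- Stack letters other than the bottom symbol. -/
abbrev Letter (bot : Γ) := {g : Γ // g ≠ bot}

/-- The stack content `w⊥`. -/
def wrap (w : List (Letter bot)) : List Γ := w.map Subtype.val ++ [bot]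

theorem exists_map_val {v : List Γ} (hv : bot ∉ v) :
    ∃ u : List (Letter bot), v = u.map Subtype.val := by
  induction v with
  | nil => exact ⟨[], rfl⟩
  | cons a v ih =>
    simp only [List.mem_cons, not_or] at hv
    obtain ⟨u, rfl⟩ := ih hv.2
    exact ⟨⟨a, fun h => hv.1 h.symm⟩ :: u, rfl⟩

theorem bot_notMem_map (u : List (Letter bot)) : bot ∉ u.map Subtype.val := by
  simp

theorem isStack_iff (w : List Γ) : MPA.IsStack bot w ↔ ∃ u : List (Letter bot), w = wrap u := by
  constructor
  · rintro ⟨v, rfl, hv⟩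
    obtain ⟨u, rfl⟩ := exists_map_val hv
    exact ⟨u, rfl⟩
  · rintro ⟨u, rfl⟩
    exact ⟨_, rfl, bot_notMem_map u⟩

theorem wrap_inj {u v : List (Letter bot)} (h : wrap u = wrap v) : u = v :=
  List.map_injective_iff.2 Subtype.val_injective (List.append_cancel_right h)

theorem wrap_cons (a : Letter bot) (u : List (Letter bot)) : wrap (a :: u) = a.1 :: wrap u := rfl

theorem wrap_append (u v : List (Letter bot)) : wrap (u ++ v) = u.map Subtype.val ++ wrap v := by
  simp [wrap]

/-- The tuple of stack contents `(w₁⊥, …, wₙ⊥)`. -/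
def dec : {n : ℕ} → Stacks (Letter bot) n → Fin n → List Γ
  | 0, _ => Fin.elim0
  | _ + 1, x => Fin.snoc (α := fun _ => List Γ) (dec x.1) (wrap x.2)

/-- The word `w₁⊥⋯wₙ⊥`. -/
def flat : {n : ℕ} → Stacks (Letter bot) n → List Γ
  | 0, _ => []
  | _ + 1, x => flat x.1 ++ wrap x.2

@[simp] theorem dec_castSucc {n : ℕ} (x : Stacks (Letter bot) (n + 1)) (i : Fin n) :
    dec x i.castSucc = dec x.1 i := by simp [dec]

@[simp] theorem dec_last {n : ℕ} (x : Stacks (Letter bot) (n + 1)) :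
    dec x (Fin.last n) = wrap x.2 := by simp [dec]

theorem flatten_dec {n : ℕ} (x : Stacks (Letter bot) n) : (List.ofFn (dec x)).flatten = flat x := by
  induction n with
  | zero => simp [flat]
  | succ n ih => rw [List.ofFn_succ']; simp [flat, ih]

theorem dec_isStack {n : ℕ} (x : Stacks (Letter bot) n) (i : Fin n) :
    MPA.IsStack bot (dec x i) := by
  induction n with
  | zero => exact i.elim0
  | succ n ih =>
    induction i using Fin.lastCases with
    | last => rw [dec_last]; exact (isStack_iff _).2 ⟨_, rfl⟩
    | cast i => rw [dec_castSucc]; exact ih _ _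

theorem dec_surj {n : ℕ} (c : Fin n → List Γ) (hc : ∀ i, MPA.IsStack bot (c i)) :
    ∃ x : Stacks (Letter bot) n, ∀ i, dec x i = c i := by
  induction n with
  | zero => exact ⟨(), fun i => i.elim0⟩
  | succ n ih =>
    obtain ⟨x, hx⟩ := ih (fun i => c i.castSucc) fun i => hc _
    obtain ⟨u, hu⟩ := (isStack_iff _).1 (hc (Fin.last n))
    refine ⟨(x, u), fun i => ?_⟩
    induction i using Fin.lastCases with
    | last => exact (dec_last _).trans hu.symm
    | cast i => exact (dec_castSucc _ i).trans (hx i)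

theorem dec_inj {n : ℕ} {x y : Stacks (Letter bot) n} (h : ∀ i, dec x i = dec y i) : x = y := by
  induction n with
  | zero => rfl
  | succ n ih =>
    refine Prod.ext (ih fun i => ?_) (wrap_inj ?_)
    · simpa using h i.castSucc
    · simpa using h (Fin.last n)

theorem dec_empty {n : ℕ} (i : Fin n) : dec (Stacks.empty (Letter bot) n) i = [bot] := by
  induction n with
  | zero => exact i.elim0
  | succ n ih =>
    induction i using Fin.lastCases with
    | last => rw [dec_last]; rfl
    | cast i => rw [dec_castSucc]; exact ih _

theorem flat_eq_nil_or {n : ℕ} (x : Stacks (Letter bot) n) :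
    (n = 0 ∧ flat x = []) ∨ ∃ v, flat x = v ++ [bot] := by
  cases n with
  | zero => exact Or.inl ⟨rfl, rfl⟩
  | succ n => exact Or.inr ⟨flat x.1 ++ x.2.map Subtype.val, by simp [flat, wrap]⟩

theorem flat_append_cancel {n : ℕ} (x y : Stacks (Letter bot) n) (c : List Γ) (hc : bot ∉ c)
    (h : flat y = flat x ++ c) : c = [] := by
  rcases flat_eq_nil_or y with ⟨-, h1⟩ | ⟨v, h1⟩
  · rw [h1] at h
    exact (List.append_eq_nil_iff.1 h.symm).2
  · rcases List.eq_nil_or_concat' c with rfl | ⟨c', a, rfl⟩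
    · rfl
    · rw [h1, ← List.append_assoc] at h
      have := (List.append_inj' h rfl).2
      simp only [List.cons.injEq, and_true] at this
      simp [this] at hc

theorem flat_inj {n : ℕ} {x y : Stacks (Letter bot) n} (h : flat x = flat y) : x = y := by
  induction n with
  | zero => rfl
  | succ n ih =>
    obtain ⟨x, u⟩ := x
    obtain ⟨y, v⟩ := y
    have h' : flat x ++ u.map Subtype.val = flat y ++ v.map Subtype.val := by
      have : (flat x ++ u.map Subtype.val) ++ [bot] = (flat y ++ v.map Subtype.val) ++ [bot] := by
        simpa [flat, wrap] using h
      exact List.append_cancel_right this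
    have hxy : flat x = flat y := by
      rcases List.append_eq_append_iff.1 h' with ⟨c, h1, h2⟩ | ⟨c, h1, h2⟩
      · have hc : bot ∉ c := fun hc => bot_notMem_map u (h2 ▸ List.mem_append_left _ hc)
        rw [flat_append_cancel x y c hc h1, List.append_nil] at h1
        exact h1.symm
      · have hc : bot ∉ c := fun hc => bot_notMem_map v (h2 ▸ List.mem_append_left _ hc)
        rw [flat_append_cancel y x c hc h1, List.append_nil] at h1
        exact h1
    rw [hxy] at h'
    have huv : u = v :=
      List.map_injective_iff.2 Subtype.val_injective (List.append_cancel_left h')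
    rw [ih hxy, huv]

/-- An ordered transition acts on stack contents as an instruction. Orderedness is used in the form:
if stack `j` is popped, all stacks before it pop `⊥`. -/
theorem exists_ins {n : ℕ} (γ : Fin n → Option Γ) (α : Fin n → List Γ)
    (hord : ∀ i j, i < j → γ j ≠ none → γ i = some bot)
    (hα : ∀ i, (γ i ≠ some bot → bot ∉ α i) ∧
      (γ i = some bot → ∃ β, α i = β ++ [bot] ∧ bot ∉ β)) :
    ∃ ι : Ins (Letter bot) n, ∀ x y, ι.den x y ↔
      ∀ i, ∃ w, dec x i = (γ i).toList ++ w ∧ dec y i = α i ++ w := by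
  induction n with
  | zero => exact ⟨.nop, fun x y => ⟨fun _ i => i.elim0, fun _ => trivial⟩⟩
  | succ n ih =>
    -- When every stack but the last pops `bot`, the instruction replaces them by fixed contents.
    have hbots : γ (Fin.last n) ≠ none → ∃ z : Stacks (Letter bot) n, ∀ x y : Stacks (Letter bot) n,
        (∀ i : Fin n, ∃ w, dec x i = (γ i.castSucc).toList ++ w ∧ dec y i = α i.castSucc ++ w) ↔
          x = Stacks.empty _ n ∧ y = z := by
      intro hl
      have hb : ∀ i : Fin n, γ i.castSucc = some bot := fun i =>
        hord _ _ (Fin.castSucc_lt_last i) hl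
      obtain ⟨z, hz⟩ := dec_surj (bot := bot) (fun i : Fin n => α i.castSucc) fun i => by
        obtain ⟨β, h1, h2⟩ := (hα i.castSucc).2 (hb i)
        exact ⟨β, h1, h2⟩
      refine ⟨z, fun x y => ⟨fun h => ?_, ?_⟩⟩
      · have hw : ∀ i : Fin n, dec x i = [bot] ∧ dec y i = dec z i := by
          intro i
          obtain ⟨w, h1, h2⟩ := h i
          obtain ⟨v, h3, h4⟩ := dec_isStack x i
          rw [hb, h3] at h1
          have hwn : w = [] := by
            cases v with
            | nil => simpa [eq_comm] using h1
            | cons a v =>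
              simp only [List.cons_append, Option.toList_some, List.cons.injEq] at h1
              simp [h1.1] at h4
          subst hwn
          rw [h3, h1, h2, hz]
          simp
        exact ⟨dec_inj fun i => by rw [(hw i).1, dec_empty], dec_inj fun i => (hw i).2⟩
      · rintro ⟨rfl, rfl⟩ i
        exact ⟨[], by simp [dec_empty, hb], by simp [hz]⟩
    have hsplit : ∀ x y : Stacks (Letter bot) (n + 1),
        (∀ i, ∃ w, dec x i = (γ i).toList ++ w ∧ dec y i = α i ++ w) ↔
        (∀ i : Fin n, ∃ w, dec x.1 i = (γ i.castSucc).toList ++ w ∧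
          dec y.1 i = α i.castSucc ++ w) ∧
        ∃ w, wrap x.2 = (γ (Fin.last n)).toList ++ w ∧ wrap y.2 = α (Fin.last n) ++ w := by
      intro x y
      rw [Fin.forall_fin_succ']
      simp only [dec_castSucc, dec_last]
    cases hl : γ (Fin.last n) with
    | none =>
      obtain ⟨ι, hι⟩ := ih (fun i => γ i.castSucc) (fun i => α i.castSucc)
        (fun i j hij => hord _ _ (Fin.castSucc_lt_castSucc_iff.2 hij)) (fun i => hα _)
      obtain ⟨β, hβ⟩ := exists_map_val ((hα (Fin.last n)).1 (by simp [hl]))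
      refine ⟨.low ι β, fun x y => ?_⟩
      rw [hsplit, ← hι, hl, hβ, Ins.den]
      refine and_congr_right fun _ => ⟨fun h => ⟨_, rfl, ?_⟩, ?_⟩
      · exact (congrArg wrap h).trans (wrap_append _ _)
      · rintro ⟨w, h1, h2⟩
        simp only [Option.toList_none, List.nil_append] at h1
        exact wrap_inj (by rw [h2, ← h1, wrap_append])
    | some a =>
      obtain ⟨z, hz⟩ := hbots (by simp [hl])
      by_cases ha : a = bot
      · subst ha
        obtain ⟨β, hβ, hβ'⟩ := (hα (Fin.last n)).2 hl
        obtain ⟨β, rfl⟩ := exists_map_val hβ'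
        refine ⟨.zero z β, fun x y => ?_⟩
        rw [hsplit, hz, hl, hβ, Ins.den, and_assoc]
        refine and_congr_right fun _ => and_congr_right fun _ => ⟨?_, ?_⟩
        · rintro ⟨h1, h2⟩
          exact ⟨[], by simp [h1, wrap], by simp [h2, wrap]⟩
        · rintro ⟨w, h1, h2⟩
          have hx : x.2 = [] := by
            cases hx : x.2 with
            | nil => rfl
            | cons b u =>
              rw [hx, wrap_cons] at h1
              simp only [Option.toList_some, List.cons_append, List.cons.injEq] at h1
              exact absurd h1.1 b.2
          rw [hx] at h1
          have hw : w = [] := by simpa [wrap, eq_comm] using h1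
          subst hw
          exact ⟨hx, wrap_inj (by rw [h2]; simp [wrap])⟩
      · obtain ⟨β, hβ⟩ := exists_map_val ((hα (Fin.last n)).1 (by simp [hl, ha]))
        refine ⟨.pop ⟨a, ha⟩ z β, fun x y => ?_⟩
        rw [hsplit, hz, hl, hβ, Ins.den, and_assoc]
        refine and_congr_right fun _ => and_congr_right fun _ => ⟨?_, ?_⟩
        · rintro ⟨r, h1, h2⟩
          exact ⟨wrap r, by simp [h1, wrap_cons], by rw [h2, wrap_append]⟩
        · rintro ⟨w, h1, h2⟩
          cases hx : x.2 with
          | nil =>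
            rw [hx] at h1
            simp only [wrap, List.map_nil, List.nil_append, Option.toList_some,
              List.cons_append, List.cons.injEq] at h1
            exact absurd h1.1.symm ha
          | cons b u =>
            rw [hx, wrap_cons] at h1
            simp only [Option.toList_some, List.cons_append, List.nil_append,
              List.cons.injEq] at h1
            obtain ⟨rfl, rfl⟩ := h1
            exact ⟨u, rfl, wrap_inj (by rw [h2, wrap_append])⟩

end Decode
/-! ### Translation to and from finite automata -/

section Automata

variable {Γ : Type} {bot : Γ}

theorem evalRel_append {St : Type} {Δ : St → Option Γ → St → Prop} {s m t : St} {u v : List Γ}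
    (h1 : EvalRel Δ s u m) (h2 : EvalRel Δ m v t) : EvalRel Δ s (u ++ v) t := by
  induction h1 with
  | refl => exact h2
  | step h _ ih => rw [List.append_assoc]; exact .step h (ih h2)

theorem evalRel_split {St : Type} {Δ : St → Option Γ → St → Prop} {s t : St} {u v : List Γ}
    (h : EvalRel Δ s (u ++ v) t) : ∃ m, EvalRel Δ s u m ∧ EvalRel Δ m v t := by
  generalize hW : u ++ v = W at h
  induction h generalizing u with
  | refl q =>
    obtain ⟨rfl, rfl⟩ := List.append_eq_nil_iff.1 hW
    exact ⟨q, .refl _, .refl _⟩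
  | @step q a q' w t hs hr ih =>
    cases a with
    | none =>
      obtain ⟨m, h1, h2⟩ := ih hW
      exact ⟨m, .step hs h1, h2⟩
    | some a =>
      cases u with
      | nil => exact ⟨q, .refl _, by simp only [List.nil_append] at hW; rw [hW]; exact .step hs hr⟩
      | cons b u =>
        simp only [List.cons_append, Option.toList_some, List.nil_append,
          List.cons.injEq] at hW
        obtain ⟨rfl, hW⟩ := hW
        obtain ⟨m, h1, h2⟩ := ih hW
        exact ⟨m, .step (a := some b) hs h1, h2⟩

theorem evalRel_wrap {St : Type} (Δ : St → Option Γ → St → Prop) (s t : St)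
    (w : List (Letter bot)) : EvalRel Δ s (wrap w) t ↔
      ∃ s', Path (fun s (a : Letter bot) s' => EvalRel Δ s [a.1] s') w s s' ∧
        EvalRel Δ s' [bot] t := by
  induction w generalizing s with
  | nil => simp [Path, wrap]
  | cons a w ih =>
    constructor
    · intro h
      obtain ⟨m, h1, h2⟩ := evalRel_split (u := [a.1]) (v := wrap w) h
      obtain ⟨s', h3, h4⟩ := (ih m).1 h2
      exact ⟨s', ⟨m, h1, h3⟩, h4⟩
    · rintro ⟨s', ⟨m, h1, h3⟩, h4⟩
      exact evalRel_append (u := [a.1]) (v := wrap w) h1 ((ih m).2 ⟨s', h3, h4⟩)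

/-- Automaton-recognizable sets satisfy `Rec`. The automaton for one stack has pairs of states
`(s, t)`, where `s` is the current state and `t` the state to be reached after the bottom symbol. -/
theorem Rec.of_aut {St : Type} [Finite St] (Δ : St → Option Γ → St → Prop) (k : ℕ) (P : Type)
    (i : P → St) (φ : P → St → Prop) :
    Rec (Letter bot) (Nat.card St ^ 2) k P
      (fun p x => ∃ f, φ p f ∧ EvalRel Δ (i p) (flat x) f) := by
  induction k generalizing P with
  | zero => trivial
  | succ k ih =>
    have hpath : ∀ (w : List (Letter bot)) (s t : St) (e : St × St),
        Path (fun (e : St × St) (a : Letter bot) (e' : St × St) =>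
          e.2 = e'.2 ∧ EvalRel Δ e.1 [a.1] e'.1) w (s, t) e ↔
        e.2 = t ∧ Path (fun s (a : Letter bot) s' => EvalRel Δ s [a.1] s') w s e.1 := by
      intro w
      induction w with
      | nil => rintro s t ⟨s', t'⟩; simp [Path, and_comm, eq_comm]
      | cons a w ihw =>
        rintro s t e
        constructor
        · rintro ⟨⟨s1, t1⟩, ⟨rfl, h1⟩, h2⟩
          obtain ⟨h3, h4⟩ := (ihw _ _ _).1 h2
          exact ⟨h3, s1, h1, h4⟩
        · rintro ⟨h3, s1, h1, h4⟩
          exact ⟨(s1, t), ⟨rfl, h1⟩, (ihw _ _ _).2 ⟨h3, h4⟩⟩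
    refine ⟨St × St, inferInstance, fun e a e' => e.2 = e'.2 ∧ EvalRel Δ e.1 [a.1] e'.1, fun e => EvalRel Δ e.1 [bot] e.2, _,
      by rw [Nat.card_prod, sq], ih (P × (St × St)) (fun e => i e.1)
        (fun e f => f = e.2.1 ∧ φ e.1 e.2.2), fun p x w => ?_⟩
    constructor
    · rintro ⟨f, hf, h⟩
      obtain ⟨m, h1, h2⟩ := evalRel_split h
      obtain ⟨s', h3, h4⟩ := (evalRel_wrap _ _ _ _).1 h2
      exact ⟨(m, f), ⟨m, ⟨rfl, hf⟩, h1⟩, (s', f), (hpath _ _ _ _).2 ⟨rfl, h3⟩, h4⟩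
    · rintro ⟨⟨m, f⟩, ⟨_, ⟨rfl, hf⟩, h1⟩, ⟨s', f'⟩, h2, h4⟩
      obtain ⟨rfl, h3⟩ := (hpath _ _ _ _).1 h2
      exact ⟨_, hf, evalRel_append h1 ((evalRel_wrap _ _ _ _).2 ⟨s', h3, h4⟩)⟩

/-- Sequential composition of an automaton `Δ` for the first `k` stacks and an automaton `δ` for the
last one. The state `b` from which the latter starts is carried along from the beginning, and
`none` is entered by reading `⊥` at the end of the last stack. -/
inductive joinΔ {D B : Type} (Δ : D → Option Γ → D → Prop) (F : D → Prop)
    (δ : B → Letter bot → B → Prop) (G : B → Prop) :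
    (D × B) ⊕ Option B → Option Γ → (D × B) ⊕ Option B → Prop
  | low {d a d' b} : Δ d a d' → joinΔ Δ F δ G (.inl (d, b)) a (.inl (d', b))
  | jump {d b} : F d → joinΔ Δ F δ G (.inl (d, b)) none (.inr (some b))
  | read {b a b'} : δ b a b' → joinΔ Δ F δ G (.inr (some b)) (some a.1) (.inr (some b'))
  | close {b} : G b → joinΔ Δ F δ G (.inr (some b)) (some bot) (.inr none)

section Join

variable {D B : Type} {Δ : D → Option Γ → D → Prop} {F : D → Prop}
    {δ : B → Letter bot → B → Prop} {G : B → Prop}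

theorem join_right (b : B) (W : List Γ) :
    EvalRel (joinΔ Δ F δ G) (.inr (some b)) W (.inr none) ↔
      ∃ w, W = wrap w ∧ ∃ f, Path δ w b f ∧ G f := by
  constructor
  · intro h
    generalize hs : (Sum.inr (some b) : (D × B) ⊕ Option B) = s at h
    generalize ht : (Sum.inr none : (D × B) ⊕ Option B) = t at h
    induction h generalizing b with
    | refl => subst hs; cases ht
    | step hst hr ih =>
      subst hs ht
      cases hst with
      | read h =>
        obtain ⟨w, rfl, f, h1, h2⟩ := ih _ rfl rfl
        exact ⟨_ :: w, rfl, f, ⟨_, h, h1⟩, h2⟩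
      | close h =>
        refine ⟨[], ?_, _, rfl, h⟩
        cases hr with
        | refl => rfl
        | step h _ => cases h
  · rintro ⟨w, rfl, f, h1, h2⟩
    induction w generalizing b with
    | nil =>
      cases h1
      exact .step (a := some bot) (.close h2) (.refl _)
    | cons a w ih =>
      obtain ⟨c, h, h1⟩ := h1
      exact .step (a := some a.1) (.read h) (ih c h1)

theorem join_left (d : D) (b : B) (W : List Γ) :
    EvalRel (joinΔ Δ F δ G) (.inl (d, b)) W (.inr none) ↔
      ∃ U V f, W = U ++ V ∧ EvalRel Δ d U f ∧ F f ∧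
        EvalRel (joinΔ Δ F δ G) (.inr (some b)) V (.inr none) := by
  constructor
  · intro h
    generalize hs : (Sum.inl (d, b) : (D × B) ⊕ Option B) = s at h
    generalize ht : (Sum.inr none : (D × B) ⊕ Option B) = t at h
    induction h generalizing d with
    | refl => subst hs; cases ht
    | step hst hr ih =>
      subst hs ht
      cases hst with
      | low h =>
        obtain ⟨U, V, f, rfl, h1, h2, h3⟩ := ih _ rfl rfl
        exact ⟨_, V, f, (List.append_assoc _ _ _).symm, .step h h1, h2, h3⟩
      | jump h => exact ⟨[], _, d, rfl, .refl _, h, hr⟩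
  · rintro ⟨U, V, f, rfl, h1, h2, h3⟩
    induction h1 with
    | refl => exact .step (a := none) (.jump h2) h3
    | step h _ ih => rw [List.append_assoc]; exact .step (.low h) (ih h2)

end Join

/-- Sets satisfying `Rec` are recognized by automata. The language is required to be exactly the set
of encodings `flat x`, so that the encodings of the first `k` stacks and of the last one can be
concatenated. -/
theorem Rec.to_aut (N : ℕ) (hN : 1 ≤ N) (k : ℕ) (P : Type) (C : P → Stacks (Letter bot) k → Prop)
    (h : Rec (Letter bot) N k P C) :
    ∃ (D : Type) (_ : Finite D) (Δ : D → Option Γ → D → Prop) (I : P → D → Prop) (F : D → Prop),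
      Nat.card D ≤ (3 * N) ^ k ∧
      ∀ p W, (∃ d f, I p d ∧ F f ∧ EvalRel Δ d W f) ↔ ∃ x, C p x ∧ W = flat x := by
  induction k generalizing P with
  | zero =>
    refine ⟨Unit, inferInstance, fun _ _ _ => False, fun p _ => C p (), fun _ => True,
      by simp, fun p W => ⟨?_, ?_⟩⟩
    · rintro ⟨d, f, h1, -, h2⟩
      cases h2 with
      | refl => exact ⟨(), h1, rfl⟩
      | step h _ => exact h.elim
    · rintro ⟨x, h, rfl⟩
      exact ⟨(), (), h, trivial, .refl _⟩
  | succ k ih =>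
    obtain ⟨B, hB, δ, G, C', hc, hr, hh⟩ := h
    obtain ⟨D, hD, Δ, I, F, hd, hL⟩ := ih _ _ hr
    refine ⟨(D × B) ⊕ Option B, inferInstance, joinΔ Δ F δ G,
      fun p s => ∃ d b, s = .inl (d, b) ∧ I (p, b) d, fun s => s = .inr none, ?_,
      fun p W => ⟨?_, ?_⟩⟩
    · rw [Nat.card_sum, Nat.card_prod, Finite.card_option, pow_succ]
      have h1 : 1 ≤ (3 * N) ^ k := Nat.one_le_pow _ _ (by omega)
      have h2 := Nat.mul_le_mul hd hc
      have h3 := Nat.mul_le_mul h1 hN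
      have h4 := Nat.mul_le_mul h1 (le_refl N)
      linarith
    · rintro ⟨_, _, ⟨d, b, rfl, hI⟩, rfl, h⟩
      obtain ⟨U, V, f, rfl, h1, h2, h3⟩ := (join_left _ _ _).1 h
      obtain ⟨w, rfl, h4⟩ := (join_right _ _).1 h3
      obtain ⟨x, h5, rfl⟩ := (hL _ _).1 ⟨d, f, hI, h2, h1⟩
      exact ⟨(x, w), (hh _ _ _).2 ⟨b, h5, h4⟩, rfl⟩
    · rintro ⟨⟨x, w⟩, h, rfl⟩
      obtain ⟨b, h5, h4⟩ := (hh _ _ _).1 h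
      obtain ⟨d, f, hI, h2, h1⟩ := (hL (p, b) _).2 ⟨x, h5, rfl⟩
      exact ⟨_, _, ⟨d, b, rfl, hI⟩, rfl, (join_left _ _ _).2
        ⟨_, _, f, rfl, h1, h2, (join_right _ _).2 ⟨w, rfl, h4⟩⟩⟩

/-- The automaton `Δ` preceded by `ε`-transitions from the states `Q` into the sets of start states
`I`. -/
inductive startΔ {Q D : Type} (Δ : D → Option Γ → D → Prop) (I : Q → D → Prop) :
    Q ⊕ D → Option Γ → Q ⊕ D → Prop
  | start {q d} : I q d → startΔ Δ I (.inl q) none (.inr d)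
  | run {d a d'} : Δ d a d' → startΔ Δ I (.inr d) a (.inr d')

theorem start_run {Q D : Type} {Δ : D → Option Γ → D → Prop} {I : Q → D → Prop} (d f : D)
    (W : List Γ) : EvalRel (startΔ Δ I) (.inr d) W (.inr f) ↔ EvalRel Δ d W f := by
  constructor
  · intro h
    generalize hs : (Sum.inr d : Q ⊕ D) = s at h
    generalize ht : (Sum.inr f : Q ⊕ D) = t at h
    induction h generalizing d with
    | refl => subst hs; cases ht; exact .refl _
    | step hst hr ih =>
      subst hs ht
      cases hst with
      | run h => exact .step h (ih _ rfl rfl)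
  · intro h
    induction h with
    | refl => exact .refl _
    | step h _ ih => exact .step (.run h) ih

theorem start_accept {Q D : Type} {Δ : D → Option Γ → D → Prop} {I : Q → D → Prop} (q : Q) (f : D)
    (W : List Γ) : EvalRel (startΔ Δ I) (.inl q) W (.inr f) ↔
      ∃ d, I q d ∧ EvalRel Δ d W f := by
  constructor
  · intro h
    cases h with
    | step h1 h2 =>
      cases h1 with
      | start h => exact ⟨_, h, (start_run _ _ _).1 h2⟩
  · rintro ⟨d, h1, h2⟩
    exact .step (a := none) (.start h1) ((start_run _ _ _).2 h2)

end Automata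

/-! ### Systems of ordered automata and the size bound -/

section Transfer

variable {n : ℕ} {Q A Γ : Type} (M : MPA n Q A Γ)

/-- The system of instructions denoting transitions of `M`. -/
def sysOf : Sys (Letter M.bot) n Q := fun q ι q' =>
  ∃ γ a α, M.Δ q γ a q' α ∧
    ∀ x y, ι.den x y ↔ ∀ i, ∃ w, dec x i = (γ i).toList ++ w ∧ dec y i = α i ++ w

variable {M}

theorem stepAny_iff (hW : M.WF) (hO : M.Ordered) (q : Q) (x : Stacks (Letter M.bot) n)
    (c : Q × (Fin n → List Γ)) :
    M.StepAny (q, dec x) c ↔ ∃ y, c.2 = dec y ∧ (sysOf M).Step (q, x) (c.1, y) := by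
  constructor
  · rintro ⟨a, γ, α, w, hΔ, h⟩
    obtain ⟨y, hy⟩ := dec_surj (bot := M.bot) c.2 fun i => by
      obtain ⟨h1, h2, v, h3, h4⟩ := h i
      dsimp only at h1 h3
      obtain ⟨-, h5, h6⟩ := hW.2 _ _ _ _ _ hΔ i
      by_cases hb : γ i = some M.bot
      · obtain ⟨β, h7, h8, -⟩ := h6 hb
        have hw : w i = [] := by
          rw [h3, hb] at h1
          cases v with
          | nil => simpa [eq_comm] using h1
          | cons b v =>
            simp only [List.cons_append, Option.toList_some, List.cons.injEq] at h1
            simp [h1.1] at h4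
        exact ⟨β, by rw [h2, hw, h7]; simp, h8⟩
      · have hw : ∃ v', w i = v' ++ [M.bot] ∧ M.bot ∉ v' := by
          rw [h3] at h1
          cases hg : γ i with
          | none => exact ⟨v, by simpa [hg] using h1.symm, h4⟩
          | some g =>
            rw [hg] at h1 hb
            cases v with
            | nil =>
              simp only [List.nil_append, Option.toList_some, List.cons_append,
                List.cons.injEq] at h1
              exact absurd (congrArg some h1.1.symm) hb
            | cons b v =>
              simp only [List.cons_append, Option.toList_some, List.nil_append,
                List.cons.injEq] at h1
              exact ⟨v, h1.2.symm, fun h => h4 (List.mem_cons_of_mem _ h)⟩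
        obtain ⟨v', h7, h8⟩ := hw
        refine ⟨α i ++ v', by rw [h2, h7, List.append_assoc], ?_⟩
        rw [List.mem_append]
        exact fun h => h.elim (h5 hb) h8
    obtain ⟨i₀, hi, hj⟩ := hO _ _ _ _ _ hΔ
    obtain ⟨ι, hι⟩ := exists_ins (bot := M.bot) γ α (fun i j hij hne => hi i (lt_of_lt_of_le hij
        (not_lt.1 fun hlt => hne (hj j hlt)))) fun i => by
      obtain ⟨-, h5, h6⟩ := hW.2 _ _ _ _ _ hΔ i
      exact ⟨h5, fun hb => by obtain ⟨β, h7, h8, -⟩ := h6 hb; exact ⟨β, h7, h8⟩⟩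
    refine ⟨y, (funext hy).symm, ι, ⟨γ, a, α, hΔ, hι⟩, (hι _ _).2 fun i => ⟨w i, (h i).1, ?_⟩⟩
    rw [hy]
    exact (h i).2.1
  · rintro ⟨y, hy, ι, ⟨γ, a, α, hΔ, hι⟩, hd⟩
    choose w hw using (hι _ _).1 hd
    exact ⟨a, γ, α, w, hΔ, fun i => ⟨(hw i).1, by rw [hy]; exact (hw i).2, dec_isStack _ _⟩⟩

theorem preStar_dec (hW : M.WF) (hO : M.Ordered) (S : Set (Q × (Fin n → List Γ))) (q : Q)
    (x : Stacks (Letter M.bot) n) :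
    (q, dec x) ∈ preStar M.StepAny S ↔
      (sysOf M).Pre (fun q' y => (q', dec y) ∈ S) q x := by
  constructor
  · rintro ⟨c', hS, h⟩
    generalize hc : (q, dec x) = c at h
    induction h using Relation.ReflTransGen.head_induction_on generalizing q x with
    | refl => subst hc; exact ⟨q, x, .refl, hS⟩
    | @head c c₁ hs ht ih =>
      subst hc
      obtain ⟨y, hy, hst⟩ := (stepAny_iff hW hO _ _ _).1 hs
      obtain ⟨q', z, h1, h2⟩ := ih c₁.1 y (by rw [← hy])
      exact ⟨q', z, .head hst h1, h2⟩
  · rintro ⟨q', y, h, hS⟩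
    refine ⟨_, hS, ?_⟩
    exact Relation.ReflTransGen.lift (fun c : Q × Stacks (Letter M.bot) n => (c.1, dec c.2))
      (fun c c' hst => (stepAny_iff hW hO c.1 c.2 (c'.1, dec c'.2)).2 ⟨c'.2, rfl, hst⟩) _ _ h

end Transfer

theorem MAut_size_le {Γ Q S : Type} [Finite Γ] [Finite Q] [Finite S] (T : MAut Γ Q S) :
    T.size ≤ Nat.card (Q ⊕ S) + Nat.card Γ +
      Nat.card (Q ⊕ S) * ((Nat.card Γ + 1) * Nat.card (Q ⊕ S)) := by
  unfold MAut.size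
  gcongr
  refine (Finite.card_subtype_le _).trans ?_
  rw [Nat.card_prod, Nat.card_prod, Finite.card_option]

/-- Here `1 + (2 + 2 * 3 ^ (n + 1)) * (n + 1) + 1` is the exponent bounding the number of states, and
the number of transitions is at most the square of the number of states times `|Γ| + 1`. -/
theorem exp_bound (n : ℕ) : 2 * (1 + (2 + 2 * 3 ^ (n + 1)) * (n + 1) + 1) + 4 ≤
    2 ^ (7 * (n + 1)) := by
  have h1 : 3 ^ (n + 1) ≤ 4 ^ (n + 1) := Nat.pow_le_pow_left (by norm_num) _
  have h2 : n + 1 ≤ 2 ^ (n + 1) := Nat.lt_two_pow_self.le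
  have e4 : (4 : ℕ) ^ (n + 1) = (2 ^ (n + 1)) ^ 2 := by rw [← pow_mul, mul_comm, pow_mul]; norm_num
  have e7 : (2 : ℕ) ^ (7 * (n + 1)) = (2 ^ (n + 1)) ^ 7 := by rw [← pow_mul, mul_comm]
  rw [e7]
  rw [e4] at h1
  have hz : 2 ≤ 2 ^ (n + 1) := by rw [pow_succ]; have := Nat.one_le_two_pow (n := n); omega
  generalize 2 ^ (n + 1) = z at *
  generalize 3 ^ (n + 1) = t at *
  have h3 : (2 + 2 * t) * (n + 1) ≤ (2 + 2 * z ^ 2) * z := by gcongr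
  have h4 : 8 ≤ z ^ 3 := Nat.pow_le_pow_left hz 3
  have h5 : z ≤ z ^ 3 := Nat.le_self_pow (by norm_num) z
  have h6 : z ^ 7 = z ^ 3 * z ^ 3 * z := by ring
  have h7 : z ^ 3 * 16 ≤ z ^ 3 * (z ^ 3 * z) := by gcongr; nlinarith
  nlinarith

end OMPAPre

/-- There is a constant `d` such that for every ordered MPA `M` in normal
form and every `M`-automaton `A'`, some `M`-automaton `A` with
`|A| ≤ (|M|·|A'|)^{2^{d·n}}` recognizes exactly `Pre*_{T(M)}(L_M(A'))`.  In particular, the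
set of predecessors of a recognizable set of configurations of an OMPA is recognizable. -/
theorem ompa_preStar_recognizable :
    ∃ d : ℕ, 0 < d ∧
      ∀ (n : ℕ) (Q A Γ S : Type) (_ : Finite Q) (_ : Finite A) (_ : Finite Γ)
        (_ : Finite S) (M : MPA (n+1) Q A Γ) (T : MAut Γ Q S),
        M.WF → M.Ordered → M.NormalForm →
        ∃ (S' : Type) (_ : Finite S') (T' : MAut Γ Q S'),
          T'.size ≤ (M.size * T.size) ^ 2 ^ (d * (n+1)) ∧
          {c | MAut.AcceptConf M T' c} =
            preStar M.StepAny {c | MAut.AcceptConf M T c} := by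
  open OMPAPre in
  refine ⟨7, by norm_num, fun n Q A Γ S _ _ _ _ M T hW hO _ => ?_⟩
  set b := M.size * T.size with hb
  have hΓ : 2 ≤ Nat.card Γ := by
    have : Nontrivial Γ := ⟨_, _, hW.1⟩
    exact Finite.one_lt_card
  have hM : 1 + Nat.card Γ ≤ M.size := by unfold MPA.size; omega
  have hT : Nat.card Q + Nat.card S + Nat.card Γ ≤ T.size := by
    unfold MAut.size; rw [Nat.card_sum]; omega
  have hTb : 3 * T.size ≤ b := Nat.mul_le_mul_right _ (by omega)
  have hMb : 2 * M.size ≤ b := by rw [hb, mul_comm]; exact Nat.mul_le_mul_left _ (by omega)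
  have hSt : Nat.card (Q ⊕ S) ≤ b := by rw [Nat.card_sum]; omega
  have hb6 : 6 ≤ b := by omega
  have hbb : b ≤ b ^ 2 := Nat.le_self_pow (by norm_num) b
  have hrec : Rec (Letter M.bot) (b ^ 2) (n + 1) Q
      (fun q x => ∃ f, f ∈ T.F ∧ EvalRel T.Δ (.inl q) (flat x) f) :=
    Rec.mono (Nat.pow_le_pow_left hSt 2) _ _ _
      (Rec.of_aut T.Δ (n + 1) Q Sum.inl fun _ f => f ∈ T.F)
  -- The parameter `b ^ 2` absorbs both `|Q|` and the square of the number of states of `T`.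
  have hpre := Rec.pre (n + 1) (b ^ 2) (by omega) Q (by omega) (sysOf M) _ hrec
  obtain ⟨D, hD, Δ, I, F, hcard, hL⟩ :=
    Rec.to_aut _ (Nat.one_le_pow _ _ (by positivity)) (n + 1) Q _ hpre
  let T' : MAut Γ Q D := ⟨startΔ Δ I, {s | ∃ f, F f ∧ s = .inr f}⟩
  have hacc : ∀ (T₁ : MAut Γ Q S) (q : Q) (x : Stacks (Letter M.bot) (n + 1)),
      MAut.AcceptConf M T₁ (q, dec x) ↔
        ∃ f, f ∈ T₁.F ∧ EvalRel T₁.Δ (.inl q) (flat x) f := by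
    intro T₁ q x
    unfold MAut.AcceptConf
    rw [flatten_dec]
    exact and_iff_right fun i => dec_isStack x i
  refine ⟨D, hD, T', ?_, ?_⟩
  · set e := (2 + 2 * 3 ^ (n + 1)) * (n + 1) with he
    have hDb : Nat.card D ≤ b ^ e := by
      refine hcard.trans ?_
      rw [he, pow_mul, pow_add b, pow_mul b 2]
      refine Nat.pow_le_pow_left (Nat.mul_le_mul_right _ (by omega)) _
    have hN : Nat.card (Q ⊕ D) ≤ b ^ (1 + e + 1) := by
      rw [Nat.card_sum, pow_succ, pow_add, pow_one]
      have h1 : 1 ≤ b ^ e := Nat.one_le_pow _ _ (by omega)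
      have h2 : b * 1 ≤ b * b ^ e := Nat.mul_le_mul_left _ h1
      have h3 : 1 * b ^ e ≤ b * b ^ e := Nat.mul_le_mul_right _ (by omega)
      have h4 : b * b ^ e * 2 ≤ b * b ^ e * b := Nat.mul_le_mul_left _ (by omega)
      omega
    refine (MAut_size_le T').trans (le_trans ?_ (Nat.pow_le_pow_right (by omega) (exp_bound n)))
    rw [← he, pow_add, pow_mul', sq]
    have h1 : 1 ≤ b ^ (1 + e + 1) := Nat.one_le_pow _ _ (by omega)
    generalize b ^ (1 + e + 1) = y at *
    have h2 : Nat.card Γ + 1 ≤ b := by omega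
    calc _ ≤ y + b + y * (b * y) := by gcongr; omega
      _ ≤ y * y * b ^ 4 := by
        have h3 : y * 1 ≤ y * y := Nat.mul_le_mul_left _ h1
        have h4 : 1 * b ≤ y * y * b := Nat.mul_le_mul_right _ (by nlinarith)
        have h5 : y * y * 3 * b ≤ y * y * b ^ 3 * b := by
          gcongr
          nlinarith [Nat.le_self_pow (show 3 ≠ 0 by norm_num) b]
        have h6 : y * y * 1 ≤ y * y * b := Nat.mul_le_mul_left _ (by omega)
        calc y + b + y * (b * y) ≤ y * y * 3 * b := by nlinarith
          _ ≤ _ := h5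
          _ = _ := by ring
  · have hstk : ∀ c ∈ preStar M.StepAny {c | MAut.AcceptConf M T c},
        ∀ i, MPA.IsStack M.bot (c.2 i) := by
      rintro c ⟨c', hc', h⟩
      rcases Relation.ReflTransGen.cases_head h with rfl | ⟨c₁, ⟨a, γ, α, w, -, hs⟩, -⟩
      · exact hc'.1
      · exact fun i => (hs i).2.2
    have key : ∀ (q : Q) (x : Stacks (Letter M.bot) (n + 1)), MAut.AcceptConf M T' (q, dec x) ↔
        (q, dec x) ∈ preStar M.StepAny {c | MAut.AcceptConf M T c} := by
      intro q x
      rw [preStar_dec hW hO]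
      have h1 : (fun q' (y : Stacks (Letter M.bot) (n + 1)) =>
          (q', dec y) ∈ {c | MAut.AcceptConf M T c}) =
          fun q' y => ∃ f, f ∈ T.F ∧ EvalRel T.Δ (.inl q') (flat y) f := by
        funext q' y
        exact propext (hacc T q' y)
      rw [h1]
      unfold MAut.AcceptConf
      rw [flatten_dec, and_iff_right fun i => dec_isStack x i]
      constructor
      · rintro ⟨_, ⟨f, hf, rfl⟩, h⟩
        obtain ⟨d, hI, h2⟩ := (start_accept _ _ _).1 h
        obtain ⟨y, h3, h4⟩ := (hL _ _).1 ⟨d, f, hI, hf, h2⟩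
        rw [flat_inj h4]
        exact h3
      · intro h
        obtain ⟨d, f, hI, hf, h2⟩ := (hL _ _).2 ⟨x, h, rfl⟩
        exact ⟨_, ⟨f, hf, rfl⟩, (start_accept _ _ _).2 ⟨d, hI, h2⟩⟩
    ext ⟨q, v⟩
    constructor
    · intro h
      obtain ⟨x, hx⟩ := dec_surj (bot := M.bot) v h.1
      obtain rfl : dec x = v := funext hx
      exact (key q x).1 h
    · intro h
      obtain ⟨x, hx⟩ := dec_surj (bot := M.bot) v (hstk _ h)
      obtain rfl : dec x = v := funext hx
      exact (key q x).2 h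
end

section
/- There exists a constant d such that for every ordered multi-pushdown automaton M = (n,Q,Σ,Γ,Δ,q₀,γ₀,F) in normal form and every M-automaton A', there exists an M-automaton A with |A| ≤ (|M| · |A'|)^{2^{d·n}} such that L_M(A) = Pre⁺_{T(M)}(L_M(A')), where Pre⁺_{T(M)} = Pre_{T(M)} ∘ Pre*_{T(M)} is the set of strict predecessors (configurations reaching L_M(A') in at least one step). -/
open Relation

namespace OMPA

/-! ### Ordered rewriting systems on tuples of words -/

/-- Rules of an ordered system with `n` stacks: `D q i g q' α` pops `g` from stack `i` and pushes
`α j` on each stack `j`.  Neither the number of rules nor the length of the pushed words is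
bounded. -/
abbrev Rules (n : ℕ) (Q Γ : Type) : Type :=
  Q → Fin n → Γ → Q → (Fin n → List Γ) → Prop

/-- The tuple of empty stacks. -/
def bots (n : ℕ) {Γ : Type} (b : Γ) : Fin n → List Γ := fun _ => [b]

/-- One step of an ordered system: a rule popping from stack `i` applies only if all the stacks
before `i` are equal to `[b]`, and it overwrites these by the pushed words.  No stack discipline
is imposed: the contents are arbitrary words. -/
def OStep {n : ℕ} {Q Γ : Type} (b : Γ) (D : Rules n Q Γ) (c c' : Q × (Fin n → List Γ)) : Prop :=
  ∃ (i : Fin n) (g : Γ) (α : Fin n → List Γ), D c.1 i g c'.1 α ∧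
    (∃ z, c.2 i = g :: z ∧ c'.2 i = α i ++ z) ∧
    ∀ j, (j < i → c.2 j = [b] ∧ c'.2 j = α j) ∧ (i < j → c'.2 j = α j ++ c.2 j)

/-- The rules on the first `n` stacks of those rules that push `a` on the last stack without
popping from it. -/
def lower {n : ℕ} {Q Γ : Type} (D : Rules (n + 1) Q Γ) (a : List Γ) : Rules n Q Γ :=
  fun q i g q' α => D q i.castSucc g q' (Fin.snoc α a)

theorem init_snoc' {n : ℕ} {β : Type} (v : Fin n → β) (z : β) :
    Fin.init (Fin.snoc v z : Fin (n + 1) → β) = v :=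
  Fin.init_snoc (α := fun _ => β) z v

theorem snoc_last' {n : ℕ} {β : Type} (v : Fin n → β) (z : β) :
    (Fin.snoc v z : Fin (n + 1) → β) (Fin.last n) = z :=
  Fin.snoc_last (α := fun _ => β) z v

theorem snoc_init' {n : ℕ} {β : Type} (w : Fin (n + 1) → β) :
    (Fin.snoc (Fin.init w) (w (Fin.last n)) : Fin (n + 1) → β) = w :=
  Fin.snoc_init_self (α := fun _ => β) w

theorem eq_snoc' {n : ℕ} {β : Type} (w : Fin (n + 1) → β) {v : Fin n → β} {z : β}
    (h1 : Fin.init w = v) (h2 : w (Fin.last n) = z) : w = Fin.snoc v z := by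
  subst h1 h2; exact (snoc_init' w).symm

/-- A step either works on the first `n` stacks and prepends a word to the last one, or finds the
first `n` stacks empty and pops from the last one. -/
theorem ostep_succ {n : ℕ} {Q Γ : Type} (b : Γ) (D : Rules (n + 1) Q Γ)
    (c c' : Q × (Fin (n + 1) → List Γ)) :
    OStep b D c c' ↔
      (∃ a, OStep b (lower D a) (c.1, Fin.init c.2) (c'.1, Fin.init c'.2) ∧
        c'.2 (Fin.last n) = a ++ c.2 (Fin.last n)) ∨
      (Fin.init c.2 = bots n b ∧ ∃ g t a, c.2 (Fin.last n) = g :: t ∧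
        c'.2 (Fin.last n) = a ++ t ∧
        D c.1 (Fin.last n) g c'.1 (Fin.snoc (Fin.init c'.2) a)) := by
  obtain ⟨q, w⟩ := c
  obtain ⟨q', w'⟩ := c'
  constructor
  · rintro ⟨i, g, α, hD, ⟨z, h1, h2⟩, h3⟩
    simp only at *
    induction i using Fin.lastCases with
    | last =>
      right
      have h4 : Fin.init w' = Fin.init α := by
        funext j
        exact ((h3 j.castSucc).1 (Fin.castSucc_lt_last j)).2
      refine ⟨?_, g, z, α (Fin.last n), h1, h2, ?_⟩
      · funext j
        exact ((h3 j.castSucc).1 (Fin.castSucc_lt_last j)).1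
      · rw [h4, snoc_init']; exact hD
    | cast i =>
      left
      refine ⟨α (Fin.last n), ⟨i, g, Fin.init α, ?_, ⟨z, h1, h2⟩,
        fun j => ⟨fun h => ?_, fun h => ?_⟩⟩, ?_⟩
      · simp only [lower]; rw [snoc_init']; exact hD
      · exact (h3 j.castSucc).1 (by simpa using h)
      · exact (h3 j.castSucc).2 (by simpa using h)
      · exact (h3 (Fin.last n)).2 (Fin.castSucc_lt_last i)
  · rintro (⟨a, ⟨i, g, α, hD, ⟨z, h1, h2⟩, h3⟩, h4⟩ | ⟨h1, g, t, a, h2, h3, hD⟩)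
    · simp only at *
      refine ⟨i.castSucc, g, Fin.snoc α a, hD, ⟨z, h1, ?_⟩, ?_⟩
      · rw [Fin.snoc_castSucc (α := fun _ => List Γ)]; exact h2
      · intro j
        induction j using Fin.lastCases with
        | last =>
          refine ⟨fun h => absurd h (by simp [Fin.le_last]), fun _ => ?_⟩
          rw [snoc_last']; exact h4
        | cast j =>
          rw [Fin.snoc_castSucc (α := fun _ => List Γ)]
          exact ⟨fun h => (h3 j).1 (by simpa using h), fun h => (h3 j).2 (by simpa using h)⟩
    · simp only at *
      refine ⟨Fin.last n, g, _, hD, ⟨t, h2, ?_⟩, ?_⟩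
      · rw [snoc_last']; exact h3
      · intro j
        induction j using Fin.lastCases with
        | last => exact ⟨fun h => absurd h (lt_irrefl _), fun h => absurd h (lt_irrefl _)⟩
        | cast j =>
          rw [Fin.snoc_castSucc (α := fun _ => List Γ)]
          exact ⟨fun _ => ⟨congrFun h1 j, rfl⟩,
            fun h => absurd h (by simp [Fin.le_last])⟩

theorem ostep_extend {n : ℕ} {Q Γ : Type} {b : Γ} {D : Rules (n + 1) Q Γ}
    {c c' : Q × (Fin (n + 1) → List Γ)} (v : List Γ) (h : OStep b D c c') :
    OStep b D (c.1, Fin.snoc (Fin.init c.2) (c.2 (Fin.last n) ++ v))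
      (c'.1, Fin.snoc (Fin.init c'.2) (c'.2 (Fin.last n) ++ v)) := by
  rw [ostep_succ] at h ⊢
  simp only [init_snoc', snoc_last']
  rcases h with ⟨a, h1, h2⟩ | ⟨h1, g, t, a, h2, h3, hD⟩
  · exact Or.inl ⟨a, h1, by simp [h2]⟩
  · exact Or.inr ⟨h1, g, t ++ v, a, by simp [h2], by simp [h3], hD⟩

theorem run_extend {n : ℕ} {Q Γ : Type} {b : Γ} {D : Rules (n + 1) Q Γ}
    {c c' : Q × (Fin (n + 1) → List Γ)} (v : List Γ) (h : ReflTransGen (OStep b D) c c') :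
    ReflTransGen (OStep b D) (c.1, Fin.snoc (Fin.init c.2) (c.2 (Fin.last n) ++ v))
      (c'.1, Fin.snoc (Fin.init c'.2) (c'.2 (Fin.last n) ++ v)) :=
  ReflTransGen.lift (fun c : Q × (Fin (n + 1) → List Γ) =>
    (c.1, (Fin.snoc (Fin.init c.2) (c.2 (Fin.last n) ++ v) : Fin (n + 1) → List Γ)))
    (fun _ _ h => ostep_extend v h) _ _ h

/-- A run started with `u ++ v` on the last stack either never touches `v`, or passes through a
configuration whose last stack is `v` and whose other stacks are empty. -/
theorem run_frame {n : ℕ} {Q Γ : Type} {b : Γ} {D : Rules (n + 1) Q Γ}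
    {c c' : Q × (Fin (n + 1) → List Γ)} (v : List Γ) (h : ReflTransGen (OStep b D) c c') :
    ∀ u, c.2 (Fin.last n) = u ++ v →
      (∃ u', c'.2 (Fin.last n) = u' ++ v ∧
        ReflTransGen (OStep b D) (c.1, Fin.snoc (Fin.init c.2) u)
          (c'.1, Fin.snoc (Fin.init c'.2) u')) ∨
      (∃ q', ReflTransGen (OStep b D) (c.1, Fin.snoc (Fin.init c.2) u)
          (q', Fin.snoc (bots n b) []) ∧
        ReflTransGen (OStep b D) (q', Fin.snoc (bots n b) v) c') := by
  induction h using ReflTransGen.head_induction_on with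
  | refl => exact fun u hu => Or.inl ⟨u, hu, .refl⟩
  | @head c c₁ hs hr ih =>
    intro u hu
    -- The step does not touch `v` as soon as it is also a step with `u` in place of `u ++ v`.
    have key : ∀ u₁, c₁.2 (Fin.last n) = u₁ ++ v →
        OStep b D (c.1, Fin.snoc (Fin.init c.2) u) (c₁.1, Fin.snoc (Fin.init c₁.2) u₁) →
        (∃ u', c'.2 (Fin.last n) = u' ++ v ∧
          ReflTransGen (OStep b D) (c.1, Fin.snoc (Fin.init c.2) u)
            (c'.1, Fin.snoc (Fin.init c'.2) u')) ∨
        (∃ q', ReflTransGen (OStep b D) (c.1, Fin.snoc (Fin.init c.2) u)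
            (q', Fin.snoc (bots n b) []) ∧
          ReflTransGen (OStep b D) (q', Fin.snoc (bots n b) v) c') := by
      intro u₁ hu₁ hst
      rcases ih u₁ hu₁ with ⟨u', h1, h2⟩ | ⟨q', h1, h2⟩
      · exact Or.inl ⟨u', h1, h2.head hst⟩
      · exact Or.inr ⟨q', h1.head hst, h2⟩
    rcases (ostep_succ b D c c₁).1 hs with ⟨a, h1, h2⟩ | ⟨h1, g, t, a, h2, h3, hD⟩
    · refine key (a ++ u) (by simp [h2, hu]) ?_
      rw [ostep_succ]
      simp only [init_snoc', snoc_last']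
      exact Or.inl ⟨a, h1, rfl⟩
    · cases u with
      | nil =>
        right
        refine ⟨c.1, by rw [h1], ?_⟩
        have : c = (c.1, Fin.snoc (bots n b) v) :=
          Prod.ext rfl (eq_snoc' _ h1 (by simpa using hu))
        rw [← this]
        exact hr.head hs
      | cons g' u =>
        have h4 : g' = g ∧ u ++ v = t := by
          rw [hu] at h2; simpa using h2
        obtain ⟨rfl, rfl⟩ := h4
        refine key (a ++ u) (by simp [h3]) ?_
        rw [ostep_succ]
        simp only [init_snoc', snoc_last']
        exact Or.inr ⟨h1, g', u, a, rfl, rfl, hD⟩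

/-! ### Layered automata -/

/-- The reading relation of an automaton: reading `u ++ v` is reading `u`, then `v`.  Reading the
empty word may change the state, which accounts for `ε`-transitions. -/
def Comp {X Γ : Type} (R : X → List Γ → X → Prop) : Prop :=
  ∀ x u v z, R x (u ++ v) z ↔ ∃ y, R x u y ∧ R y v z

/-- Reading a tuple of words by a layered automaton: the `k`-th word is read by `R k`. -/
def Acc {X Γ : Type} (R : ℕ → X → List Γ → X → Prop) :
    (n : ℕ) → X → (Fin n → List Γ) → X → Prop
  | 0, x, _, f => x = f
  | n + 1, x, w, f => ∃ y, Acc R n x (Fin.init w) y ∧ R n y (w (Fin.last n)) f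

/-- The configurations accepted by a layered automaton with initial states `ι` and final
states `F`. -/
def LAcc {n : ℕ} {Q X Γ : Type} (R : ℕ → X → List Γ → X → Prop) (ι : Q → X → Prop)
    (F : X → Prop) (c : Q × (Fin n → List Γ)) : Prop :=
  ∃ x f, ι c.1 x ∧ Acc R n x c.2 f ∧ F f

/-! ### The saturated automaton of the last stack -/

/-- The saturated automaton of the last stack, with states `Q ⊕ X`.  A state `q` stands for the
configuration `q` with the other stacks empty; reading `w` from it means executing a run that
starts with `w` on the last stack, and that either consumes `w` and empties all stacks, or stops
at a configuration which the layered automaton reads. -/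
def Sat {n : ℕ} {Q X Γ : Type} (b : Γ) (D : Rules (n + 1) Q Γ) (R : ℕ → X → List Γ → X → Prop)
    (ι : Q → X → Prop) : Q ⊕ X → List Γ → Q ⊕ X → Prop
  | .inl q, w, .inl q' =>
    ReflTransGen (OStep b D) (q, Fin.snoc (bots n b) w) (q', Fin.snoc (bots n b) [])
  | .inl q, w, .inr x =>
    ∃ c', ReflTransGen (OStep b D) (q, Fin.snoc (bots n b) w) c' ∧
      ∃ x₀, ι c'.1 x₀ ∧ Acc R (n + 1) x₀ c'.2 x
  | .inr x, w, .inr y => R n x w y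
  | .inr _, _, .inl _ => False

theorem sat_comp {n : ℕ} {Q X Γ : Type} (b : Γ) (D : Rules (n + 1) Q Γ)
    (R : ℕ → X → List Γ → X → Prop) (hR : ∀ k, Comp (R k)) (ι : Q → X → Prop) :
    Comp (Sat b D R ι) := by
  have ext : ∀ q u q' v, ReflTransGen (OStep b D) (q, Fin.snoc (bots n b) u)
      (q', Fin.snoc (bots n b) []) → ReflTransGen (OStep b D) (q, Fin.snoc (bots n b) (u ++ v))
      (q', Fin.snoc (bots n b) v) := by
    intro q u q' v h
    have := run_extend v h
    simpa only [init_snoc', snoc_last', List.nil_append] using this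
  rintro (q | x) u v (q'' | z)
  · constructor
    · intro h
      rcases run_frame v h u (snoc_last' _ _) with ⟨u', h1, h2⟩ | ⟨q', h1, h2⟩
      · simp only [init_snoc', snoc_last'] at h1 h2
        have h3 : u' = [] ∧ v = [] := by simpa using h1.symm
        obtain ⟨rfl, rfl⟩ := h3
        exact ⟨.inl q'', h2, ReflTransGen.refl⟩
      · simp only [init_snoc'] at h1
        exact ⟨.inl q', h1, h2⟩
    · rintro ⟨q' | y, h1, h2⟩
      · exact (ext q u q' v h1).trans h2
      · exact h2.elim
  · constructor
    · rintro ⟨c', h, x₀, hx, y, hy, hz⟩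
      rcases run_frame v h u (snoc_last' _ _) with ⟨u', h1, h2⟩ | ⟨q', h1, h2⟩
      · rw [h1, hR] at hz
        obtain ⟨y', hy', hz'⟩ := hz
        simp only [init_snoc'] at h2
        refine ⟨.inr y', ⟨_, h2, x₀, hx, y, ?_, ?_⟩, hz'⟩
        · simpa only [init_snoc'] using hy
        · simpa only [snoc_last'] using hy'
      · simp only [init_snoc'] at h1
        exact ⟨.inl q', h1, c', h2, x₀, hx, y, hy, hz⟩
    · rintro ⟨q' | y, h1, h2⟩
      · obtain ⟨c', h3, h4⟩ := h2
        exact ⟨c', (ext q u q' v h1).trans h3, h4⟩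
      · obtain ⟨c', h3, x₀, hx, y', hy', hz⟩ := h1
        have := run_extend v h3
        simp only [init_snoc', snoc_last'] at this
        refine ⟨_, this, x₀, hx, y', ?_, ?_⟩
        · simpa only [init_snoc'] using hy'
        · simp only [snoc_last']
          exact (hR n _ _ _ _).2 ⟨y, hz, h2⟩
  · constructor
    · exact False.elim
    · rintro ⟨q' | y, h1, h2⟩
      · exact h1
      · exact h2
  · constructor
    · intro h
      obtain ⟨y, h1, h2⟩ := (hR n _ _ _ _).1 h
      exact ⟨.inr y, h1, h2⟩
    · rintro ⟨q' | y, h1, h2⟩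
      · exact h1.elim
      · exact (hR n _ _ _ _).2 ⟨y, h1, h2⟩

/-! ### Eliminating the last stack -/

/-- The system on the first `n` stacks obtained by eliminating the last one.  A state `(q, s)`
records the state `s` of the saturated automaton from which the last stack is read; as words are
pushed in front, this automaton is run backwards. -/
def elim {n : ℕ} {Q B Γ : Type} (D : Rules (n + 1) Q Γ) (G : B → List Γ → B → Prop) :
    Rules n (Q × B) Γ :=
  fun p i g p' α => ∃ a, lower D a p.1 i g p'.1 α ∧ G p'.2 a p.2

/-- The target configurations of the eliminated system: either the run in question goes on with
all the remaining stacks empty, or it stops and the remaining stacks are read up to the state `y`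
from which the last stack is read. -/
def Tgt {n : ℕ} {Q X Γ : Type} (b : Γ) (R : ℕ → X → List Γ → X → Prop) (ι : Q → X → Prop)
    (c : (Q × (Q ⊕ X)) × (Fin n → List Γ)) : Prop :=
  (c.1.2 = .inl c.1.1 ∧ c.2 = bots n b) ∨
    ∃ x y, c.1.2 = .inr y ∧ ι c.1.1 x ∧ Acc R n x c.2 y

/-- A run of the eliminated system lifts to the original one for every word `z` on the last stack
that is accepted from the recorded state, and acceptance of the last stack persists. -/
theorem elim_sound {n : ℕ} {Q B Γ : Type} {b : Γ} {D : Rules (n + 1) Q Γ}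
    {G : B → List Γ → B → Prop} (hG : Comp G) {c c' : (Q × B) × (Fin n → List Γ)}
    (h : ReflTransGen (OStep b (elim D G)) c c') :
    ∀ z f, G c.1.2 z f → ∃ u, ReflTransGen (OStep b D) (c.1.1, Fin.snoc c.2 z)
      (c'.1.1, Fin.snoc c'.2 u) ∧ G c'.1.2 u f := by
  induction h using ReflTransGen.head_induction_on with
  | refl => exact fun z f hf => ⟨z, .refl, hf⟩
  | @head c c₁ hs hr ih =>
    intro z f hf
    obtain ⟨i, g, α, ⟨a, hD, ha⟩, h1, h2⟩ := hs
    obtain ⟨u, h3, h4⟩ := ih (a ++ z) f ((hG _ _ _ _).2 ⟨_, ha, hf⟩)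
    refine ⟨u, h3.head ?_, h4⟩
    rw [ostep_succ]
    simp only [init_snoc', snoc_last']
    exact Or.inl ⟨a, ⟨i, g, α, hD, h1, h2⟩, rfl⟩

/-- A run into the target projects to the eliminated system, up to the first time when the last
stack is about to be popped; the recorded states are found backwards. -/
theorem elim_complete {n : ℕ} {Q X Γ : Type} {b : Γ} {D : Rules (n + 1) Q Γ}
    {R : ℕ → X → List Γ → X → Prop} (hR : ∀ k, Comp (R k)) {ι : Q → X → Prop}
    {c c' : Q × (Fin (n + 1) → List Γ)} (h : ReflTransGen (OStep b D) c c') {x f : X}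
    (hx : ι c'.1 x) (hf : Acc R (n + 1) x c'.2 f) :
    ∃ s d, Sat b D R ι s (c.2 (Fin.last n)) (.inr f) ∧
      ReflTransGen (OStep b (elim D (Sat b D R ι))) ((c.1, s), Fin.init c.2) d ∧
      Tgt b R ι d := by
  induction h using ReflTransGen.head_induction_on with
  | refl =>
    obtain ⟨y, hy, hyf⟩ := hf
    exact ⟨.inr y, _, hyf, .refl, Or.inr ⟨x, y, rfl, hx, hy⟩⟩
  | @head c c₁ hs hr ih =>
    obtain ⟨s₁, d, h1, h2, h3⟩ := ih
    rcases (ostep_succ b D c c₁).1 hs with ⟨a, ⟨i, g, α, hD, h4, h5⟩, h6⟩ | ⟨h4, _⟩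
    · rw [h6, sat_comp b D R hR ι] at h1
      obtain ⟨s, hs1, hs2⟩ := h1
      exact ⟨s, d, hs2, h2.head ⟨i, g, α, ⟨a, hD, hs1⟩, h4, h5⟩, h3⟩
    · have h5 : c = (c.1, Fin.snoc (bots n b) (c.2 (Fin.last n))) :=
        Prod.ext rfl (eq_snoc' _ h4 rfl)
      refine ⟨.inl c.1, _, ⟨c', ?_, x, hx, hf⟩, .refl, Or.inl ⟨rfl, h4⟩⟩
      rw [← h5]
      exact hr.head hs

/-- Reachability of the target splits into reachability in the eliminated system and reading the
last stack by the saturated automaton. -/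
theorem elim_iff {n : ℕ} {Q X Γ : Type} (b : Γ) (D : Rules (n + 1) Q Γ)
    (R : ℕ → X → List Γ → X → Prop) (hR : ∀ k, Comp (R k)) (ι : Q → X → Prop) (F : X → Prop)
    (c : Q × (Fin (n + 1) → List Γ)) :
    (∃ c', ReflTransGen (OStep b D) c c' ∧ LAcc R ι F c') ↔
      ∃ s f d, F f ∧ Sat b D R ι s (c.2 (Fin.last n)) (.inr f) ∧
        ReflTransGen (OStep b (elim D (Sat b D R ι))) ((c.1, s), Fin.init c.2) d ∧
        Tgt b R ι d := by
  constructor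
  · rintro ⟨c', h, x, f, hx, hf, hF⟩
    obtain ⟨s, d, h1, h2, h3⟩ := elim_complete hR h hx hf
    exact ⟨s, f, d, hF, h1, h2, h3⟩
  · rintro ⟨s, f, d, hF, h1, h2, h3⟩
    obtain ⟨u, h4, h5⟩ := elim_sound (sat_comp b D R hR ι) h2 _ _ h1
    simp only [snoc_init'] at h4
    obtain ⟨⟨q', s'⟩, v⟩ := d
    rcases h3 with ⟨h6, h7⟩ | ⟨x, y, h6, hx, hy⟩
    · simp only at h4 h5 h6 h7
      subst h6 h7
      obtain ⟨c', h8, x, hx, hf⟩ := h5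
      exact ⟨c', h4.trans h8, x, f, hx, hf, hF⟩
    · simp only at h4 h5 h6 hx hy
      subst h6
      refine ⟨_, h4, x, f, hx, ⟨y, ?_, ?_⟩, hF⟩
      · simpa only [init_snoc'] using hy
      · simp only [snoc_last']
        exact h5

/-! ### A layered automaton for the new target -/

/-- Two disjoint layered automata: one runs `R` and remembers the state to be reached, the other
one is a chain in which layer `k` leads from `k` to `k + 1` by reading exactly `[b]`. -/
def tgtR {X Γ : Type} (n : ℕ) (b : Γ) (R : ℕ → X → List Γ → X → Prop) (k : ℕ) :
    (X × X) ⊕ Fin (n + 1) → List Γ → (X × X) ⊕ Fin (n + 1) → Prop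
  | .inl p, w, .inl p' => p.2 = p'.2 ∧ R k p.1 w p'.1
  | .inr i, w, .inr j => (w = [] ∧ i = j) ∨ (w = [b] ∧ i.val = k ∧ j.val = k + 1)
  | .inl _, _, .inr _ => False
  | .inr _, _, .inl _ => False

theorem tgtR_comp {X Γ : Type} (n : ℕ) (b : Γ) (R : ℕ → X → List Γ → X → Prop)
    (hR : ∀ k, Comp (R k)) (k : ℕ) : Comp (tgtR n b R k) := by
  rintro (⟨x, y⟩ | i) u v (⟨x', y'⟩ | j)
  · simp only [tgtR, hR k x u v x']
    constructor
    · rintro ⟨rfl, z, h1, h2⟩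
      exact ⟨.inl (z, y), ⟨rfl, h1⟩, rfl, h2⟩
    · rintro ⟨⟨z, y''⟩ | l, h1, h2⟩
      · exact ⟨h1.1.trans h2.1, z, h1.2, h2.2⟩
      · exact h1.elim
  · simp only [tgtR]
    constructor
    · exact False.elim
    · rintro ⟨⟨z, y''⟩ | l, h1, h2⟩
      · exact h2
      · exact h1
  · simp only [tgtR]
    constructor
    · exact False.elim
    · rintro ⟨⟨z, y''⟩ | l, h1, h2⟩
      · exact h1
      · exact h2
  · constructor
    · rintro (⟨h, rfl⟩ | ⟨h, h1, h2⟩)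
      · have h3 : u = [] ∧ v = [] := by simpa using h
        exact ⟨.inr i, Or.inl ⟨h3.1, rfl⟩, Or.inl ⟨h3.2, rfl⟩⟩
      · rcases List.append_eq_singleton_iff.1 h with ⟨h3, h4⟩ | ⟨h3, h4⟩
        · exact ⟨.inr i, Or.inl ⟨h3, rfl⟩, Or.inr ⟨h4, h1, h2⟩⟩
        · exact ⟨.inr j, Or.inr ⟨h3, h1, h2⟩, Or.inl ⟨h4, rfl⟩⟩
    · rintro ⟨⟨z, y''⟩ | l, h1, h2⟩
      · exact h1.elim
      · rcases h1 with ⟨rfl, rfl⟩ | ⟨rfl, h3, h4⟩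
        · exact h2
        · rcases h2 with ⟨rfl, rfl⟩ | ⟨rfl, h5, h6⟩
          · exact Or.inr ⟨rfl, h3, h4⟩
          · omega

theorem acc_tgtR_inl {X Γ : Type} (n : ℕ) (b : Γ) (R : ℕ → X → List Γ → X → Prop) (k : ℕ)
    (x y : X) (w : Fin k → List Γ) (z : (X × X) ⊕ Fin (n + 1)) :
    Acc (tgtR n b R) k (.inl (x, y)) w z ↔ ∃ x', z = .inl (x', y) ∧ Acc R k x w x' := by
  induction k generalizing z with
  | zero => simp only [Acc]; exact ⟨fun h => ⟨x, h.symm, rfl⟩, by rintro ⟨_, rfl, rfl⟩; rfl⟩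
  | succ k ih =>
    simp only [Acc, ih]
    constructor
    · rintro ⟨_, ⟨x', rfl, h1⟩, h2⟩
      rcases z with ⟨z, y'⟩ | j
      · obtain ⟨rfl, h3⟩ := h2
        exact ⟨z, rfl, x', h1, h3⟩
      · exact h2.elim
    · rintro ⟨z, rfl, x', h1, h2⟩
      exact ⟨_, ⟨x', rfl, h1⟩, rfl, h2⟩

theorem acc_tgtR_inr {X Γ : Type} (n : ℕ) (b : Γ) (R : ℕ → X → List Γ → X → Prop) (k : ℕ)
    (w : Fin k → List Γ) (z : (X × X) ⊕ Fin (n + 1))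
    (h : Acc (tgtR n b R) k (.inr 0) w z) :
    ∃ j : Fin (n + 1), z = .inr j ∧ j.val ≤ k ∧ (j.val = k → w = bots k b) := by
  induction k generalizing z with
  | zero => exact ⟨0, h.symm, le_rfl, fun _ => funext fun i => i.elim0⟩
  | succ k ih =>
    obtain ⟨y, h1, h2⟩ := h
    obtain ⟨i, rfl, h3, h4⟩ := ih _ _ h1
    rcases z with p | j
    · exact h2.elim
    · refine ⟨j, rfl, ?_⟩
      rcases h2 with ⟨h5, rfl⟩ | ⟨h5, h6, h7⟩
      · exact ⟨by omega, fun h => by omega⟩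
      · refine ⟨by omega, fun _ => ?_⟩
        funext l
        induction l using Fin.lastCases with
        | last => exact h5
        | cast l => exact congrFun (h4 h6) l

theorem acc_tgtR_bots {X Γ : Type} (n : ℕ) (b : Γ) (R : ℕ → X → List Γ → X → Prop) (k : ℕ)
    (hk : k < n + 1) :
    Acc (tgtR n b R) k (.inr 0) (bots k b) (.inr ⟨k, hk⟩) := by
  induction k with
  | zero => rfl
  | succ k ih => exact ⟨_, ih (by omega), Or.inr ⟨rfl, rfl, rfl⟩⟩

/-- The target of the eliminated system is recognized by a layered automaton. -/
theorem tgt_iff {n : ℕ} {Q X Γ : Type} (b : Γ) (R : ℕ → X → List Γ → X → Prop)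
    (ι : Q → X → Prop) (c : (Q × (Q ⊕ X)) × (Fin n → List Γ)) :
    Tgt b R ι c ↔ LAcc (tgtR n b R)
      (fun p => Sum.elim (fun x => ι p.1 x.1 ∧ p.2 = .inr x.2) fun k => k = 0 ∧ p.2 = .inl p.1)
      (Sum.elim (fun x => x.1 = x.2) fun k => k.val = n) c := by
  obtain ⟨⟨q, s⟩, v⟩ := c
  constructor
  · rintro (⟨h1, h2⟩ | ⟨x, y, h1, hx, hy⟩)
    · simp only at h1 h2
      subst h1 h2
      exact ⟨.inr 0, .inr ⟨n, by omega⟩, ⟨rfl, rfl⟩, acc_tgtR_bots n b R n _, rfl⟩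
    · exact ⟨.inl (x, y), .inl (y, y), ⟨hx, h1⟩, (acc_tgtR_inl ..).2 ⟨y, rfl, hy⟩, rfl⟩
  · rintro ⟨⟨x, y⟩ | k, f, h1, h2, h3⟩
    · obtain ⟨x', rfl, h4⟩ := (acc_tgtR_inl ..).1 h2
      have h5 : x' = y := h3
      subst h5
      exact Or.inr ⟨x, x', h1.2, h1.1, h4⟩
    · obtain ⟨rfl, h4⟩ := h1
      obtain ⟨j, rfl, -, h5⟩ := acc_tgtR_inr n b R n _ _ h2
      exact Or.inl ⟨h4, h5 h3⟩

/-! ### Putting the last stack back -/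

/-- The layered automaton that reads the first `n` words by `R`, remembering a state of `G`, and
then the last word by `G`. -/
def resR {Y B Γ : Type} (n : ℕ) (R : ℕ → Y → List Γ → Y → Prop) (G : B → List Γ → B → Prop)
    (k : ℕ) (p : Y × B) (w : List Γ) (p' : Y × B) : Prop :=
  if k < n then p.2 = p'.2 ∧ R k p.1 w p'.1 else p.1 = p'.1 ∧ G p.2 w p'.2

theorem resR_comp {Y B Γ : Type} (n : ℕ) (R : ℕ → Y → List Γ → Y → Prop)
    (G : B → List Γ → B → Prop) (hR : ∀ k, Comp (R k)) (hG : Comp G) (k : ℕ) :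
    Comp (resR n R G k) := by
  rintro ⟨y, s⟩ u v ⟨y', s'⟩
  by_cases hk : k < n
  · simp only [resR, hk, if_true, hR k y u v y']
    constructor
    · rintro ⟨rfl, z, h1, h2⟩
      exact ⟨(z, s), ⟨rfl, h1⟩, rfl, h2⟩
    · rintro ⟨⟨z, t⟩, h1, h2⟩
      exact ⟨h1.1.trans h2.1, z, h1.2, h2.2⟩
  · simp only [resR, hk, if_false, hG s u v s']
    constructor
    · rintro ⟨rfl, z, h1, h2⟩
      exact ⟨(y, z), ⟨rfl, h1⟩, rfl, h2⟩
    · rintro ⟨⟨z, t⟩, h1, h2⟩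
      exact ⟨h1.1.trans h2.1, t, h1.2, h2.2⟩

theorem acc_resR {Y B Γ : Type} (n : ℕ) (R : ℕ → Y → List Γ → Y → Prop)
    (G : B → List Γ → B → Prop) (k : ℕ) (hk : k ≤ n) (y : Y) (s : B) (w : Fin k → List Γ)
    (p : Y × B) :
    Acc (resR n R G) k (y, s) w p ↔ p.2 = s ∧ Acc R k y w p.1 := by
  induction k generalizing p with
  | zero =>
    obtain ⟨y', s'⟩ := p
    simp only [Acc, Prod.mk.injEq]
    exact ⟨fun h => ⟨h.2.symm, h.1⟩, fun h => ⟨h.2, h.1.symm⟩⟩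
  | succ k ih =>
    have hk' : k < n := hk
    simp only [Acc, ih hk'.le, resR, hk', if_true]
    constructor
    · rintro ⟨⟨z, t⟩, ⟨h1, h2⟩, h3, h4⟩
      exact ⟨h3.symm.trans h1, z, h2, h4⟩
    · rintro ⟨h1, z, h2, h3⟩
      exact ⟨(z, s), ⟨rfl, h2⟩, h1.symm, h3⟩

/-- Backward reachability preserves recognizability by layered automata.  Eliminating a stack turns
the bound `m` on the numbers of states into `m ^ 3`, and putting it back costs a factor `m ^ 2`;
the exponents thus satisfy `3 * 5 ^ n + 2 ≤ 5 ^ (n + 1)`. -/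
theorem layered_preStar (n : ℕ) : ∀ (Q X Γ : Type) (_ : Finite Q) (_ : Finite X) (b : Γ)
    (D : Rules n Q Γ) (R : ℕ → X → List Γ → X → Prop) (_ : ∀ k, Comp (R k))
    (ι : Q → X → Prop) (F : X → Prop) (m : ℕ), n + 2 ≤ m → Nat.card Q ≤ m → Nat.card X ≤ m →
    ∃ (Y : Type) (_ : Finite Y) (R' : ℕ → Y → List Γ → Y → Prop) (ι' : Q → Y → Prop)
      (F' : Y → Prop), (∀ k, Comp (R' k)) ∧ Nat.card Y ≤ m ^ 5 ^ n ∧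
      ∀ c, LAcc R' ι' F' c ↔ ∃ c', ReflTransGen (OStep b D) c c' ∧ LAcc R ι F c' := by
  induction n with
  | zero =>
    intro Q X Γ _ hX b D R hR ι F m hm hQm hXm
    refine ⟨X, hX, R, ι, F, hR, by simpa using hXm, fun c => ⟨fun h => ⟨c, .refl, h⟩, ?_⟩⟩
    rintro ⟨c', h, hacc⟩
    -- There are no steps without stacks.
    rcases ReflTransGen.cases_head h with rfl | ⟨c₁, ⟨i, _⟩, _⟩
    · exact hacc
    · exact i.elim0
  | succ n ih =>
    intro Q X Γ _ _ b D R hR ι F m hm hQm hXm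
    have hG := sat_comp b D R hR ι
    have hm2 : 2 ≤ m := by omega
    have e2 : Nat.card (Q ⊕ X) ≤ m ^ 2 := by
      rw [Nat.card_sum]; nlinarith
    have e3 : 2 * m ^ 2 ≤ m ^ 3 := by
      rw [pow_succ m 2, mul_comm]; exact Nat.mul_le_mul_left _ hm2
    obtain ⟨Y, hY, R', ι', F', hR', hcard, hiff⟩ := ih (Q × (Q ⊕ X)) ((X × X) ⊕ Fin (n + 1)) Γ
      inferInstance inferInstance b (elim D (Sat b D R ι)) (tgtR n b R) (tgtR_comp n b R hR)
      (fun p => Sum.elim (fun x => ι p.1 x.1 ∧ p.2 = .inr x.2) fun k => k = 0 ∧ p.2 = .inl p.1)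
      (Sum.elim (fun x => x.1 = x.2) fun k => k.val = n) (m ^ 3)
      (by nlinarith)
      (by rw [Nat.card_prod, pow_succ' m 2]; exact Nat.mul_le_mul hQm e2)
      (by
        rw [Nat.card_sum, Nat.card_prod, Nat.card_fin]
        nlinarith [Nat.mul_le_mul hXm hXm])
    refine ⟨Y × (Q ⊕ X), inferInstance, resR n R' (Sat b D R ι), fun q p => ι' (q, p.2) p.1,
      fun p => F' p.1 ∧ ∃ f, p.2 = .inr f ∧ F f, resR_comp n R' _ hR' hG, ?_, fun c => ?_⟩
    · rw [Nat.card_prod]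
      calc Nat.card Y * Nat.card (Q ⊕ X) ≤ (m ^ 3) ^ 5 ^ n * m ^ 2 := Nat.mul_le_mul hcard e2
        _ = m ^ (3 * 5 ^ n + 2) := by rw [← pow_mul, ← pow_add]
        _ ≤ m ^ 5 ^ (n + 1) := by
          apply Nat.pow_le_pow_right (by omega)
          have : 1 ≤ 5 ^ n := Nat.one_le_pow _ _ (by norm_num)
          rw [pow_succ]; omega
    · rw [elim_iff b D R hR]
      simp only [tgt_iff]
      constructor
      · rintro ⟨⟨y, s⟩, ⟨y'', s''⟩, h1, ⟨p, hp, hlast⟩, h3, f, hf, hF⟩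
        obtain ⟨hp1, hp2⟩ := (acc_resR n R' _ n le_rfl _ _ _ _).1 hp
        simp only [resR, lt_irrefl, if_false] at hlast
        simp only at hf h3
        rw [hp1, hf] at hlast
        obtain ⟨d, hd1, hd2⟩ := (hiff ((c.1, s), Fin.init c.2)).1
          ⟨y, p.1, h1, hp2, hlast.1 ▸ h3⟩
        exact ⟨s, f, d, hF, hlast.2, hd1, hd2⟩
      · rintro ⟨s, f, d, hF, h1, h2, h3⟩
        obtain ⟨y, y', h4, h5, h6⟩ := (hiff ((c.1, s), Fin.init c.2)).2 ⟨d, h2, h3⟩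
        refine ⟨(y, s), (y', .inr f), h4, ⟨(y', s), ?_, ?_⟩, h6, f, rfl, hF⟩
        · exact (acc_resR n R' _ n le_rfl _ _ _ _).2 ⟨rfl, h5⟩
        · simp only [resR, lt_irrefl, if_false]
          exact ⟨trivial, h1⟩

/-! ### Ordered multi-pushdown automata as ordered systems -/

/-- The rules of an ordered multi-pushdown automaton in normal form, where `i` is the last stack
from which a transition pops. -/
def ofMPA {n : ℕ} {Q A Γ : Type} (M : MPA n Q A Γ) : Rules n Q Γ :=
  fun q i g q' α => ∃ γ a, M.Δ q γ a q' α ∧ γ i = some g ∧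
    (∀ j, j < i → γ j = some M.bot) ∧ ∀ j, i < j → γ j = none

theorem isStack_bot_cons {Γ : Type} {b : Γ} {w : List Γ} (h : MPA.IsStack b (b :: w)) :
    w = [] := by
  obtain ⟨v, h1, h2⟩ := h
  cases v with
  | nil => simpa using h1
  | cons a v =>
    simp only [List.cons_append, List.cons.injEq] at h1
    exact absurd (by simp [h1.1]) h2

theorem isStack_append {Γ : Type} {b : Γ} {u w : List Γ} (hu : b ∉ u) (h : MPA.IsStack b w) :
    MPA.IsStack b (u ++ w) := by
  obtain ⟨v, rfl, h2⟩ := h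
  exact ⟨u ++ v, by simp, by simp [hu, h2]⟩

theorem isStack_tail {Γ : Type} {b g : Γ} {w : List Γ} (h : MPA.IsStack b (g :: w)) (hg : g ≠ b) :
    MPA.IsStack b w := by
  obtain ⟨v, h1, h2⟩ := h
  cases v with
  | nil =>
    simp only [List.nil_append, List.cons.injEq] at h1
    exact absurd h1.1 hg
  | cons a v =>
    simp only [List.cons_append, List.cons.injEq] at h1
    exact ⟨v, h1.2, fun h => h2 (List.mem_cons_of_mem _ h)⟩

theorem stepAny_iff {n : ℕ} {Q A Γ : Type} (M : MPA (n + 1) Q A Γ) (hM : M.NormalForm)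
    (c c' : Q × (Fin (n + 1) → List Γ)) :
    M.StepAny c c' ↔
      (∀ i, MPA.IsStack M.bot (c.2 i)) ∧ OStep M.bot (ofMPA M) c c' := by
  constructor
  · rintro ⟨a, γ, α, w, hΔ, h⟩
    refine ⟨fun i => (h i).2.2, ?_⟩
    have hi : ∃ i g, γ i = some g ∧ (∀ j, j < i → γ j = some M.bot) ∧
        ∀ j, i < j → γ j = none := by
      rcases hM _ _ _ _ _ hΔ with ⟨⟨g, h1⟩, h2, -⟩ | ⟨i, -, h1, h2, ⟨g, h3, -⟩, -⟩
      · exact ⟨0, g, h1, fun j hj => absurd hj (by simp), fun j hj => h2 j hj.ne'⟩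
      · exact ⟨i, g, h3, h1, h2⟩
    obtain ⟨i, g, h1, h2, h3⟩ := hi
    refine ⟨i, g, α, ⟨γ, a, hΔ, h1, h2, h3⟩, ⟨w i, ?_, (h i).2.1⟩,
      fun j => ⟨fun hj => ?_, fun hj => ?_⟩⟩
    · simpa [h1] using (h i).1
    · obtain ⟨h4, h5, h6⟩ := h j
      rw [h2 j hj] at h4
      simp only [Option.toList_some, List.cons_append, List.nil_append] at h4
      rw [h4] at h6
      have h7 := isStack_bot_cons h6
      rw [h7] at h4 h5
      exact ⟨h4, by simpa using h5⟩
    · obtain ⟨h4, h5, h6⟩ := h j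
      rw [h3 j hj] at h4
      simp only [Option.toList_none, List.nil_append] at h4
      rw [h4, h5]
  · rintro ⟨hst, i, g, α, ⟨γ, a, hΔ, h1, h2, h3⟩, ⟨z, h4, h5⟩, h6⟩
    refine ⟨a, γ, α, fun j => if j < i then [] else if j = i then z else c.2 j, hΔ, fun j => ?_⟩
    rcases lt_trichotomy j i with hj | rfl | hj
    · simp only [hj, if_true, h2 j hj]
      exact ⟨by simpa using ((h6 j).1 hj).1, by simpa using ((h6 j).1 hj).2, hst j⟩
    · simp only [lt_irrefl, if_false, if_true, h1]
      exact ⟨by simpa using h4, h5, hst j⟩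
    · simp only [hj.not_gt, hj.ne', if_false, h3 j hj]
      exact ⟨by simp, (h6 j).2 hj, hst j⟩

theorem isStack_step {n : ℕ} {Q A Γ : Type} (M : MPA (n + 1) Q A Γ) (hM : M.WF)
    {c c' : Q × (Fin (n + 1) → List Γ)} (hc : ∀ i, MPA.IsStack M.bot (c.2 i))
    (h : OStep M.bot (ofMPA M) c c') : ∀ i, MPA.IsStack M.bot (c'.2 i) := by
  obtain ⟨i, g, α, ⟨γ, a, hΔ, h1, h2, h3⟩, ⟨z, h4, h5⟩, h6⟩ := h
  intro j
  obtain ⟨-, hw1, hw2⟩ := hM.2 _ _ _ _ _ hΔ j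
  rcases lt_trichotomy j i with hj | rfl | hj
  · rw [((h6 j).1 hj).2]
    obtain ⟨β, h7, h8, -⟩ := hw2 (h2 j hj)
    exact ⟨β, h7, h8⟩
  · have hz := hc j
    rw [h4] at hz
    rw [h5]
    by_cases hg : g = M.bot
    · subst hg
      rw [isStack_bot_cons hz, List.append_nil]
      obtain ⟨β, h7, h8, -⟩ := hw2 h1
      exact ⟨β, h7, h8⟩
    · exact isStack_append (hw1 (by rw [h1]; simpa using hg)) (isStack_tail hz hg)
  · rw [((h6 j).2 hj)]
    exact isStack_append (hw1 (by rw [h3 j hj]; simp)) (hc j)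

theorem isStack_run {n : ℕ} {Q A Γ : Type} (M : MPA (n + 1) Q A Γ) (hM : M.WF)
    (hM' : M.NormalForm) {c c' : Q × (Fin (n + 1) → List Γ)}
    (hc : ∀ i, MPA.IsStack M.bot (c.2 i)) (h : ReflTransGen (OStep M.bot (ofMPA M)) c c') :
    (∀ i, MPA.IsStack M.bot (c'.2 i)) ∧ ReflTransGen M.StepAny c c' := by
  induction h with
  | refl => exact ⟨hc, .refl⟩
  | tail _ hs ih =>
    exact ⟨isStack_step M hM ih.1 hs, ih.2.tail ((stepAny_iff M hM' _ _).2 ⟨ih.1, hs⟩)⟩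

/-- Two copies of the states: every step leads to the copy `true`, so that reaching it from the
copy `false` takes at least one step. -/
def twoCopies {n : ℕ} {Q Γ : Type} (D : Rules n Q Γ) : Rules n (Q × Bool) Γ :=
  fun p i g r α => r.2 = true ∧ D p.1 i g r.1 α

/-- Forgetting the copy of a state. -/
def forget {n : ℕ} {Q Γ : Type} (d : (Q × Bool) × (Fin n → List Γ)) : Q × (Fin n → List Γ) :=
  (d.1.1, d.2)

theorem twoCopies_iff {n : ℕ} {Q Γ : Type} {b : Γ} {D : Rules n Q Γ}
    {d d' : (Q × Bool) × (Fin n → List Γ)} :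
    OStep b (twoCopies D) d d' ↔ d'.1.2 = true ∧ OStep b D (forget d) (forget d') := by
  constructor
  · rintro ⟨i, g, α, ⟨h1, h2⟩, h3⟩
    exact ⟨h1, i, g, α, h2, h3⟩
  · rintro ⟨h1, i, g, α, h2, h3⟩
    exact ⟨i, g, α, ⟨h1, h2⟩, h3⟩

/-! ### From automata with `ε`-transitions to layered automata -/

theorem evalRel_comp {X Γ : Type} (Δ : X → Option Γ → X → Prop) : Comp (EvalRel Δ) := by
  intro x u v z
  constructor
  · intro h
    generalize hw : u ++ v = w at h
    induction h generalizing u with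
    | refl q =>
      have h3 : u = [] ∧ v = [] := by simpa using hw
      obtain ⟨rfl, rfl⟩ := h3
      exact ⟨q, .refl q, .refl q⟩
    | @step q a q' w q'' h1 h2 ih =>
      cases a with
      | none =>
        obtain ⟨y, h3, h4⟩ := ih u (by simpa using hw)
        exact ⟨y, EvalRel.step (a := none) h1 h3, h4⟩
      | some a =>
        cases u with
        | nil =>
          refine ⟨q, .refl q, ?_⟩
          have hw' : v = (some a).toList ++ w := hw
          rw [hw']
          exact .step h1 h2
        | cons a' u =>
          have h3 : a' = a ∧ u ++ v = w := by simpa using hw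
          obtain ⟨rfl, h3⟩ := h3
          obtain ⟨y, h4, h5⟩ := ih u h3
          exact ⟨y, EvalRel.step (a := some a') h1 h4, h5⟩
  · rintro ⟨y, h1, h2⟩
    induction h1 with
    | refl => exact h2
    | step h3 _ ih =>
      rw [List.append_assoc]
      exact .step h3 (ih h2)

theorem flatten_ofFn_succ {Γ : Type} {n : ℕ} (w : Fin (n + 1) → List Γ) :
    (List.ofFn w).flatten = (List.ofFn (Fin.init w)).flatten ++ w (Fin.last n) := by
  rw [List.ofFn_succ', List.concat_eq_append, List.flatten_append]
  simp only [List.flatten_cons, List.flatten_nil, List.append_nil]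
  rfl

theorem evalRel_flatten {X Γ : Type} (Δ : X → Option Γ → X → Prop) (n : ℕ) (x f : X)
    (w : Fin n → List Γ) (v : List Γ) :
    EvalRel Δ x ((List.ofFn w).flatten ++ v) f ↔
      ∃ y, Acc (fun _ => EvalRel Δ) n x w y ∧ EvalRel Δ y v f := by
  induction n generalizing v with
  | zero => simp [Acc]
  | succ n ih =>
    rw [flatten_ofFn_succ, List.append_assoc, ih]
    simp only [Acc]
    constructor
    · rintro ⟨y, h1, h2⟩
      obtain ⟨z, h3, h4⟩ := (evalRel_comp Δ _ _ _ _).1 h2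
      exact ⟨z, ⟨y, h1, h3⟩, h4⟩
    · rintro ⟨z, ⟨y, h1, h3⟩, h4⟩
      exact ⟨y, h1, (evalRel_comp Δ _ _ _ _).2 ⟨z, h3, h4⟩⟩

/-- There has to be at least one stack here, as the layered automaton cannot perform the
`ε`-transitions if there is no word to be read. -/
theorem evalRel_ofFn {X Γ : Type} (Δ : X → Option Γ → X → Prop) (n : ℕ) (x f : X)
    (w : Fin (n + 1) → List Γ) :
    EvalRel Δ x (List.ofFn w).flatten f ↔ Acc (fun _ => EvalRel Δ) (n + 1) x w f := by
  rw [flatten_ofFn_succ, evalRel_flatten]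
  rfl

theorem prePlus_iff {n : ℕ} {Q A Γ S : Type} (M : MPA (n + 1) Q A Γ) (T : MAut Γ Q S)
    (hM : M.WF) (hM' : M.NormalForm) (c : Q × (Fin (n + 1) → List Γ)) :
    c ∈ prePlus M.StepAny {c | MAut.AcceptConf M T c} ↔
      (∀ i, MPA.IsStack M.bot (c.2 i)) ∧
      ∃ d, ReflTransGen (OStep M.bot (twoCopies (ofMPA M))) ((c.1, false), c.2) d ∧
        LAcc (fun _ => EvalRel T.Δ) (fun p x => p.2 = true ∧ x = .inl p.1) (fun x => x ∈ T.F)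
          d := by
  constructor
  · rintro ⟨c₁, h1, c', ⟨hst, f, hf, hev⟩, h2⟩
    obtain ⟨hc, h1⟩ := (stepAny_iff M hM' _ _).1 h1
    refine ⟨hc, ((c'.1, true), c'.2), ReflTransGen.head (b := ((c₁.1, true), c₁.2)) ?_ ?_, ?_⟩
    · exact twoCopies_iff.2 ⟨rfl, h1⟩
    · exact ReflTransGen.lift (fun c : Q × (Fin (n + 1) → List Γ) => ((c.1, true), c.2))
        (fun c c' h => twoCopies_iff.2 ⟨rfl, ((stepAny_iff M hM' c c').1 h).2⟩) _ _ h2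
    · exact ⟨_, f, ⟨rfl, rfl⟩, (evalRel_ofFn _ _ _ _ _).1 hev, hf⟩
  · rintro ⟨hc, d, hd, x, f, ⟨h1, rfl⟩, h2, hf⟩
    rcases ReflTransGen.cases_head hd with rfl | ⟨d₁, h3, h4⟩
    · exact absurd h1 (by simp)
    · have h3 := (twoCopies_iff.1 h3).2
      have hc₁ := isStack_step M hM hc h3
      have h5 : ReflTransGen (OStep M.bot (ofMPA M)) (forget d₁) (forget d) :=
        ReflTransGen.lift forget (fun _ _ h => (twoCopies_iff.1 h).2) _ _ h4
      have h6 := isStack_run M hM hM' hc₁ h5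
      exact ⟨forget d₁, (stepAny_iff M hM' _ _).2 ⟨hc, h3⟩, forget d,
        ⟨h6.1, f, hf, (evalRel_ofFn _ _ _ _ _).2 h2⟩, h6.2⟩

/-! ### From layered automata to automata -/

/-- Reading one letter in a layered automaton: the current layer is part of the state, and
reading `b` leads to the next layer. -/
def letter {Y Γ : Type} (n : ℕ) (b : Γ) (R : ℕ → Y → List Γ → Y → Prop)
    (p : Y × Fin (n + 2)) (a : Γ) (p' : Y × Fin (n + 2)) : Prop :=
  R p.2.val p.1 [a] p'.1 ∧ ((a = b ∧ p'.2.val = p.2.val + 1) ∨ (a ≠ b ∧ p'.2 = p.2))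

/-- The transitions of the automaton simulating a layered automaton on words in `((Γ ∖ b)* b)ⁿ⁺¹`;
the first letter is read from the state `q` as from the initial states assigned to `q`. -/
def flatΔ {Q Y Γ : Type} (n : ℕ) (b : Γ) (R : ℕ → Y → List Γ → Y → Prop) (ι : Q → Y → Prop) :
    Q ⊕ (Y × Fin (n + 2)) → Option Γ → Q ⊕ (Y × Fin (n + 2)) → Prop
  | .inl q, some a, .inr p' => ∃ y, ι q y ∧ letter n b R (y, 0) a p'
  | .inr p, some a, .inr p' => letter n b R p a p'
  | _, _, _ => False

section flat

variable {Q Y Γ : Type} (n : ℕ) (b : Γ) (R : ℕ → Y → List Γ → Y → Prop) (ι : Q → Y → Prop)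

theorem flatΔ_none (x y : Q ⊕ (Y × Fin (n + 2))) : ¬ flatΔ n b R ι x none y := by
  rcases x with q | p <;> rcases y with q' | p' <;> exact id

theorem flat_nil (x z : Q ⊕ (Y × Fin (n + 2))) : EvalRel (flatΔ n b R ι) x [] z ↔ x = z := by
  constructor
  · intro h
    generalize hw : ([] : List Γ) = w at h
    cases h with
    | refl => rfl
    | @step _ a _ _ _ h1 h2 =>
      cases a with
      | none => exact (flatΔ_none n b R ι _ _ h1).elim
      | some a => simp at hw
  · rintro rfl; exact .refl _

theorem flat_cons (x z : Q ⊕ (Y × Fin (n + 2))) (a : Γ) (w : List Γ) :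
    EvalRel (flatΔ n b R ι) x (a :: w) z ↔
      ∃ y, flatΔ n b R ι x (some a) y ∧ EvalRel (flatΔ n b R ι) y w z := by
  constructor
  · intro h
    generalize hw : a :: w = w' at h
    cases h with
    | refl => simp at hw
    | @step _ a' _ _ _ h1 h2 =>
      cases a' with
      | none => exact (flatΔ_none n b R ι _ _ h1).elim
      | some a' =>
        simp only [Option.toList_some, List.cons_append, List.nil_append, List.cons.injEq] at hw
        obtain ⟨rfl, rfl⟩ := hw
        exact ⟨_, h1, h2⟩
  · rintro ⟨y, h1, h2⟩
    exact EvalRel.step (a := some a) h1 h2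

theorem flat_stack (hR : ∀ k, Comp (R k)) (v : List Γ) (hv : b ∉ v) (y : Y) (k : Fin (n + 2))
    (z : Q ⊕ (Y × Fin (n + 2))) :
    EvalRel (flatΔ n b R ι) (.inr (y, k)) (v ++ [b]) z ↔
      ∃ y' k', z = .inr (y', k') ∧ k'.val = k.val + 1 ∧ R k.val y (v ++ [b]) y' := by
  induction v generalizing y with
  | nil =>
    simp only [List.nil_append, flat_cons, flat_nil]
    constructor
    · rintro ⟨y, h, rfl⟩
      rcases y with q | ⟨y', k'⟩
      · exact h.elim
      · rcases h with ⟨h1, ⟨-, h2⟩ | ⟨h2, -⟩⟩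
        · exact ⟨y', k', rfl, h2, h1⟩
        · exact absurd rfl h2
    · rintro ⟨y', k', rfl, h1, h2⟩
      exact ⟨.inr (y', k'), ⟨h2, Or.inl ⟨rfl, h1⟩⟩, rfl⟩
  | cons a v ih =>
    have ha : a ≠ b := fun h => hv (by simp [h])
    have hv' : b ∉ v := fun h => hv (List.mem_cons_of_mem _ h)
    have hsplit : ∀ y', R k.val y (a :: (v ++ [b])) y' ↔
        ∃ y₁, R k.val y [a] y₁ ∧ R k.val y₁ (v ++ [b]) y' := fun y' => hR k.val y [a] _ y'
    simp only [List.cons_append, flat_cons, hsplit]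
    constructor
    · rintro ⟨x, h, h'⟩
      rcases x with q | ⟨y₁, k₁⟩
      · exact h.elim
      · rcases h with ⟨h1, ⟨h2, -⟩ | ⟨-, h2⟩⟩
        · exact absurd h2 ha
        · simp only at h1 h2
          subst h2
          obtain ⟨y', k', rfl, h3, h4⟩ := (ih hv' y₁).1 h'
          exact ⟨y', k', rfl, h3, y₁, h1, h4⟩
    · rintro ⟨y', k', rfl, h3, y₁, h1, h4⟩
      exact ⟨.inr (y₁, k), ⟨h1, Or.inr ⟨ha, rfl⟩⟩, (ih hv' y₁).2 ⟨y', k', rfl, h3, h4⟩⟩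

theorem flat_tuple (hR : ∀ k, Comp (R k)) (m : ℕ) (w : Fin m → List Γ)
    (hw : ∀ i, MPA.IsStack b (w i)) (y : Y) (z : Q ⊕ (Y × Fin (n + 2))) :
    EvalRel (flatΔ n b R ι) (.inr (y, 0)) (List.ofFn w).flatten z ↔
      ∃ y' k', z = .inr (y', k') ∧ k'.val = m ∧ Acc R m y w y' := by
  induction m generalizing z with
  | zero =>
    simp only [List.ofFn_zero, List.flatten_nil, flat_nil, Acc]
    constructor
    · rintro rfl; exact ⟨y, 0, rfl, rfl, rfl⟩
    · rintro ⟨y', k', rfl, h1, rfl⟩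
      rw [show k' = 0 from Fin.ext h1]
  | succ m ih =>
    obtain ⟨v, hv, hbv⟩ := hw (Fin.last m)
    rw [flatten_ofFn_succ, evalRel_comp]
    simp only [ih (Fin.init w) fun i => hw i.castSucc, Acc]
    constructor
    · rintro ⟨_, ⟨y₁, k₁, rfl, h1, h2⟩, h3⟩
      rw [hv, flat_stack n b R ι hR v hbv] at h3
      obtain ⟨y', k', rfl, h4, h5⟩ := h3
      rw [← hv, h1] at h5
      exact ⟨y', k', rfl, by omega, y₁, h2, h5⟩
    · rintro ⟨y', k', rfl, h1, y₁, h2, h3⟩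
      refine ⟨_, ⟨y₁, ⟨m, by omega⟩, rfl, rfl, h2⟩, ?_⟩
      rw [hv, flat_stack n b R ι hR v hbv, ← hv]
      exact ⟨y', k', rfl, h1, h3⟩

/-- The automaton simulating a layered automaton. -/
def flat (F : Y → Prop) : MAut Γ Q (Y × Fin (n + 2)) where
  Δ := flatΔ n b R ι
  F := {z | ∃ y k, z = .inr (y, k) ∧ k.val = n + 1 ∧ F y}

end flat

theorem flat_accept {n : ℕ} {Q A Γ Y : Type} (M : MPA (n + 1) Q A Γ)
    (R : ℕ → Y → List Γ → Y → Prop) (hR : ∀ k, Comp (R k)) (ι : Q → Y → Prop) (F : Y → Prop)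
    (c : Q × (Fin (n + 1) → List Γ)) :
    MAut.AcceptConf M (flat n M.bot R ι F) c ↔
      (∀ i, MPA.IsStack M.bot (c.2 i)) ∧ LAcc R ι F c := by
  refine and_congr_right fun hc => ?_
  have hne : (List.ofFn c.2).flatten ≠ [] := by
    obtain ⟨v, hv, -⟩ := hc (Fin.last n)
    rw [flatten_ofFn_succ, hv]
    simp
  have hstart : ∀ z, EvalRel (flatΔ n M.bot R ι) (.inl c.1) (List.ofFn c.2).flatten z ↔
      ∃ y, ι c.1 y ∧ EvalRel (flatΔ n M.bot R ι) (.inr (y, 0)) (List.ofFn c.2).flatten z := by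
    intro z
    obtain ⟨a, w, haw⟩ := List.exists_cons_of_ne_nil hne
    simp only [haw, flat_cons]
    constructor
    · rintro ⟨x, h1, h2⟩
      rcases x with q | p
      · exact h1.elim
      · obtain ⟨y, h3, h4⟩ := h1
        exact ⟨y, h3, .inr p, h4, h2⟩
    · rintro ⟨y, h3, x, h4, h2⟩
      rcases x with q | p
      · exact h4.elim
      · exact ⟨.inr p, ⟨y, h3, h4⟩, h2⟩
  simp only [flat, hstart, flat_tuple n M.bot R ι hR (n + 1) c.2 hc]
  constructor
  · rintro ⟨_, ⟨f, k, rfl, -, hf⟩, y, h1, y', k', h2, -, h3⟩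
    simp only [Sum.inr.injEq, Prod.mk.injEq] at h2
    obtain ⟨rfl, -⟩ := h2
    exact ⟨y, f, h1, h3, hf⟩
  · rintro ⟨y, f, h1, h3, hf⟩
    exact ⟨_, ⟨f, ⟨n + 1, by omega⟩, rfl, rfl, hf⟩, y, h1, f, _, rfl, rfl, h3⟩

/-! ### The size of the automaton -/

theorem size_le {n : ℕ} {Q Γ S : Type} [Finite Q] [Finite Γ] [Finite S] (T : MAut Γ Q S)
    (N E : ℕ) (hN : 2 ≤ N) (hn : n + 2 ≤ N) (hQ : Nat.card Q ≤ N) (hΓ : Nat.card Γ + 1 ≤ N)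
    (hS : Nat.card S ≤ N ^ E * (n + 2)) : T.size ≤ N ^ (2 * E + 7) := by
  have hN1 : 1 ≤ N := by omega
  have hE : 1 ≤ N ^ E := Nat.one_le_pow _ _ hN1
  have h1 : Nat.card (Q ⊕ S) ≤ N ^ (E + 2) := by
    rw [Nat.card_sum]
    have h2 : Nat.card S ≤ N ^ E * N := hS.trans (Nat.mul_le_mul_left _ hn)
    have h3 : N ≤ N ^ E * N := Nat.le_mul_of_pos_left _ hE
    calc Nat.card Q + Nat.card S ≤ N ^ E * N * 2 := by omega
      _ ≤ N ^ E * N * N := Nat.mul_le_mul_left _ hN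
      _ = N ^ (E + 2) := by ring
  have h2 : Nat.card {t : (Q ⊕ S) × Option Γ × (Q ⊕ S) // T.Δ t.1 t.2.1 t.2.2} ≤
      N ^ (2 * E + 5) := by
    refine (Finite.card_subtype_le _).trans ?_
    rw [Nat.card_prod, Nat.card_prod, Finite.card_option]
    calc _ ≤ N ^ (E + 2) * (N * N ^ (E + 2)) :=
          Nat.mul_le_mul h1 (Nat.mul_le_mul hΓ h1)
      _ = N ^ (2 * E + 5) := by ring
  have h3 : N ^ (E + 2) ≤ N ^ (2 * E + 5) := Nat.pow_le_pow_right hN1 (by omega)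
  have h4 : N ≤ N ^ (2 * E + 5) := Nat.le_self_pow (by omega) N
  calc T.size ≤ N ^ (2 * E + 5) * 4 := by unfold MAut.size; omega
    _ ≤ N ^ (2 * E + 5) * (N * N) := Nat.mul_le_mul_left _ (by nlinarith)
    _ = N ^ (2 * E + 7) := by ring

theorem exponent_le (n : ℕ) : 2 * 5 ^ (n + 1) + 7 ≤ 2 ^ (6 * (n + 1)) := by
  rw [pow_mul]
  induction n with
  | zero => norm_num
  | succ n ih =>
    rw [pow_succ 5 (n + 1), pow_succ (2 ^ 6) (n + 1)]
    omega

end OMPA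

/-- There is a constant `d` such that for every ordered MPA `M` in normal
form and every `M`-automaton `A'`, some `M`-automaton `A` with
`|A| ≤ (|M|·|A'|)^{2^{d·n}}` recognizes exactly `Pre⁺_{T(M)}(L_M(A'))`. -/
theorem ompa_prePlus_recognizable :
    ∃ d : ℕ, 0 < d ∧
      ∀ (n : ℕ) (Q A Γ S : Type) (_ : Finite Q) (_ : Finite A) (_ : Finite Γ)
        (_ : Finite S) (M : MPA (n+1) Q A Γ) (T : MAut Γ Q S),
        M.WF → M.Ordered → M.NormalForm →
        ∃ (S' : Type) (_ : Finite S') (T' : MAut Γ Q S'),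
          T'.size ≤ (M.size * T.size) ^ 2 ^ (d * (n+1)) ∧
          {c | MAut.AcceptConf M T' c} =
            prePlus M.StepAny {c | MAut.AcceptConf M T c} := by
  refine ⟨6, by norm_num, ?_⟩
  intro n Q A Γ S _ _ _ _ M T hWF _ hNF
  have hQ : 1 ≤ Nat.card Q := Nat.card_pos_iff.2 ⟨⟨M.q0⟩, inferInstance⟩
  have hΓ : 2 ≤ Nat.card Γ :=
    have : Nontrivial Γ := ⟨M.γ0, M.bot, hWF.1⟩
    Finite.one_lt_card
  have hM : n + 1 + Nat.card Q + Nat.card Γ ≤ M.size := by unfold MPA.size; omega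
  have hT : Nat.card (Q ⊕ S) + Nat.card Γ ≤ T.size := by unfold MAut.size; omega
  have hQS : Nat.card Q ≤ Nat.card (Q ⊕ S) := by rw [Nat.card_sum]; omega
  have h1 : 2 * M.size ≤ M.size * T.size := by
    rw [mul_comm]; exact Nat.mul_le_mul_left _ (by omega)
  have h2 : T.size ≤ M.size * T.size := Nat.le_mul_of_pos_left _ (by omega)
  have h3 : Nat.card (Q × Bool) ≤ M.size * T.size := by
    rw [Nat.card_prod, Nat.card_eq_fintype_card (α := Bool), Fintype.card_bool]
    omega
  obtain ⟨Y, _, R, ι, F, hR, hcard, hiff⟩ := OMPA.layered_preStar (n + 1) (Q × Bool) (Q ⊕ S) Γ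
    inferInstance inferInstance M.bot (OMPA.twoCopies (OMPA.ofMPA M))
    (fun _ => EvalRel T.Δ) (fun _ => OMPA.evalRel_comp T.Δ)
    (fun p x => p.2 = true ∧ x = .inl p.1) (fun x => x ∈ T.F) (M.size * T.size)
    (by omega) h3
    (by omega)
  refine ⟨Y × Fin (n + 2), inferInstance,
    OMPA.flat n M.bot R (fun q => ι (q, false)) F, ?_, ?_⟩
  · refine (OMPA.size_le (n := n) _ (M.size * T.size) (5 ^ (n + 1)) (by omega) (by omega)
      (by omega) (by omega) ?_).trans (Nat.pow_le_pow_right (by omega) (OMPA.exponent_le n))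
    rw [Nat.card_prod, Nat.card_fin]
    exact Nat.mul_le_mul_right _ hcard
  · ext c
    rw [OMPA.prePlus_iff M T hWF hNF, Set.mem_ofPred_eq, OMPA.flat_accept M R hR]
    exact and_congr_right fun _ => hiff ((c.1, false), c.2)
end

section
/- There exists a constant d such that for every ordered multi-pushdown automaton M = (n,Q,Σ,Γ,Δ,q₀,γ₀,F) in normal form and every state q_f ∈ Q, there exists an M-automaton A with |A| ≤ |M|^{2^{d·n}} such that for every configuration c of M: c ∈ L_M(A) if and only if there is an infinite run of T(M) starting from c that visits the state q_f infinitely often. -/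
namespace OMPA

/-! ### Ordered systems with unrestricted rules -/

section Systems

variable {k : ℕ} {Q Γ : Type}

/-- Effect on the stacks of a rule with index `i`: pop the head of stack `i` (nothing if that
stack is empty) and push the word `α j` on every stack `j`. Stacks carry no bottom symbol. -/
def next (i : Fin k) (α v : Fin k → List Γ) : Fin k → List Γ :=
  fun j => α j ++ (if j = i then (v j).tail else v j)

/-- One step of the ordered system with rules `R`. A rule `R i q h q' α` applies in state `q` when
the stacks before `i` are empty and the head of stack `i` is `h`, with `h = none` for an empty
stack. -/
def AStep (R : Fin k → Q → Option Γ → Q → (Fin k → List Γ) → Prop)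
    (c c' : Q × (Fin k → List Γ)) : Prop :=
  ∃ i α, R i c.1 (c.2 i).head? c'.1 α ∧ (∀ j, j < i → c.2 j = []) ∧ c'.2 = next i α c.2

/-- Configurations from which the system `R` reaches a target: either a state of `E` with all
stacks empty, or a state `q` with `G q m h` where the stacks before `m` are empty and `h` is the
head of stack `m`. -/
inductive Reach (R : Fin k → Q → Option Γ → Q → (Fin k → List Γ) → Prop)
    (G : Q → Fin k → Option Γ → Prop) (E : Set Q) : Q → (Fin k → List Γ) → Prop
  | empty {q : Q} {v : Fin k → List Γ} : q ∈ E → (∀ j, v j = []) → Reach R G E q v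
  | head {q : Q} {v : Fin k → List Γ} (m : Fin k) :
      G q m (v m).head? → (∀ j, j < m → v j = []) → Reach R G E q v
  | step {q : Q} {v : Fin k → List Γ} (i : Fin k) (q' : Q) (α : Fin k → List Γ) :
      R i q (v i).head? q' α → (∀ j, j < i → v j = []) → Reach R G E q' (next i α v) →
      Reach R G E q v

/-- The stacks `v` followed by one further, last stack `w`. -/
def app (v : Fin k → List Γ) (w : List Γ) : Fin (k + 1) → List Γ :=
  Fin.snoc (α := fun _ => List Γ) v w

@[simp] lemma app_castSucc (v : Fin k → List Γ) (w : List Γ) (j : Fin k) :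
    app v w j.castSucc = v j := by simp [app]

@[simp] lemma app_last (v : Fin k → List Γ) (w : List Γ) : app v w (Fin.last k) = w := by
  simp [app]

lemma app_eta (u : Fin (k + 1) → List Γ) :
    app (fun j : Fin k => u j.castSucc) (u (Fin.last k)) = u := by
  funext j
  refine Fin.lastCases ?_ (fun j => ?_) j <;> simp

lemma next_castSucc (i : Fin k) (α : Fin (k + 1) → List Γ) (v : Fin k → List Γ) (w : List Γ) :
    next i.castSucc α (app v w)
      = app (next i (fun j => α j.castSucc) v) (α (Fin.last k) ++ w) := by
  funext j
  refine Fin.lastCases ?_ (fun j => ?_) j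
  · simp [next, (Fin.castSucc_lt_last i).ne']
  · simp [next]

lemma next_last (α : Fin (k + 1) → List Γ) (v : Fin k → List Γ) (w : List Γ) :
    next (Fin.last k) α (app v w)
      = app (fun j => α j.castSucc ++ v j) (α (Fin.last k) ++ w.tail) := by
  funext j
  refine Fin.lastCases ?_ (fun j => ?_) j
  · simp [next]
  · simp [next, (Fin.castSucc_lt_last j).ne]

lemma app_empty_of {v : Fin k → List Γ} {w : List Γ}
    (h : ∀ j, j < Fin.last k → app v w j = []) : v = fun _ => [] := by
  funext j
  simpa using h j.castSucc (Fin.castSucc_lt_last j)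

lemma app_lt_castSucc {v : Fin k → List Γ} {w : List Γ} {m : Fin k} :
    (∀ j, j < m.castSucc → app v w j = []) ↔ ∀ j, j < m → v j = [] := by
  constructor
  · intro h j hj
    simpa using h j.castSucc (by simpa using hj)
  · intro h j
    refine Fin.lastCases ?_ (fun j => ?_) j
    · intro hj
      exact absurd hj (not_lt.mpr (Fin.le_last _))
    · intro hj
      simpa using h j (by simpa using hj)

/-! ### Eliminating the last stack -/

variable {R : Fin (k + 1) → Q → Option Γ → Q → (Fin (k + 1) → List Γ) → Prop}
  {G : Q → Fin (k + 1) → Option Γ → Prop} {E : Set Q}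

/-- A run to the target from a last stack `x ++ w` either never depends on `w`, or first exposes
`w` with all other stacks empty in some state `q'`; in both cases `w` can be exchanged. -/
lemma Reach.split {q : Q} {u : Fin (k + 1) → List Γ} (h : Reach R G E q u) :
    ∀ (v : Fin k → List Γ) (x w : List Γ), u = app v (x ++ w) →
      (∀ w', Reach R G E q (app v (x ++ w'))) ∨
      ∃ q', Reach R G E q' (app (fun _ => []) w) ∧
        ∀ w', Reach R G E q' (app (fun _ => []) w') → Reach R G E q (app v (x ++ w')) := by
  induction h with
  | @empty q u hq hu =>
    rintro v x w rfl
    have hx : x ++ w = [] := by simpa using hu (Fin.last k)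
    obtain ⟨rfl, rfl⟩ := List.append_eq_nil_iff.mp hx
    obtain rfl := app_empty_of (fun j _ => hu j)
    exact Or.inr ⟨q, Reach.empty hq hu, fun w' h => h⟩
  | @head q u m hG hu =>
    rintro v x w rfl
    revert hG hu
    refine Fin.lastCases ?_ (fun m => ?_) m
    · intro hG hu
      obtain rfl := app_empty_of hu
      cases x with
      | nil => exact Or.inr ⟨q, Reach.head _ hG hu, fun w' h => h⟩
      | cons g x =>
        refine Or.inl fun w' => Reach.head (Fin.last k) (by simpa using hG) ?_
        intro j
        refine Fin.lastCases ?_ (fun j => ?_) j <;> simp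
    · intro hG hu
      refine Or.inl fun w' => Reach.head m.castSucc (by simpa using hG) ?_
      rw [app_lt_castSucc] at hu ⊢
      exact hu
  | @step q u i q' α hR hu hr ih =>
    rintro v x w rfl
    revert hR hu hr ih
    refine Fin.lastCases ?_ (fun i => ?_) i
    · intro hR hu hr ih
      obtain rfl := app_empty_of hu
      cases x with
      | nil => exact Or.inr ⟨q, Reach.step _ q' α hR hu hr, fun w' h => h⟩
      | cons g x =>
        have back : ∀ w', Reach R G E q'
            (app (fun j => α j.castSucc ++ []) ((α (Fin.last k) ++ x) ++ w')) →
            Reach R G E q (app (fun _ => []) (g :: x ++ w')) := by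
          intro w' h
          refine Reach.step (Fin.last k) q' α (by simpa using hR) ?_ ?_
          · intro j
            refine Fin.lastCases ?_ (fun j => ?_) j <;> simp
          · rw [next_last]
            simpa using h
        rcases ih (fun j => α j.castSucc ++ []) (α (Fin.last k) ++ x) w
          (by rw [next_last]; simp) with h | ⟨q'', h1, h2⟩
        · exact Or.inl fun w' => back w' (h w')
        · exact Or.inr ⟨q'', h1, fun w' hw => back w' (h2 w' hw)⟩
    · intro hR hu hr ih
      have back : ∀ w', Reach R G E q'
          (app (next i (fun j => α j.castSucc) v) ((α (Fin.last k) ++ x) ++ w')) →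
          Reach R G E q (app v (x ++ w')) := by
        intro w' h
        refine Reach.step i.castSucc q' α (by simpa using hR) ?_ ?_
        · rw [app_lt_castSucc] at hu ⊢
          exact hu
        · rw [next_castSucc]
          simpa using h
      rcases ih (next i (fun j => α j.castSucc) v) (α (Fin.last k) ++ x) w
        (by rw [next_castSucc]; simp) with h | ⟨q'', h1, h2⟩
      · exact Or.inl fun w' => back w' (h w')
      · exact Or.inr ⟨q'', h1, fun w' hw => back w' (h2 w' hw)⟩

/-- The language of last stack contents attached to a guess `p : Option Q`: everything for
`none`, and for `some q` the words `w` such that the target is reachable from state `q` with all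
other stacks empty. -/
def Lst (R : Fin (k + 1) → Q → Option Γ → Q → (Fin (k + 1) → List Γ) → Prop)
    (G : Q → Fin (k + 1) → Option Γ → Prop) (E : Set Q) : Option Q → List Γ → Prop
  | none, _ => True
  | some q, w => Reach R G E q (app (fun _ => []) w)

/-- The condition `∀ w', Lst p' w' → Lst p (x ++ w')` is a transition relation on `Option Q`
reading `x`; every word of `Lst p` can be read along it. -/
lemma Lst.split {p : Option Q} {x w : List Γ} (h : Lst R G E p (x ++ w)) :
    ∃ p', Lst R G E p' w ∧ ∀ w', Lst R G E p' w' → Lst R G E p (x ++ w') := by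
  cases p with
  | none => exact ⟨none, trivial, fun _ _ => trivial⟩
  | some q =>
    rcases Reach.split h _ x w rfl with h | ⟨q', h1, h2⟩
    · exact ⟨none, trivial, fun w' _ => h w'⟩
    · exact ⟨some q', h1, h2⟩

/-- Rules of the system in which the last stack is replaced by a guess `p` with the stack content
in `Lst p`. Pushing `a` on the last stack updates the guess; the rules popping from the last
stack disappear. -/
def RedR (R : Fin (k + 1) → Q → Option Γ → Q → (Fin (k + 1) → List Γ) → Prop)
    (G : Q → Fin (k + 1) → Option Γ → Prop) (E : Set Q) :
    Fin k → Q × Option Q → Option Γ → Q × Option Q → (Fin k → List Γ) → Prop :=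
  fun i c h c' α => ∃ a, R i.castSucc c.1 h c'.1 (app α a) ∧
    ∀ w, Lst R G E c.2 w → Lst R G E c'.2 (a ++ w)

/-- Head targets of the system without the last stack. -/
def RedG (G : Q → Fin (k + 1) → Option Γ → Prop) : Q × Option Q → Fin k → Option Γ → Prop :=
  fun c m h => G c.1 m.castSucc h

/-- Empty-stack targets of the system without the last stack: the guess ensures that the original
target is reachable once only the last stack is left. -/
def RedE (R : Fin (k + 1) → Q → Option Γ → Q → (Fin (k + 1) → List Γ) → Prop)
    (G : Q → Fin (k + 1) → Option Γ → Prop) (E : Set Q) : Set (Q × Option Q) :=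
  {c | ∀ w, Lst R G E c.2 w → Lst R G E (some c.1) w}

/-- Soundness of the elimination: a run of the reduced system from a correct guess lifts to the
original system, since its steps keep the guess correct. -/
lemma reach_of_red {c : Q × Option Q} {v : Fin k → List Γ}
    (h : Reach (RedR R G E) (RedG G) (RedE R G E) c v) :
    ∀ w, Lst R G E c.2 w → Reach R G E c.1 (app v w) := by
  induction h with
  | @empty c v hc hv =>
    intro w hw
    obtain rfl : v = fun _ => [] := funext hv
    exact hc w hw
  | @head c v m hG hv =>
    intro w _
    exact Reach.head m.castSucc (by simpa [RedG] using hG) (app_lt_castSucc.mpr hv)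
  | @step c v i c' α hR hv hr ih =>
    intro w hw
    obtain ⟨a, hR, ha⟩ := hR
    refine Reach.step i.castSucc c'.1 (app α a) (by simpa using hR) (app_lt_castSucc.mpr hv) ?_
    rw [next_castSucc]
    simpa using ih (a ++ w) (ha w hw)

/-- Completeness of the elimination: the guesses are chosen backwards along the run, by
`Lst.split`. -/
lemma red_of_reach {q : Q} {u : Fin (k + 1) → List Γ} (h : Reach R G E q u) :
    ∀ (v : Fin k → List Γ) (w : List Γ), u = app v w →
      ∃ p, Lst R G E p w ∧ Reach (RedR R G E) (RedG G) (RedE R G E) (q, p) v := by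
  -- Once the other stacks are empty, the guess `some q` is correct and already in the target.
  have base : ∀ (q : Q) (w : List Γ), Reach R G E q (app (fun _ => []) w) →
      ∃ p, Lst R G E p w ∧
        Reach (RedR R G E) (RedG G) (RedE R G E) (q, p) (fun _ => []) :=
    fun q w h => ⟨some q, h, Reach.empty (fun _ h => h) (fun _ => rfl)⟩
  induction h with
  | @empty q u hq hu =>
    rintro v w rfl
    obtain rfl := app_empty_of (fun j _ => hu j)
    exact base q w (Reach.empty hq hu)
  | @head q u m hG hu =>
    rintro v w rfl
    revert hG hu
    refine Fin.lastCases ?_ (fun m => ?_) m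
    · intro hG hu
      obtain rfl := app_empty_of hu
      exact base q w (Reach.head _ hG hu)
    · intro hG hu
      exact ⟨none, trivial, Reach.head m (by simpa [RedG] using hG) (app_lt_castSucc.mp hu)⟩
  | @step q u i q' α hR hu hr ih =>
    rintro v w rfl
    revert hR hu hr ih
    refine Fin.lastCases ?_ (fun i => ?_) i
    · intro hR hu hr _
      obtain rfl := app_empty_of hu
      exact base q w (Reach.step _ q' α hR hu hr)
    · intro hR hu hr ih
      obtain ⟨p', hp', hred⟩ := ih _ _ (next_castSucc i α v w)
      obtain ⟨p, hp, hpp⟩ := Lst.split hp'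
      refine ⟨p, hp, Reach.step i (q', p') (fun j => α j.castSucc) ⟨α (Fin.last k), ?_, hpp⟩
        (app_lt_castSucc.mp hu) hred⟩
      rw [app_eta]
      simpa using hR

/-- Elimination of the last stack: reachability of the target is reachability in the system with
one stack less, for some initial guess `p` that is correct for the content `w` of the last stack.
-/
lemma reach_app_iff {q : Q} {v : Fin k → List Γ} {w : List Γ} :
    Reach R G E q (app v w) ↔
      ∃ p, Lst R G E p w ∧ Reach (RedR R G E) (RedG G) (RedE R G E) (q, p) v :=
  ⟨fun h => red_of_reach h v w rfl, fun ⟨_, hp, h⟩ => reach_of_red h w hp⟩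

end Systems

/-! ### Automata for the predecessor sets -/

lemma evalRel_trans {S Γ : Type} {T : S → Option Γ → S → Prop} {s t r : S} {u w : List Γ}
    (h : EvalRel T s u t) (h' : EvalRel T t w r) : EvalRel T s (u ++ w) r := by
  induction h with
  | refl => simpa
  | step hs _ ih =>
    rw [List.append_assoc]
    exact EvalRel.step hs (ih h')

lemma evalRel_map {S S' Γ : Type} {T : S → Option Γ → S → Prop} {T' : S' → Option Γ → S' → Prop}
    (f : S → S') (hf : ∀ s a t, T s a t → T' (f s) a (f t)) {s t : S} {u : List Γ}
    (h : EvalRel T s u t) : EvalRel T' (f s) u (f t) := by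
  induction h with
  | refl => exact EvalRel.refl _
  | step hs _ ih => exact EvalRel.step (hf _ _ _ hs) ih

/-- The word coding a tuple of stacks: each stack is followed by the bottom symbol. -/
def enc {k : ℕ} {Γ : Type} (bot : Γ) (v : Fin k → List Γ) : List Γ :=
  (List.ofFn fun j => v j ++ [bot]).flatten

lemma enc_app {k : ℕ} {Γ : Type} (bot : Γ) (v : Fin k → List Γ) (w : List Γ) :
    enc bot (app v w) = enc bot v ++ (w ++ [bot]) := by
  unfold enc
  rw [List.ofFn_succ']
  simp [List.concat_eq_append]

lemma append_bot_inj {Γ : Type} {bot : Γ} : ∀ {u u' r r' : List Γ}, bot ∉ u → bot ∉ u' →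
    u ++ bot :: r = u' ++ bot :: r' → u = u' ∧ r = r'
  | [], [], _, _, _, _, h => by simpa using h
  | [], b :: u', _, _, _, h', h => by
    simp only [List.nil_append, List.cons_append, List.cons.injEq] at h
    exact absurd (by simp [h.1]) h'
  | a :: u, [], _, _, h', _, h => by
    simp only [List.nil_append, List.cons_append, List.cons.injEq] at h
    exact absurd (by simp [h.1]) h'
  | a :: u, b :: u', r, r', h1, h2, h => by
    simp only [List.cons_append, List.cons.injEq] at h
    have := append_bot_inj (fun hm => h1 (List.mem_cons_of_mem _ hm))
      (fun hm => h2 (List.mem_cons_of_mem _ hm)) h.2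
    simp [h.1, this.1, this.2]

lemma enc_inj {Γ : Type} {bot : Γ} : ∀ {k : ℕ} {v v' : Fin k → List Γ},
    (∀ j, bot ∉ v j) → (∀ j, bot ∉ v' j) → enc bot v = enc bot v' → v = v'
  | 0, _, _, _, _, _ => funext fun j => j.elim0
  | k + 1, v, v', h, h', he => by
    simp only [enc, List.ofFn_succ, List.flatten_cons, List.append_assoc, List.cons_append,
      List.nil_append] at he
    obtain ⟨h0, hr⟩ := append_bot_inj (h 0) (h' 0) he
    have := enc_inj (v := fun j : Fin k => v j.succ) (v' := fun j => v' j.succ)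
      (fun j => h _) (fun j => h' _) hr
    funext j
    refine Fin.cases h0 (fun j => ?_) j
    exact congrFun this j

/-- Sequential composition of an automaton `(T, F)`, run in parallel with a stored guess `p : P`,
with the automaton on `P` that recognises, from `p`, the words of `K p` followed by `bot`. The
state `Sum.inr none` is the accepting one. -/
inductive Glue {P S Γ : Type} (T : S → Option Γ → S → Prop) (F : Set S) (K : P → List Γ → Prop)
    (bot : Γ) : (P × S) ⊕ Option P → Option Γ → (P × S) ⊕ Option P → Prop
  | left {p : P} {s : S} {a : Option Γ} {s' : S} :
      T s a s' → Glue T F K bot (Sum.inl (p, s)) a (Sum.inl (p, s'))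
  | jump {p : P} {s : S} : s ∈ F → Glue T F K bot (Sum.inl (p, s)) none (Sum.inr (some p))
  | read {p : P} {g : Γ} {p' : P} : g ≠ bot → (∀ w, K p' w → K p (g :: w)) →
      Glue T F K bot (Sum.inr (some p)) (some g) (Sum.inr (some p'))
  | last {p : P} : K p [] → Glue T F K bot (Sum.inr (some p)) (some bot) (Sum.inr none)

section Glue

variable {P S Γ : Type} {T : S → Option Γ → S → Prop} {F : Set S} {K : P → List Γ → Prop}
  {bot : Γ}

lemma glue_done {w : List Γ} {s t : (P × S) ⊕ Option P} (h : EvalRel (Glue T F K bot) s w t)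
    (hs : s = Sum.inr none) : w = [] := by
  cases h with
  | refl => rfl
  | step h _ => subst hs; cases h

lemma glue_right {w : List Γ} {s t : (P × S) ⊕ Option P} (h : EvalRel (Glue T F K bot) s w t) :
    ∀ p, s = Sum.inr (some p) → t = Sum.inr none → ∃ u, w = u ++ [bot] ∧ bot ∉ u ∧ K p u := by
  induction h with
  | refl s =>
    rintro p rfl h
    simp at h
  | step hs hr ih =>
    rintro p rfl rfl
    cases hs with
    | read hg hK =>
      obtain ⟨u, rfl, hu, hKu⟩ := ih _ rfl rfl
      refine ⟨_ :: u, by simp, ?_, hK _ hKu⟩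
      simp only [List.mem_cons, not_or]
      exact ⟨hg.symm, hu⟩
    | last hK =>
      obtain rfl := glue_done hr rfl
      exact ⟨[], by simp, by simp, hK⟩

lemma glue_right_of (hK : ∀ p g w, K p (g :: w) → ∃ p', K p' w ∧ ∀ w', K p' w' → K p (g :: w')) :
    ∀ (u : List Γ) (p : P), bot ∉ u → K p u →
      EvalRel (Glue T F K bot) (Sum.inr (some p)) (u ++ [bot]) (Sum.inr none)
  | [], p, _, h => EvalRel.step (w := []) (Glue.last h) (EvalRel.refl _)
  | g :: u, p, hb, h => by
    obtain ⟨p', h1, h2⟩ := hK p g u h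
    simp only [List.mem_cons, not_or] at hb
    exact EvalRel.step (Glue.read (Ne.symm hb.1) h2) (glue_right_of hK u p' hb.2 h1)

lemma glue_left {w : List Γ} {s t : (P × S) ⊕ Option P} (h : EvalRel (Glue T F K bot) s w t) :
    ∀ p s', s = Sum.inl (p, s') → t = Sum.inr none → ∃ w₁ w₂, w = w₁ ++ w₂ ∧
      (∃ f ∈ F, EvalRel T s' w₁ f) ∧
      EvalRel (Glue T F K bot) (Sum.inr (some p)) w₂ (Sum.inr none) := by
  induction h with
  | refl s =>
    rintro p s' rfl h
    simp at h
  | step hs hr ih =>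
    rintro p s' rfl rfl
    cases hs with
    | left hT =>
      obtain ⟨w₁, w₂, rfl, ⟨f, hf, hw⟩, h2⟩ := ih _ _ rfl rfl
      exact ⟨_, w₂, (List.append_assoc _ _ _).symm, ⟨f, hf, EvalRel.step hT hw⟩, h2⟩
    | jump hF => exact ⟨[], _, rfl, ⟨_, hF, EvalRel.refl _⟩, hr⟩

lemma glue_left_of {p : P} {s f : S} {w₁ w₂ : List Γ} (hf : f ∈ F) (h₁ : EvalRel T s w₁ f)
    (h₂ : EvalRel (Glue T F K bot) (Sum.inr (some p)) w₂ (Sum.inr none)) :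
    EvalRel (Glue T F K bot) (Sum.inl (p, s)) (w₁ ++ w₂) (Sum.inr none) :=
  evalRel_trans (evalRel_map (fun s => Sum.inl (p, s)) (fun _ _ _ h => Glue.left h) h₁)
    (EvalRel.step (a := none) (Glue.jump hf) h₂)

end Glue

/-- Exponent of the state bound for `k` stacks: eliminating one stack roughly squares the number
of control states of the system, which doubles the exponent, and storing the guess costs a further
factor. -/
def expo : ℕ → ℕ
  | 0 => 1
  | k + 1 => 2 * expo k + 2

lemma expo_le (k : ℕ) : expo k + 2 ≤ 2 ^ (k + 2) := by
  induction k with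
  | zero => simp [expo]
  | succ k ih => rw [expo, pow_succ 2 (k + 2)]; omega

lemma card_step {x f e : ℕ} (hf : f ≤ (x * (x + 1) + 2) ^ e) :
    (x + 1) * f + (x + 2) ≤ (x + 2) ^ (2 * e + 2) := by
  have h1 : f ≤ (x + 2) ^ (2 * e) := by
    rw [pow_mul]
    exact hf.trans (Nat.pow_le_pow_left (by nlinarith) _)
  have h2 : 1 ≤ (x + 2) ^ (2 * e) := Nat.one_le_pow _ _ (by omega)
  rw [pow_add]
  generalize (x + 2) ^ (2 * e) = B at *
  nlinarith [Nat.mul_le_mul_left (x + 1) h1, Nat.mul_le_mul_left (x + 2) h2,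
    Nat.zero_le (x * B), Nat.zero_le (x * x * B)]

/-- The set of configurations from which a target is reachable is recognisable, by an automaton
whose number of states is polynomial in `|Q|` with an exponent that is exponential in the number
`k` of stacks. -/
theorem recognizable {Γ : Type} (bot : Γ) : ∀ (k : ℕ) (Q : Type) (_ : Finite Q)
    (R : Fin k → Q → Option Γ → Q → (Fin k → List Γ) → Prop)
    (G : Q → Fin k → Option Γ → Prop) (E : Set Q),
    ∃ (S : Type) (_ : Finite S) (T : S → Option Γ → S → Prop) (I : Q → Set S) (F : Set S),
      Nat.card S ≤ (Nat.card Q + 2) ^ expo k ∧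
      ∀ q w, (∃ s ∈ I q, ∃ f ∈ F, EvalRel T s w f) ↔
        ∃ v : Fin k → List Γ, (∀ j, bot ∉ v j) ∧ w = enc bot v ∧ Reach R G E q v
  | 0, Q, hQ, R, G, E => by
    refine ⟨Q, hQ, fun _ _ _ => False, fun q => {q}, E, by simp [expo], fun q w => ?_⟩
    constructor
    · rintro ⟨s, rfl, f, hf, h⟩
      cases h with
      | refl => exact ⟨fun _ => [], by simp, by simp [enc], Reach.empty hf (fun _ => rfl)⟩
      | step h _ => exact h.elim
    · rintro ⟨v, -, rfl, h⟩
      cases h with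
      | empty hq _ => exact ⟨q, rfl, q, hq, by simpa [enc] using EvalRel.refl q⟩
      | head m _ _ => exact m.elim0
      | step i _ _ _ _ _ => exact i.elim0
  | k + 1, Q, hQ, R, G, E => by
    obtain ⟨S, hS, T, I, F, hcard, hT⟩ := recognizable bot k (Q × Option Q) inferInstance
      (RedR R G E) (RedG G) (RedE R G E)
    refine ⟨(Option Q × S) ⊕ Option (Option Q), inferInstance, Glue T F (Lst R G E) bot,
      fun q => {s | ∃ p, ∃ s' ∈ I (q, p), s = Sum.inl (p, s')}, {Sum.inr none}, ?_, ?_⟩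
    · have := card_step (x := Nat.card Q) (e := expo k) (f := Nat.card S)
        (by simpa [Nat.card_prod, Finite.card_option] using hcard)
      simpa [Nat.card_sum, Nat.card_prod, Finite.card_option, expo] using this
    · intro q w
      constructor
      · rintro ⟨_, ⟨p, s, hs, rfl⟩, _, rfl, h⟩
        obtain ⟨w₁, w₂, rfl, h1, h2⟩ := glue_left h p s rfl rfl
        obtain ⟨u, rfl, hu, hK⟩ := glue_right h2 p rfl rfl
        obtain ⟨v, hv, rfl, hr⟩ := (hT (q, p) w₁).mp ⟨s, hs, h1⟩
        refine ⟨app v u, ?_, (enc_app bot v u).symm, reach_app_iff.mpr ⟨p, hK, hr⟩⟩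
        intro j
        refine Fin.lastCases ?_ (fun j => ?_) j
        · simpa using hu
        · simpa using hv j
      · rintro ⟨v, hv, rfl, hr⟩
        rw [← app_eta v] at hr ⊢
        obtain ⟨p, hp, hr⟩ := reach_app_iff.mp hr
        obtain ⟨s, hs, f, hf, he⟩ := (hT (q, p) _).mpr ⟨_, fun j => hv _, rfl, hr⟩
        refine ⟨_, ⟨p, s, hs, rfl⟩, _, rfl, ?_⟩
        rw [enc_app]
        refine glue_left_of hf he (glue_right_of ?_ _ p (hv _) hp)
        intro p g w h
        exact Lst.split (x := [g]) h

/-! ### Infinite runs -/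

/-- There is an infinite `r`-run from `c` that satisfies `p` infinitely often. -/
def InfRun {C : Type} (r : C → C → Prop) (p : C → Prop) (c : C) : Prop :=
  ∃ ρ : ℕ → C, ρ 0 = c ∧ (∀ k, r (ρ k) (ρ (k + 1))) ∧ ∀ N, ∃ k, N ≤ k ∧ p (ρ k)

section Runs

variable {C : Type} {r : C → C → Prop} {p : C → Prop}

lemma InfRun.cons {c c' : C} (h : r c c') (h' : InfRun r p c') : InfRun r p c := by
  obtain ⟨ρ, h0, h1, h2⟩ := h'
  refine ⟨fun k => Nat.casesOn k c ρ, rfl, ?_, ?_⟩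
  · rintro (_ | k)
    · simpa [h0] using h
    · exact h1 k
  · intro N
    obtain ⟨k, hk, hp⟩ := h2 N
    exact ⟨k + 1, by omega, hp⟩

/-- From a set `Y` in which every element `c` has a successor in `Y`, of smaller rank `N` unless
`p c` holds, there are infinite runs satisfying `p` infinitely often. -/
lemma infRun_of_rank (Y : Set C) (N : C → ℕ)
    (h : ∀ c ∈ Y, ∃ c' ∈ Y, r c c' ∧ (p c ∨ N c' < N c)) {c : C} (hc : c ∈ Y) :
    InfRun r p c := by
  choose! f hfY hfr hfN using h
  have hY : ∀ k, f^[k] c ∈ Y := by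
    intro k
    induction k with
    | zero => exact hc
    | succ k ih => rw [Function.iterate_succ_apply']; exact hfY _ ih
  refine ⟨fun k => f^[k] c, rfl, ?_, ?_⟩
  · intro k
    simp only [Function.iterate_succ_apply']
    exact hfr _ (hY k)
  · have key : ∀ m k, N (f^[k] c) = m → ∃ k', k ≤ k' ∧ p (f^[k'] c) := by
      intro m
      induction m using Nat.strong_induction_on with
      | _ m ih =>
        intro k hk
        rcases hfN _ (hY k) with hp | hlt
        · exact ⟨k, le_rfl, hp⟩
        · rw [← Function.iterate_succ_apply' f k c, hk] at hlt
          obtain ⟨k', hk', hp⟩ := ih _ hlt (k + 1) rfl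
          exact ⟨k', by omega, hp⟩
    exact fun k => key _ k rfl

/-- A set `X` from which one can always visit `p` and return to `X` in at least one step carries
infinite runs satisfying `p` infinitely often. The witnessing finite paths need not be
concatenated explicitly: the rank is the distance to the next useful visit of `p`. -/
lemma infRun_of_return (X : Set C)
    (h : ∀ c ∈ X, ∃ d, p d ∧ Relation.ReflTransGen r c d ∧ ∃ c' ∈ X, Relation.TransGen r d c')
    {c : C} (hc : c ∈ X) : InfRun r p c := by
  classical
  -- `D n` holds the elements with an `r`-path of length `n` to a visit of `p` that returns to `X`.
  let D : ℕ → Set C := fun n => Nat.rec {d | p d ∧ ∃ c' ∈ X, Relation.TransGen r d c'}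
    (fun _ A => {a | ∃ b ∈ A, r a b}) n
  have hD : ∀ {a d}, Relation.ReflTransGen r a d → d ∈ D 0 → ∃ n, a ∈ D n := by
    intro a d hr hd
    induction hr using Relation.ReflTransGen.head_induction_on with
    | refl => exact ⟨0, hd⟩
    | head hab _ ih =>
      obtain ⟨n, hn⟩ := ih
      exact ⟨n + 1, _, hn, hab⟩
  have hX : ∀ {a x}, Relation.ReflTransGen r a x → x ∈ X → ∃ n, a ∈ D n := by
    intro a x hr hx
    obtain ⟨d, hp, hxd, hret⟩ := h x hx
    exact hD (hr.trans hxd) ⟨hp, hret⟩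
  refine infRun_of_rank {a | ∃ n, a ∈ D n} (fun a => sInf {n | a ∈ D n}) ?_
    (hX Relation.ReflTransGen.refl hc)
  intro a ha
  have hmem : a ∈ D (sInf {n | a ∈ D n}) := Nat.sInf_mem (s := {n | a ∈ D n}) ha
  rcases hn : sInf {n | a ∈ D n} with _ | n
  · rw [hn] at hmem
    obtain ⟨hp, c', hc', hr⟩ := hmem
    obtain ⟨b, hab, hb⟩ := Relation.TransGen.head'_iff.mp hr
    exact ⟨b, hX hb hc', hab, Or.inl hp⟩
  · rw [hn] at hmem
    obtain ⟨b, hb, hab⟩ := hmem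
    refine ⟨b, ⟨n, hb⟩, hab, Or.inr ?_⟩
    have : sInf {n | b ∈ D n} ≤ n := Nat.sInf_le hb
    omega

end Runs

section Pumping

variable {k : ℕ} {Q Γ : Type}

/-- The stacks before `m` agree, and the stacks `m` differ only in the suffixes `w`, `w'`; the
stacks after `m` are unconstrained. -/
def Sim (m : Fin k) (w w' : List Γ) (v v' : Fin k → List Γ) : Prop :=
  (∀ j, j < m → v j = v' j) ∧ ∃ x, v m = x ++ w ∧ v' m = x ++ w'

lemma Sim.head {m : Fin k} {w w' : List Γ} {v v' : Fin k → List Γ} (h : Sim m w w' v v')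
    (hl : w.length < (v m).length ∨ (w = [] ∧ w' = [])) :
    (v m).head? = (v' m).head? ∧ Sim m w w' (next m (fun _ => []) v) (next m (fun _ => []) v') := by
  obtain ⟨h1, x, hx, hx'⟩ := h
  rcases hl with hl | ⟨rfl, rfl⟩
  · cases x with
    | nil => simp [hx] at hl
    | cons g x =>
      refine ⟨by simp [hx, hx'], fun j hj => ?_, x, ?_, ?_⟩
      · simp [next, hj.ne, h1 j hj]
      · simp [next, hx]
      · simp [next, hx']
  · refine ⟨by simp [hx, hx'], fun j hj => ?_, x.tail, ?_, ?_⟩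
    · simp [next, hj.ne, h1 j hj]
    · simp [next, hx]
    · simp [next, hx']

lemma Sim.push {m : Fin k} {w w' : List Γ} {v v' : Fin k → List Γ} (i : Fin k)
    (α : Fin k → List Γ) (h : Sim m w w' (next i (fun _ => []) v) (next i (fun _ => []) v')) :
    Sim m w w' (next i α v) (next i α v') := by
  obtain ⟨h1, x, hx, hx'⟩ := h
  refine ⟨fun j hj => ?_, α m ++ x, ?_, ?_⟩
  · have := h1 j hj
    simp only [next, List.nil_append] at this
    simp only [next, this]
  · simp only [next] at hx ⊢
    rw [List.append_assoc, ← hx]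
    rfl
  · simp only [next] at hx' ⊢
    rw [List.append_assoc, ← hx']
    rfl

/-- A step with index at most `m` that, if it pops from stack `m`, does not pop from the suffix
`w`, can be copied in a similar configuration. -/
lemma Sim.step {R : Fin k → Q → Option Γ → Q → (Fin k → List Γ) → Prop} {m i : Fin k}
    {w w' : List Γ} {v v' : Fin k → List Γ} {q q' : Q} {α : Fin k → List Γ}
    (h : Sim m w w' v v') (him : i ≤ m)
    (hl : i = m → w.length < (v m).length ∨ (w = [] ∧ w' = []))
    (hR : R i q (v i).head? q' α) (he : ∀ j, j < i → v j = []) :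
    AStep R (q, v') (q', next i α v') ∧ Sim m w w' (next i α v) (next i α v') := by
  have hhead : (v i).head? = (v' i).head? ∧
      Sim m w w' (next i (fun _ => []) v) (next i (fun _ => []) v') := by
    rcases him.lt_or_eq with hlt | rfl
    · refine ⟨by rw [h.1 i hlt], fun j hj => by simp [next, h.1 j hj], ?_⟩
      simpa [next, hlt.ne'] using h.2
    · exact h.head (hl rfl)
  refine ⟨⟨i, α, ?_, ?_, rfl⟩, hhead.2.push i α⟩
  · rw [← hhead.1]
    exact hR
  · intro j hj
    change v' j = []
    rw [← h.1 j (hj.trans_le him)]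
    exact he j hj

end Pumping

section Good

variable {k : ℕ} {Q Γ : Type} {R : Fin k → Q → Option Γ → Q → (Fin k → List Γ) → Prop}
  {p : Q → Prop}

/-- A head `(q, m, h)` is good when every configuration exhibiting it (state `q`, stacks before
`m` empty, stack `m` with head `h`) has an infinite run visiting `p` infinitely often. -/
def Good (R : Fin k → Q → Option Γ → Q → (Fin k → List Γ) → Prop) (p : Q → Prop)
    (q : Q) (m : Fin k) (h : Option Γ) : Prop :=
  ∀ v : Fin k → List Γ, (∀ j, j < m → v j = []) → (v m).head? = h →
    InfRun (AStep R) (fun c => p c.1) (q, v)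

/-- If a run segment starts and ends with the same head of stack `m`, visits `p` in between, uses
only indices at most `m`, and at its pops from stack `m` that stack is never lower than at the
start, then it can be repeated forever from every configuration with that head. -/
lemma good_of_segment {ρ : ℕ → Q × (Fin k → List Γ)} {ι : ℕ → Fin k} {α : ℕ → Fin k → List Γ}
    {m : Fin k} {s t u : ℕ}
    (hR : ∀ τ, R (ι τ) (ρ τ).1 ((ρ τ).2 (ι τ)).head? (ρ (τ + 1)).1 (α τ))
    (he : ∀ τ j, j < ι τ → (ρ τ).2 j = [])
    (hn : ∀ τ, (ρ (τ + 1)).2 = next (ι τ) (α τ) (ρ τ).2)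
    (hm : ∀ τ, s ≤ τ → ι τ ≤ m)
    (hlow : ∀ τ, s ≤ τ → ι τ = m → ((ρ s).2 m).length ≤ ((ρ τ).2 m).length)
    (hs : ι s = m) (ht : ι t = m) (hsu : s ≤ u) (hut : u < t) (hu : p (ρ u).1)
    (hq : (ρ t).1 = (ρ s).1) (hh : ((ρ t).2 m).head? = ((ρ s).2 m).head?) :
    Good R p (ρ s).1 m ((ρ s).2 m).head? := by
  intro v hv hvh
  refine infRun_of_return
    {c | c.1 = (ρ s).1 ∧ (∀ j, j < m → c.2 j = []) ∧ (c.2 m).head? = ((ρ s).2 m).head?} ?_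
    ⟨rfl, hv, hvh⟩
  rintro ⟨q, v'⟩ ⟨rfl, hv0, hvh'⟩
  simp only at hv0 hvh'
  set w := ((ρ s).2 m).tail with hw
  set w' := (v' m).tail with hw'
  have hl : ∀ τ, s ≤ τ → ι τ = m →
      w.length < ((ρ τ).2 m).length ∨ (w = [] ∧ w' = []) := by
    intro τ hτ hι
    have := hlow τ hτ hι
    rcases hcs : (ρ s).2 m with _ | ⟨g, x⟩
    · right
      rw [hcs] at hvh'
      simp only [List.head?_nil, List.head?_eq_none_iff] at hvh'
      simp [hw, hw', hcs, hvh']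
    · left
      simp only [hcs, List.length_cons] at this
      simp only [hw, hcs, List.tail_cons]
      omega
  have hsim0 : Sim m w w' (ρ s).2 v' := by
    refine ⟨fun j hj => ?_, ((ρ s).2 m).head?.toList, ?_, ?_⟩
    · rw [hv0 j hj, he s j (hs ▸ hj)]
    · rcases hcs : (ρ s).2 m with _ | ⟨g, x⟩ <;> simp [hw, hcs]
    · rw [← hvh']
      rcases hcs : v' m with _ | ⟨g, x⟩ <;> simp [hw', hcs]
  have hstep : ∀ τ y, s ≤ τ → Sim m w w' (ρ τ).2 y →
      ∃ y', AStep R ((ρ τ).1, y) ((ρ (τ + 1)).1, y') ∧ Sim m w w' (ρ (τ + 1)).2 y' := by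
    intro τ y hτ hy
    have := hy.step (hm τ hτ) (hl τ hτ) (hR τ) (he τ)
    rw [← hn τ] at this
    exact ⟨_, this⟩
  have hpath : ∀ a y, s ≤ a → Sim m w w' (ρ a).2 y → ∀ b, a ≤ b →
      ∃ y', Relation.ReflTransGen (AStep R) ((ρ a).1, y) ((ρ b).1, y') ∧
        Sim m w w' (ρ b).2 y' := by
    intro a y ha hy b hb
    induction b, hb using Nat.le_induction with
    | base => exact ⟨y, Relation.ReflTransGen.refl, hy⟩
    | succ b hab ih =>
      obtain ⟨y', h1, h2⟩ := ih
      obtain ⟨y'', h3, h4⟩ := hstep b y' (ha.trans hab) h2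
      exact ⟨y'', h1.tail h3, h4⟩
  obtain ⟨y, hy, hySim⟩ := hpath s v' le_rfl hsim0 u hsu
  obtain ⟨z, hz, hzSim⟩ := hstep u y hsu hySim
  obtain ⟨y', hy', hySim'⟩ := hpath (u + 1) z (by omega) hzSim t hut
  refine ⟨((ρ u).1, y), hu, hy, ((ρ t).1, y'), ⟨hq, ?_, ?_⟩, Relation.TransGen.head' hz hy'⟩
  · intro j hj
    change y' j = []
    rw [← hySim'.1 j hj]
    exact he t j (ht ▸ hj)
  · rw [← (hySim'.head (hl t (by omega) ht)).1]
    exact hh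

/-- The infinite pigeonhole principle for a property holding at infinitely many times. -/
lemma frequently_fiber {X : Type} [Finite X] {P : ℕ → Prop} (f : ℕ → X)
    (h : ∃ᶠ τ in Filter.atTop, P τ) : ∃ x, ∃ᶠ τ in Filter.atTop, P τ ∧ f τ = x := by
  by_contra hne
  push Not at hne
  refine h ?_
  filter_upwards [Filter.eventually_all.mpr hne] with τ hτ hP
  exact hτ (f τ) hP rfl

/-- Every infinite run visiting `p` infinitely often passes through a good head. -/
lemma exists_good [Finite Q] [Finite Γ] {ρ : ℕ → Q × (Fin k → List Γ)}
    (hρ : ∀ τ, AStep R (ρ τ) (ρ (τ + 1))) (hp : ∀ N, ∃ τ, N ≤ τ ∧ p (ρ τ).1) :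
    ∃ τ m, (∀ j, j < m → (ρ τ).2 j = []) ∧ Good R p (ρ τ).1 m ((ρ τ).2 m).head? := by
  choose ι α hR he hn using hρ
  -- `m` is the largest index used infinitely often.
  let J : Set (Fin k) := {i | ∃ᶠ τ in Filter.atTop, ι τ = i}
  have hJ : J.Nonempty := by
    obtain ⟨i, hi⟩ := frequently_fiber ι (Filter.Frequently.of_forall fun _ => trivial)
    exact ⟨i, hi.mono fun _ h => h.2⟩
  obtain ⟨m, hmJ, hmax⟩ := Set.exists_max_image J id J.toFinite hJ
  have hev : ∀ᶠ τ in Filter.atTop, ι τ ≤ m := by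
    have hall : ∀ i, ∀ᶠ τ in Filter.atTop, m < i → ι τ ≠ i := by
      intro i
      by_cases hi : m < i
      · have : i ∉ J := fun h => absurd (hmax i h) (not_le.mpr hi)
        filter_upwards [Filter.not_frequently.mp this] with τ hτ _ using hτ
      · exact Filter.Eventually.of_forall fun _ h => absurd h hi
    filter_upwards [Filter.eventually_all.mpr hall] with τ hτ
    by_contra hlt
    exact hτ _ (not_le.mp hlt) rfl
  obtain ⟨T, hT⟩ := Filter.eventually_atTop.mp hev
  -- At infinitely many pops from stack `m`, that stack is at its lowest for all later pops.
  let L : Set ℕ := {τ | T ≤ τ ∧ ι τ = m ∧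
    ∀ τ', τ ≤ τ' → ι τ' = m → ((ρ τ).2 m).length ≤ ((ρ τ').2 m).length}
  have hL : ∀ N, ∃ τ, N ≤ τ ∧ τ ∈ L := by
    intro N
    have hne : {τ | max N T ≤ τ ∧ ι τ = m}.Nonempty := by
      obtain ⟨τ, h1, h2⟩ := Filter.frequently_atTop.mp hmJ (max N T)
      exact ⟨τ, h1, h2⟩
    obtain ⟨τ, hmem, hmin⟩ : ∃ τ ∈ {τ | max N T ≤ τ ∧ ι τ = m},
        ∀ τ' ∈ {τ | max N T ≤ τ ∧ ι τ = m}, ((ρ τ).2 m).length ≤ ((ρ τ').2 m).length :=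
      ⟨_, Function.argminOn_mem (fun τ => ((ρ τ).2 m).length) _ hne,
        fun τ' h => Function.argminOn_le (fun τ => ((ρ τ).2 m).length) _ h⟩
    refine ⟨_, (le_max_left _ _).trans hmem.1, (le_max_right _ _).trans hmem.1, hmem.2, ?_⟩
    intro τ' h1 h2
    exact hmin τ' ⟨hmem.1.trans h1, h2⟩
  -- Infinitely many of these times share the state and the head of stack `m`.
  obtain ⟨x, hx⟩ := frequently_fiber (fun τ => ((ρ τ).1, ((ρ τ).2 m).head?))
    (Filter.frequently_atTop.mpr fun N => (hL N).imp fun _ h => h)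
  rw [Filter.frequently_atTop] at hx
  obtain ⟨s, -, ⟨hsT, hsm, hslow⟩, hsx⟩ := hx 0
  obtain ⟨u, hsu, hu⟩ := hp s
  obtain ⟨t, hut, ⟨-, htm, -⟩, htx⟩ := hx (u + 1)
  have heq := htx.trans hsx.symm
  simp only [Prod.mk.injEq] at heq
  exact ⟨s, m, fun j hj => he s j (hsm ▸ hj),
    good_of_segment hR he hn (fun τ hτ => hT τ (hsT.trans hτ)) hslow hsm htm hsu (by omega) hu
      heq.1 heq.2⟩

/-- Repeated reachability of `p` is plain reachability of a good head. -/
theorem infRun_iff_reach [Finite Q] [Finite Γ] (q : Q) (v : Fin k → List Γ) :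
    InfRun (AStep R) (fun c => p c.1) (q, v) ↔ Reach R (Good R p) ∅ q v := by
  constructor
  · rintro ⟨ρ, h0, h1, h2⟩
    obtain ⟨τ, m, he, hg⟩ := exists_good h1 h2
    have : ∀ d, d ≤ τ → Reach R (Good R p) ∅ (ρ (τ - d)).1 (ρ (τ - d)).2 := by
      intro d hd
      induction d with
      | zero => exact Reach.head m hg he
      | succ d ih =>
        obtain ⟨i, α, hR, hi, hn⟩ := h1 (τ - (d + 1))
        refine Reach.step i _ α hR hi ?_
        rw [← hn, show τ - (d + 1) + 1 = τ - d by omega]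
        exact ih (by omega)
    simpa [h0] using this τ le_rfl
  · intro h
    induction h with
    | empty hq _ => exact absurd hq (Set.notMem_empty _)
    | head m hG hv => exact hG _ hv rfl
    | step i q' α hR hv _ ih => exact InfRun.cons ⟨i, α, hR, hv, rfl⟩ ih

end Good

/-! ### From multi-pushdown automata to ordered systems -/

section Translation

variable {k : ℕ} {Q A Γ : Type}

/-- Stack contents with the bottom symbol restored. -/
def str (bot : Γ) (v : Fin k → List Γ) : Fin k → List Γ := fun j => v j ++ [bot]

/-- The rules of the ordered system of `M`, on stacks without bottom symbol: those whose
application is a step of `M` in every configuration to which they apply. The system may have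
infinitely many rules; only its state set and alphabet need to be finite. -/
def MRule (M : MPA k Q A Γ) : Fin k → Q → Option Γ → Q → (Fin k → List Γ) → Prop :=
  fun i q h q' α => (∀ j, M.bot ∉ α j) ∧
    ∀ v : Fin k → List Γ, (∀ j, M.bot ∉ v j) → (∀ j, j < i → v j = []) → (v i).head? = h →
      M.StepAny (q, str M.bot v) (q', str M.bot (next i α v))

lemma isStack_append_s19 {bot : Γ} {v : List Γ} (h : bot ∉ v) : MPA.IsStack bot (v ++ [bot]) :=
  ⟨v, rfl, h⟩

lemma next_notMem {bot : Γ} {i : Fin k} {α v : Fin k → List Γ} (hα : ∀ j, bot ∉ α j)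
    (hv : ∀ j, bot ∉ v j) : ∀ j, bot ∉ next i α v j := by
  intro j
  simp only [next, List.mem_append, not_or]
  refine ⟨hα j, ?_⟩
  split_ifs
  · exact fun h => hv j (List.mem_of_mem_tail h)
  · exact hv j

/-- Each step of `M` is the application of a rule of the ordered system. -/
lemma rule_of_step {M : MPA k Q A Γ} (hW : M.WF)
    (hN : ∀ q γ a q' α, M.Δ q γ a q' α → ∃ i g, γ i = some g ∧
      (∀ j, j < i → γ j = some M.bot) ∧ (∀ j, i < j → γ j = none))
    {q : Q} {v : Fin k → List Γ} (hv : ∀ j, M.bot ∉ v j) {c : Q × (Fin k → List Γ)}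
    (h : M.StepAny (q, str M.bot v) c) :
    ∃ v', (∀ j, M.bot ∉ v' j) ∧ c.2 = str M.bot v' ∧ AStep (MRule M) (q, v) (c.1, v') := by
  classical
  obtain ⟨a, γ, α, w, hΔ, hst⟩ := h
  obtain ⟨i, g, hi, hlt, hgt⟩ := hN _ _ _ _ _ hΔ
  have hWα := hW.2 _ _ _ _ _ hΔ
  -- The pushed words with a restored bottom symbol removed.
  let β : Fin k → List Γ := fun j => if γ j = some M.bot then (α j).dropLast else α j
  have hβ : ∀ j, M.bot ∉ β j := by
    intro j
    by_cases hj : γ j = some M.bot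
    · obtain ⟨δ, hδ, hb, -⟩ := (hWα j).2.2 hj
      simpa [β, hj, hδ] using hb
    · simpa [β, hj] using (hWα j).2.1 hj
  have core : ∀ u : Fin k → List Γ, (∀ j, j < i → u j = []) →
      (u i).head? = (if g = M.bot then none else some g) → ∀ j, ∃ w₀,
        str M.bot u j = (γ j).toList ++ w₀ ∧ str M.bot (next i β u) j = α j ++ w₀ := by
    intro u hu hui j
    have hbot : γ j = some M.bot → u j = [] → ∃ w₀,
        str M.bot u j = (γ j).toList ++ w₀ ∧ str M.bot (next i β u) j = α j ++ w₀ := by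
      intro hγ hj
      obtain ⟨δ, hδ, -, -⟩ := (hWα j).2.2 hγ
      exact ⟨[], by simp [str, hγ, hj], by simp [str, next, β, hγ, hj, hδ]⟩
    rcases lt_trichotomy j i with hji | rfl | hij
    · exact hbot (hlt j hji) (hu j hji)
    · by_cases hg : g = M.bot
      · subst hg
        exact hbot hi (by simpa using hui)
      · rw [if_neg hg] at hui
        obtain ⟨t, ht⟩ := List.head?_eq_some_iff.mp hui
        exact ⟨t ++ [M.bot], by simp [str, hi, ht], by simp [str, next, β, hi, hg, ht]⟩
    · exact ⟨u j ++ [M.bot], by simp [str, hgt j hij],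
        by simp [str, next, β, hgt j hij, hij.ne']⟩
  have hv0 : ∀ j, j < i → v j = [] := by
    intro j hj
    have h1 := (hst j).1
    simp only [str, hlt j hj, Option.toList_some, List.singleton_append] at h1
    rcases hvj : v j with _ | ⟨b, t⟩
    · rfl
    · rw [hvj, List.cons_append, List.cons.injEq] at h1
      exact absurd (by simp [hvj, h1.1]) (hv j)
  have hvi : (v i).head? = (if g = M.bot then none else some g) := by
    have h1 := (hst i).1
    simp only [str, hi, Option.toList_some, List.singleton_append] at h1
    rcases hvj : v i with _ | ⟨b, t⟩
    · rw [hvj, List.nil_append, List.cons.injEq] at h1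
      simp [h1.1]
    · rw [hvj, List.cons_append, List.cons.injEq] at h1
      have hb : g ≠ M.bot := by
        rintro rfl
        exact hv i (by simp [hvj, h1.1])
      simp [hb, h1.1]
  refine ⟨next i β v, next_notMem hβ hv, ?_, i, β, ⟨hβ, ?_⟩, hv0, rfl⟩
  · funext j
    obtain ⟨w₀, h1, h2⟩ := core v hv0 hvi j
    rw [h2, (hst j).2.1, List.append_cancel_left ((hst j).1.symm.trans h1)]
  · intro u hu hu0 hui
    choose w₀ h1 h2 using core u hu0 (hui.trans hvi)
    exact ⟨a, γ, α, w₀, hΔ, fun j => ⟨h1 j, h2 j, isStack_append_s19 (hu j)⟩⟩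

/-- The infinite runs of `M` are those of its ordered system, with bottom symbols restored. -/
lemma infRun_str {M : MPA k Q A Γ} (hW : M.WF)
    (hN : ∀ q γ a q' α, M.Δ q γ a q' α → ∃ i g, γ i = some g ∧
      (∀ j, j < i → γ j = some M.bot) ∧ (∀ j, i < j → γ j = none))
    {p : Q → Prop} {q : Q} {v : Fin k → List Γ} (hv : ∀ j, M.bot ∉ v j) :
    InfRun M.StepAny (fun c => p c.1) (q, str M.bot v) ↔
      InfRun (AStep (MRule M)) (fun c => p c.1) (q, v) := by
  constructor
  · rintro ⟨ρ, h0, h1, h2⟩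
    let σ : ℕ → Q × (Fin k → List Γ) := fun τ => ((ρ τ).1, fun j => ((ρ τ).2 j).dropLast)
    have hstep : ∀ τ, (∀ j, M.bot ∉ (σ τ).2 j) → (ρ τ).2 = str M.bot (σ τ).2 →
        ((∀ j, M.bot ∉ (σ (τ + 1)).2 j) ∧ (ρ (τ + 1)).2 = str M.bot (σ (τ + 1)).2) ∧
          AStep (MRule M) (σ τ) (σ (τ + 1)) := by
      intro τ ha hb
      have hs := h1 τ
      rw [show ρ τ = ((σ τ).1, str M.bot (σ τ).2) from Prod.ext rfl hb] at hs
      obtain ⟨v', hv', he, hA⟩ := rule_of_step hW hN ha hs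
      have hσ : σ (τ + 1) = ((ρ (τ + 1)).1, v') := by
        refine Prod.ext rfl ?_
        funext j
        simp [σ, he, str]
      rw [hσ]
      exact ⟨⟨hv', he⟩, hA⟩
    have hσ0 : σ 0 = (q, v) := by
      refine Prod.ext (by simp [σ, h0]) ?_
      funext j
      simp [σ, h0, str]
    have hinv : ∀ τ, (∀ j, M.bot ∉ (σ τ).2 j) ∧ (ρ τ).2 = str M.bot (σ τ).2 := by
      intro τ
      induction τ with
      | zero => rw [hσ0, h0]; exact ⟨hv, rfl⟩
      | succ τ ih => exact (hstep τ ih.1 ih.2).1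
    exact ⟨σ, hσ0, fun τ => (hstep τ (hinv τ).1 (hinv τ).2).2, h2⟩
  · rintro ⟨ρ, h0, h1, h2⟩
    have hinv : ∀ τ j, M.bot ∉ (ρ τ).2 j := by
      intro τ
      induction τ with
      | zero => rw [h0]; exact hv
      | succ τ ih =>
        obtain ⟨i, α, hR, -, hn⟩ := h1 τ
        rw [hn]
        exact next_notMem hR.1 ih
    refine ⟨fun τ => ((ρ τ).1, str M.bot (ρ τ).2), by simp [h0], fun τ => ?_, h2⟩
    obtain ⟨i, α, hR, he, hn⟩ := h1 τ
    have := hR.2 _ (hinv τ) he rfl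
    rw [← hn] at this
    exact this

end Translation

/-! ### The `M`-automaton and its size -/

/-- Transitions of the automaton on `Q ⊕ S` obtained from `T` by adding `ε`-transitions from each
`q` to the states of `I q`. -/
inductive InitStep {Q S Γ : Type} (T : S → Option Γ → S → Prop) (I : Q → Set S) :
    Q ⊕ S → Option Γ → Q ⊕ S → Prop
  | start {q : Q} {s : S} : s ∈ I q → InitStep T I (Sum.inl q) none (Sum.inr s)
  | lift {s : S} {a : Option Γ} {s' : S} : T s a s' → InitStep T I (Sum.inr s) a (Sum.inr s')

section InitStep

variable {Q S Γ : Type} {T : S → Option Γ → S → Prop} {I : Q → Set S}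

lemma initStep_right {s t : Q ⊕ S} {w : List Γ} (h : EvalRel (InitStep T I) s w t) :
    ∀ s' f, s = Sum.inr s' → t = Sum.inr f → EvalRel T s' w f := by
  induction h with
  | refl s =>
    rintro s' f rfl h
    obtain rfl := Sum.inr_injective h
    exact EvalRel.refl _
  | step hs _ ih =>
    rintro s' f rfl rfl
    cases hs with
    | lift hT => exact EvalRel.step hT (ih _ _ rfl rfl)

lemma initStep_iff {q : Q} {w : List Γ} {F : Set S} :
    (∃ f ∈ Sum.inr '' F, EvalRel (InitStep T I) (Sum.inl q) w f) ↔
      ∃ s ∈ I q, ∃ f ∈ F, EvalRel T s w f := by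
  constructor
  · rintro ⟨_, ⟨f, hf, rfl⟩, h⟩
    cases h with
    | step hs hr =>
      cases hs with
      | start hI => exact ⟨_, hI, f, hf, initStep_right hr _ _ rfl rfl⟩
  · rintro ⟨s, hs, f, hf, h⟩
    exact ⟨_, ⟨f, hf, rfl⟩, EvalRel.step (a := none) (InitStep.start hs)
      (evalRel_map Sum.inr (fun _ _ _ h => InitStep.lift h) h)⟩

end InitStep

/-- All possible transitions are counted, whatever the relation `T.Δ` is. -/
lemma mAut_size_le {Q S Γ : Type} [Finite Q] [Finite S] [Finite Γ] (T : MAut Γ Q S) :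
    T.size ≤ (Nat.card Q + Nat.card S) + Nat.card Γ +
      (Nat.card Q + Nat.card S) * ((Nat.card Γ + 1) * (Nat.card Q + Nat.card S)) := by
  have h := Finite.card_subtype_le
    (fun t : (Q ⊕ S) × Option Γ × (Q ⊕ S) => T.Δ t.1 t.2.1 t.2.2)
  simp only [Nat.card_prod, Nat.card_sum, Finite.card_option] at h
  simp only [MAut.size, Nat.card_sum]
  omega

lemma mpa_size_ge {n : ℕ} {Q A Γ : Type} [Finite Γ] {M : MPA (n + 1) Q A Γ}
    (hW : M.WF) : Nat.card Q + 2 ≤ M.size ∧ Nat.card Γ + 1 ≤ M.size := by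
  have : Nontrivial Γ := ⟨_, _, hW.1⟩
  have := Finite.one_lt_card (α := Γ)
  unfold MPA.size
  omega

lemma size_bound {x s g m k : ℕ} (hx : x + 2 ≤ m) (hg : g + 1 ≤ m)
    (hs : s ≤ (x + 2) ^ expo (k + 1)) :
    (x + s) + g + (x + s) * ((g + 1) * (x + s)) ≤ m ^ 2 ^ (5 * (k + 1)) := by
  have hs' : s ≤ m ^ expo (k + 1) := hs.trans (Nat.pow_le_pow_left hx _)
  have he := expo_le (k + 1)
  have hexp : 2 * expo (k + 1) + 4 ≤ 2 ^ (5 * (k + 1)) := by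
    calc 2 * expo (k + 1) + 4 = 2 * (expo (k + 1) + 2) := by ring
      _ ≤ 2 * 2 ^ (k + 1 + 2) := Nat.mul_le_mul_left 2 he
      _ = 2 ^ (k + 1 + 2 + 1) := by ring
      _ ≤ 2 ^ (5 * (k + 1)) := Nat.pow_le_pow_right (by norm_num) (by omega)
  have hm : 2 ≤ m := by omega
  refine le_trans ?_ (Nat.pow_le_pow_right (by omega) hexp)
  have h1 : 1 ≤ m ^ expo (k + 1) := Nat.one_le_pow _ _ (by omega)
  rw [pow_add, mul_comm 2, pow_mul]
  generalize m ^ expo (k + 1) = B at *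
  have hy : x + s ≤ m * B := by nlinarith
  have h2 : (x + s) * ((g + 1) * (x + s)) ≤ m * B * (m * (m * B)) := by gcongr
  have h3 : x + s + g ≤ m * B * (m * (m * B)) :=
    calc x + s + g ≤ m * B * 2 := by nlinarith
      _ ≤ m * B * (m * (m * B)) := by gcongr; nlinarith
  calc x + s + g + (x + s) * ((g + 1) * (x + s)) ≤ 2 * (m * B * (m * (m * B))) := by omega
    _ ≤ m * (m * B * (m * (m * B))) := by gcongr
    _ = B ^ 2 * m ^ 4 := by ring

end OMPA

/-- There is a constant `d` such that for every ordered MPA `M` in normal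
form and every state `q_f`, some `M`-automaton `A` with `|A| ≤ |M|^{2^{d·n}}` accepts a
configuration `c` iff there is an infinite run of `T(M)` from `c` visiting `q_f` infinitely
often. -/
theorem ompa_repeated_state_recognizable :
    ∃ d : ℕ, 0 < d ∧
      ∀ (n : ℕ) (Q A Γ : Type) (_ : Finite Q) (_ : Finite A) (_ : Finite Γ)
        (M : MPA (n+1) Q A Γ), M.WF → M.Ordered → M.NormalForm → ∀ qf : Q,
        ∃ (S : Type) (_ : Finite S) (T : MAut Γ Q S),
          T.size ≤ M.size ^ 2 ^ (d * (n+1)) ∧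
          ∀ c : Q × (Fin (n+1) → List Γ), (∀ i, MPA.IsStack M.bot (c.2 i)) →
            (MAut.AcceptConf M T c ↔
              ∃ ρ : ℕ → Q × (Fin (n+1) → List Γ), ρ 0 = c ∧
                (∀ k, M.StepAny (ρ k) (ρ (k+1))) ∧
                ∀ N, ∃ k, N ≤ k ∧ (ρ k).1 = qf) := by
  refine ⟨5, by norm_num, ?_⟩
  intro n Q A Γ _ _ _ M hW _ hN qf
  -- The normal form guarantees that every transition pops a symbol from its ordered index.
  have hidx : ∀ q γ a q' α, M.Δ q γ a q' α → ∃ i g, γ i = some g ∧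
      (∀ j, j < i → γ j = some M.bot) ∧ (∀ j, i < j → γ j = none) := by
    intro q γ a q' α h
    rcases hN q γ a q' α h with ⟨⟨g, hg⟩, h0, -⟩ | ⟨i, -, h1, h2, ⟨g, hg, -⟩, -⟩
    · exact ⟨0, g, hg, fun j hj => absurd hj (Fin.not_lt_zero j), fun j hj => h0 j hj.ne'⟩
    · exact ⟨i, g, hg, h1, h2⟩
  obtain ⟨S, hS, T, I, F, hcard, hT⟩ := OMPA.recognizable M.bot (n + 1) Q inferInstance
    (OMPA.MRule M) (OMPA.Good (OMPA.MRule M) (· = qf)) ∅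
  refine ⟨S, hS, ⟨OMPA.InitStep T I, Sum.inr '' F⟩, ?_, ?_⟩
  · obtain ⟨h1, h2⟩ := OMPA.mpa_size_ge hW
    exact (OMPA.mAut_size_le _).trans (OMPA.size_bound h1 h2 hcard)
  · rintro ⟨q, u⟩ hu
    choose v hv hb using hu
    obtain rfl : u = OMPA.str M.bot v := funext hv
    have hrun := (OMPA.infRun_str hW hidx (p := (· = qf)) (q := q) hb).trans
      (OMPA.infRun_iff_reach (R := OMPA.MRule M) (p := (· = qf)) q v)
    refine Iff.trans ?_ hrun.symm
    have hacc := OMPA.initStep_iff.trans (hT q (OMPA.enc M.bot v))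
    constructor
    · rintro ⟨-, h⟩
      obtain ⟨v', hb', he, hr⟩ := hacc.mp h
      rwa [OMPA.enc_inj hb hb' he]
    · intro h
      exact ⟨fun i => OMPA.isStack_append_s19 (hb i), hacc.mpr ⟨v, hb, rfl, h⟩⟩
end
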